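/- arXiv:2311.17281 — 4 statements merged into one kernel-verified Lean document; each statement's English description precedes it below -/
import Mathlib

section
/- There exist universal constants α₀ ≥ 1, c > 0, c' > 0 and n₀ such that for all n ≥ n₀, 1 ≤ r ≤ n/2, α ≥ α₀ and k ≥ nr the following holds. Let G be an n×n standard Gaussian random matrix and u₁,…,u_r, v₁,…,v_r ∈ ℝⁿ standard Gaussian random vectors, all mutually independent, and consider the input matrix M = G + (α/√n)·Σ_{i=1}^r uᵢvᵢᵀ. If a randomized t-round adaptive algorithm making k exact linear measurements of M in each round outputs a matrix Â with Pr[‖Â − Σ_{i=1}^r uᵢvᵢᵀ‖_F² ≤ c·n²·r] ≥ 9/10 (over the input randomness and the seed), then t ≥ c'·log(n²/k)/(log α + log log n). -/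
/-!
# Estimating a planted low-rank matrix from adaptive linear measurements

Fix the seed, so that the algorithm is deterministic, and write `P` for the vectorized plant,
`β = α / √n`, and `E` for the *energy*: the squared norm of the projection of `β P` onto all the
queries asked so far.

*Law of the transcript.* Queries are orthonormal along every history, so for a fixed signal `a`
the responses to `g + a`, with `g` Gaussian, have density `exp ℓ` with respect to a standard
Gaussian transcript, where `ℓ` is linear minus half the energy (`lintegral_resp`). The mutual
information between the transcript and the plant is thus bounded by the mean energy; in the form
of a Donsker–Varadhan inequality, `information_bound` states that the mean of a function `F` of
transcript and plant is at most the mean energy plus the logarithm of the exponential moment of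
`F` when plant and transcript are independent.

*Exponential moments.* If `q` is a contraction with squared Frobenius norm at most `K`, then
`‖q P‖² / (128 n)` has log-exponential moment at most `r K / (32 n) + log 2`
(`lintegral_prior_exp_le`). This is obtained from Gaussian quadratic forms, first in the factor
`U` given `V` and then in `V`, after restricting `V` to have operator norm at most `√(32 n)`; the
latter event is overwhelmingly likely by a net argument (`factorLaw_compl_goodFactor`).

*Growth of the energy.* With `F` the square of what the next `k` queries see of the plant, the
information bound shows that each round multiplies the energy by at most `1 + 128 α²`, up to an
additive term. After `t` rounds the mean energy is at most `((1 + 128 α²)^t - 1) r k / n`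
(`energy_growth`).

*Estimation.* The output of an accurate algorithm, normalized to a unit vector, captures a constant
fraction of `‖P‖² ≥ n² r / 8`. Applying the information bound once more to this one-dimensional
query shows that the energy is at least of order `n r` (`deterministic_bound`). Hence
`n² ≤ 8192 ((1 + 128 α²)^t - 1) k`, and the theorem follows by taking logarithms.
-/

open MeasureTheory ProbabilityTheory Matrix
open scoped ENNReal Classical

noncomputable section

/-- Squared Euclidean norm of a finitely-indexed real vector. -/
def sqNorm {ι : Type*} [Fintype ι] (x : ι → ℝ) : ℝ := ∑ i, x i ^ 2

/-- Squared Frobenius norm of a real matrix. -/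
def frobSq {m n : Type*} [Fintype m] [Fintype n] (A : Matrix m n ℝ) : ℝ :=
  ∑ i, ∑ j, A i j ^ 2

/-- Spectral (ℓ₂ operator) norm of a real matrix. -/
def specNorm {m n : Type*} [Fintype m] [Fintype n] (A : Matrix m n ℝ) : ℝ :=
  sSup ((fun x : n → ℝ => Real.sqrt (sqNorm (A.mulVec x))) '' {x | sqNorm x ≤ 1})

/-- `i`-th largest singular value (1-based), characterized via
`σ_i(A) = min {‖A − X‖ : rank X ≤ i − 1}`. -/
def singVal {m n : Type*} [Fintype m] [Fintype n] (A : Matrix m n ℝ) (i : ℕ) : ℝ :=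
  sInf {c | ∃ X : Matrix m n ℝ, X.rank ≤ i - 1 ∧ c = specNorm (A - X)}

/-- Flattening of an `n × n` matrix into a vector in `ℝ^{n²}`. -/
def vec (n : ℕ) (A : Matrix (Fin n) (Fin n) ℝ) : Fin (n * n) → ℝ :=
  fun i => A (finProdFinEquiv.symm i).1 (finProdFinEquiv.symm i).2

/-- `u ⊗ v = vec (u vᵀ) ∈ ℝ^{n²}`. -/
def tensor {n : ℕ} (u v : Fin n → ℝ) : Fin (n * n) → ℝ :=
  vec n (Matrix.of fun i j => u i * v j)

/-- Standard Gaussian measure on `ι → ℝ`. -/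
def stdGaussian (ι : Type*) [Fintype ι] : Measure (ι → ℝ) :=
  Measure.pi fun _ => gaussianReal 0 1

/-- Standard Gaussian measure on `n × n` matrices (as `Fin n → Fin n → ℝ`). -/
def stdGaussianMat (n : ℕ) : Measure (Fin n → Fin n → ℝ) :=
  Measure.pi fun _ => stdGaussian (Fin n)

/-- Query maps of a deterministic `t`-round adaptive algorithm making `k` linear
measurements per round on inputs in `ℝ^N`. -/
def QueryMaps (N k t : ℕ) : Type :=
  (j : Fin t) → (Fin (j : ℕ) → (Fin k → ℝ)) → Matrix (Fin k) (Fin N) ℝ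

namespace QueryMaps

variable {N k t : ℕ}

/-- Restriction of a round-`j` history to the first `i` rounds. -/
def prefixHist {j : Fin t} (h : Fin (j : ℕ) → Fin k → ℝ) {i : Fin t}
    (hij : (i : ℕ) < (j : ℕ)) : Fin (i : ℕ) → Fin k → ℝ :=
  fun l => h ⟨l.1, l.isLt.trans hij⟩

/-- Validity of query maps: measurability, orthonormal rows within each round, and
orthogonality across rounds along consistent histories. -/
def Valid (Q : QueryMaps N k t) : Prop :=
  (∀ (j : Fin t) (i : Fin k) (l : Fin N), Measurable fun h => Q j h i l) ∧
  (∀ (j : Fin t) (h : Fin (j : ℕ) → Fin k → ℝ), Q j h * (Q j h)ᵀ = 1) ∧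
  (∀ (j i : Fin t) (hij : (i : ℕ) < (j : ℕ)) (h : Fin (j : ℕ) → Fin k → ℝ),
      Q j h * (Q i (prefixHist h hij))ᵀ = 0)

/-- Responses of the algorithm under exact linear measurements of `a`. -/
def resp (Q : QueryMaps N k t) (a : Fin N → ℝ) (j : Fin t) : Fin k → ℝ :=
  (Q j fun i => resp Q a ⟨i.1, i.isLt.trans j.isLt⟩).mulVec a
termination_by (j : ℕ)
decreasing_by exact i.isLt

/-- Responses of the algorithm under noisy linear measurements of `a`, with fresh
per-round noise `g`. -/
def nresp (Q : QueryMaps N k t) (a : Fin N → ℝ) (g : Fin t → Fin k → ℝ) (j : Fin t) :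
    Fin k → ℝ :=
  ((Q j fun i => nresp Q a g ⟨i.1, i.isLt.trans j.isLt⟩).mulVec a) + g j
termination_by (j : ℕ)
decreasing_by exact i.isLt

/-- The `tk × N` matrix stacking all the query matrices realized along the run of the
algorithm on input `a` (exact measurements). -/
def runMat (Q : QueryMaps N k t) (a : Fin N → ℝ) : Matrix (Fin t × Fin k) (Fin N) ℝ :=
  Matrix.of fun p l =>
    Q p.1 (fun i => resp Q a ⟨i.1, i.isLt.trans p.1.isLt⟩) p.2 l

end QueryMaps

/-- Kullback–Leibler divergence, valued in `[0, ∞]`, defined with the natural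
logarithm. -/
def klDiv {Ω : Type*} [MeasurableSpace Ω] (P Q : Measure Ω) : ℝ≥0∞ :=
  if P ≪ Q ∧ Integrable (fun x => Real.log ((P.rnDeriv Q x).toReal)) P then
    ENNReal.ofReal (∫ x, Real.log ((P.rnDeriv Q x).toReal) ∂P)
  else ⊤


/-- The rank-`r` plant `Σ_{i=1}^r uᵢ vᵢᵀ` built from the rows of `U` and `V`. -/
def plant {n r : ℕ} (U V : Fin r → Fin n → ℝ) : Matrix (Fin n) (Fin n) ℝ :=
  Matrix.of fun i j => ∑ l, U l i * V l j

/-- Schatten-`p` norm (real `p`), via the singular values. -/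
def schattenNorm {n : ℕ} (p : ℝ) (A : Matrix (Fin n) (Fin n) ℝ) : ℝ :=
  (∑ i ∈ Finset.range n, singVal A (i + 1) ^ p) ^ (1 / p)

/-- Ky-Fan `p` norm: sum of the `p` largest singular values. -/
def kyFanNorm {n : ℕ} (p : ℕ) (A : Matrix (Fin n) (Fin n) ℝ) : ℝ :=
  ∑ i ∈ Finset.range p, singVal A (i + 1)

/-! ### Standard Gaussian vectors -/

instance instIsProbStdGaussian (ι : Type*) [Fintype ι] :
    IsProbabilityMeasure (_root_.stdGaussian ι) := by
  unfold _root_.stdGaussian; infer_instance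

lemma lintegral_stdGaussian_prod {ι : Type*} [Fintype ι] (f : ι → ℝ → ℝ≥0∞)
    (hf : ∀ i, Measurable (f i)) :
    ∫⁻ x, ∏ i, f i (x i) ∂(_root_.stdGaussian ι) = ∏ i, ∫⁻ y, f i y ∂(gaussianReal 0 1) := by
  have hind : iIndepFun (fun i (x : ι → ℝ) => f i (x i)) (_root_.stdGaussian ι) :=
    iIndepFun_pi (fun i => (hf i).aemeasurable)
  rw [lintegral_prod_eq_prod_lintegral_of_indepFun Finset.univ _ hind
    (fun i => (hf i).comp (measurable_pi_apply i))]
  refine Finset.prod_congr rfl fun i _ => ?_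
  exact (measurePreserving_eval (fun _ : ι => gaussianReal 0 1) i).lintegral_comp (hf i)

lemma charFunDual_stdGaussian_pi {τ : Type*} [Fintype τ] [DecidableEq τ]
    (L : StrongDual ℝ (τ → ℝ)) :
    charFunDual (_root_.stdGaussian τ) L
      = Complex.exp (-((∑ i, (L (Pi.single i 1)) ^ 2 : ℝ) : ℂ) / 2) := by
  rw [_root_.stdGaussian, charFunDual_pi]
  have : ∀ i, charFunDual (gaussianReal 0 1) (L.comp (.single ℝ (fun _ : τ => ℝ) i))
      = Complex.exp (-((L (Pi.single i 1)) ^ 2 : ℝ) / 2) := by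
    intro i
    rw [IsGaussian.charFunDual_eq, integral_complex_ofReal,
      integral_continuousLinearMap_gaussianReal, variance_continuousLinearMap_gaussianReal]
    simp [neg_div, max_eq_left (sq_nonneg _)]
  simp_rw [this]
  rw [← Complex.exp_sum]
  congr 1
  push_cast
  rw [← Finset.sum_div, Finset.sum_neg_distrib]

/-- A matrix with orthonormal rows maps a standard Gaussian vector to a standard Gaussian
vector. -/
lemma map_mulVec_stdGaussian {ι κ : Type*} [Fintype ι] [Fintype κ] [DecidableEq κ]
    (A : Matrix κ ι ℝ) (h : A * Aᵀ = 1) :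
    (_root_.stdGaussian ι).map A.mulVec = _root_.stdGaussian κ := by
  classical
  let T : (ι → ℝ) →L[ℝ] (κ → ℝ) := LinearMap.toContinuousLinearMap A.mulVecLin
  have hT : (A.mulVec : (ι → ℝ) → (κ → ℝ)) = T := rfl
  rw [hT]
  have : IsProbabilityMeasure ((_root_.stdGaussian ι).map T) :=
    Measure.isProbabilityMeasure_map T.continuous.measurable.aemeasurable
  refine Measure.ext_of_charFunDual ?_
  funext L
  rw [charFunDual_map, charFunDual_stdGaussian_pi, charFunDual_stdGaussian_pi]
  congr 4
  have hL : ∀ x : κ → ℝ, L x = ∑ j, L (Pi.single j 1) * x j := by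
    intro x
    conv_lhs => rw [pi_eq_sum_univ' x, map_sum]
    refine Finset.sum_congr rfl fun j _ => ?_
    rw [map_smul, smul_eq_mul, mul_comm]
  set c : κ → ℝ := fun j => L (Pi.single j 1) with hc
  have hLT : ∀ i, (L.comp T) (Pi.single i 1) = (c ᵥ* A) i := by
    intro i
    have : T (Pi.single i 1) = fun j => A j i := by
      ext j
      simp [T]
    rw [ContinuousLinearMap.comp_apply, this, hL]
    rfl
  simp_rw [hLT]
  calc ∑ i, (c ᵥ* A) i ^ 2 = (c ᵥ* A) ⬝ᵥ (c ᵥ* A) := by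
        simp [dotProduct, sq]
    _ = c ⬝ᵥ c := by
        conv_lhs => rw [← Matrix.dotProduct_mulVec c A (c ᵥ* A)]
        rw [← Matrix.mulVec_transpose, Matrix.mulVec_mulVec, h, Matrix.one_mulVec]
    _ = ∑ j, c j ^ 2 := by simp [dotProduct, sq]

lemma gaussianReal_shift_lintegral (b : ℝ) :
    gaussianReal b 1 =
      (gaussianReal 0 1).withDensity (fun x => ENNReal.ofReal (Real.exp (b * x - b ^ 2 / 2))) := by
  rw [gaussianReal_of_var_ne_zero _ one_ne_zero, gaussianReal_of_var_ne_zero _ one_ne_zero,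
    ← withDensity_mul _ (measurable_gaussianPDF _ _) (by fun_prop)]
  congr 1
  funext x
  simp only [gaussianPDF, Pi.mul_apply, gaussianPDFReal]
  rw [← ENNReal.ofReal_mul (by positivity), mul_assoc (√_)⁻¹, ← Real.exp_add]
  congr 3
  simp only [NNReal.coe_one]
  ring

/-- The Cameron–Martin formula for a standard Gaussian vector. -/
lemma lintegral_stdGaussian_add {ι : Type*} [Fintype ι] (b : ι → ℝ) (F : (ι → ℝ) → ℝ≥0∞)
    (hF : Measurable F) :
    ∫⁻ x, F (x + b) ∂(_root_.stdGaussian ι) =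
      ∫⁻ x, F x * ENNReal.ofReal (Real.exp (b ⬝ᵥ x - (b ⬝ᵥ b) / 2))
        ∂(_root_.stdGaussian ι) := by
  classical
  have h1 : (_root_.stdGaussian ι).map (fun x => x + b)
      = Measure.pi fun i => gaussianReal (b i) 1 := by
    have : (fun x : ι → ℝ => x + b) = fun x i => (fun y => y + b i) (x i) := rfl
    rw [this, _root_.stdGaussian, Measure.pi_map_pi (f := fun i (y : ℝ) => y + b i)
      (fun i => by fun_prop)]
    congr 1
    funext i
    rw [gaussianReal_map_add_const, zero_add]
  have hdm : Measurable (fun x : ι → ℝ => ENNReal.ofReal (Real.exp (b ⬝ᵥ x - (b ⬝ᵥ b) / 2))) := by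
    unfold dotProduct
    fun_prop
  have h2 : (Measure.pi fun i => gaussianReal (b i) 1)
      = (_root_.stdGaussian ι).withDensity
        (fun x => ENNReal.ofReal (Real.exp (b ⬝ᵥ x - (b ⬝ᵥ b) / 2))) := by
    refine (Measure.pi_eq fun s hs => ?_)
    rw [withDensity_apply _ (MeasurableSet.univ_pi hs), ← lintegral_indicator
      (MeasurableSet.univ_pi hs)]
    simp_rw [gaussianReal_shift_lintegral (b _)]
    have : ∀ i, ((gaussianReal 0 1).withDensity
        (fun x => ENNReal.ofReal (Real.exp (b i * x - b i ^ 2 / 2)))) (s i)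
        = ∫⁻ y, (s i).indicator
          (fun x => ENNReal.ofReal (Real.exp (b i * x - b i ^ 2 / 2))) y ∂(gaussianReal 0 1) := by
      intro i
      rw [withDensity_apply _ (hs i), lintegral_indicator (hs i)]
    simp_rw [this]
    rw [← lintegral_stdGaussian_prod _
      (fun i => Measurable.indicator (by fun_prop) (hs i))]
    refine lintegral_congr fun x => ?_
    by_cases hx : x ∈ Set.univ.pi s
    · rw [Set.indicator_of_mem hx]
      have : ∀ i, x i ∈ s i := fun i => hx i (Set.mem_univ i)
      simp_rw [Set.indicator_of_mem (this _)]
      rw [← ENNReal.ofReal_prod_of_nonneg (fun i _ => by positivity), ← Real.exp_sum]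
      congr 2
      simp only [dotProduct, Finset.sum_div, ← Finset.sum_sub_distrib]
      exact Finset.sum_congr rfl fun i _ => by ring
    · rw [Set.indicator_of_notMem hx]
      have : ∃ i, x i ∉ s i := by
        by_contra! hcon
        exact hx fun i _ => hcon i
      obtain ⟨i, hi⟩ := this
      exact (Finset.prod_eq_zero (Finset.mem_univ i) (Set.indicator_of_notMem hi _)).symm
  rw [← lintegral_map hF (by fun_prop : Measurable fun x : ι → ℝ => x + b), h1, h2,
    lintegral_withDensity_eq_lintegral_mul _ hdm hF]
  refine lintegral_congr fun x => ?_
  simp [mul_comm]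

/-- A matrix of Gaussians, presented as a product of products, is a Gaussian vector over pairs. -/
lemma map_uncurry_stdGaussian (ι κ : Type*) [Fintype ι] [Fintype κ] :
    (Measure.pi fun _ : ι => _root_.stdGaussian κ).map (fun U (p : ι × κ) => U p.1 p.2)
      = _root_.stdGaussian (ι × κ) := by
  symm
  refine Measure.pi_eq fun s hs => ?_
  rw [Measure.map_apply (by fun_prop) (MeasurableSet.univ_pi hs)]
  have : (fun (U : ι → κ → ℝ) (p : ι × κ) => U p.1 p.2) ⁻¹' (Set.univ.pi s)
      = Set.univ.pi fun i => Set.univ.pi fun j => s (i, j) := by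
    ext U; simp
  rw [this, Measure.pi_pi, Fintype.prod_prod_type]
  refine Finset.prod_congr rfl fun i _ => ?_
  rw [_root_.stdGaussian, Measure.pi_pi]

lemma map_vec_stdGaussianMat (n : ℕ) :
    (stdGaussianMat n).map (fun G => _root_.vec n (Matrix.of G)) = _root_.stdGaussian (Fin (n * n)) := by
  symm
  have hm : Measurable (fun G : Fin n → Fin n → ℝ => _root_.vec n (Matrix.of G)) := by
    refine measurable_pi_lambda _ fun i => ?_
    simp only [_root_.vec, Matrix.of_apply]
    fun_prop
  refine Measure.pi_eq fun s hs => ?_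
  rw [Measure.map_apply hm (MeasurableSet.univ_pi hs)]
  have : (fun G : Fin n → Fin n → ℝ => _root_.vec n (Matrix.of G)) ⁻¹' (Set.univ.pi s)
      = Set.univ.pi fun i => Set.univ.pi fun j => s (finProdFinEquiv (i, j)) := by
    ext U
    simp only [Set.mem_preimage, Set.mem_univ_pi, _root_.vec, Matrix.of_apply]
    constructor
    · intro h i j
      simpa using h (finProdFinEquiv (i, j))
    · intro h i
      have := h (finProdFinEquiv.symm i).1 (finProdFinEquiv.symm i).2
      rwa [Prod.mk.eta, Equiv.apply_symm_apply] at this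
  rw [this, stdGaussianMat, Measure.pi_pi]
  simp_rw [_root_.stdGaussian, Measure.pi_pi]
  rw [← Fintype.prod_prod_type (fun p => (gaussianReal 0 1) (s (finProdFinEquiv p)))]
  exact Equiv.prod_comp finProdFinEquiv (fun i => (gaussianReal 0 1) (s i))

/-! ### Exponential moments of Gaussian quadratic forms -/

lemma lintegral_exp_sq_gaussianReal {s : ℝ} (hs : s < 1 / 2) :
    ∫⁻ y, ENNReal.ofReal (Real.exp (s * y ^ 2)) ∂(gaussianReal 0 1)
      = ENNReal.ofReal (√(1 - 2 * s))⁻¹ := by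
  rw [gaussianReal_of_var_ne_zero _ one_ne_zero,
    lintegral_withDensity_eq_lintegral_mul _ (measurable_gaussianPDF _ _) (by fun_prop)]
  have hb : 0 < 1 / 2 - s := by linarith
  have : ∀ y : ℝ, (gaussianPDF 0 1 * fun y => ENNReal.ofReal (Real.exp (s * y ^ 2))) y
      = ENNReal.ofReal ((√(2 * Real.pi))⁻¹ * Real.exp (-(1 / 2 - s) * y ^ 2)) := by
    intro y
    simp only [gaussianPDF, Pi.mul_apply, gaussianPDFReal]
    rw [← ENNReal.ofReal_mul (by positivity), mul_assoc (√_)⁻¹, ← Real.exp_add]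
    simp only [NNReal.coe_one, mul_one]
    congr 3
    ring
  simp_rw [this]
  rw [← ofReal_integral_eq_lintegral_ofReal
    ((integrable_exp_neg_mul_sq hb).const_mul _) (ae_of_all _ fun y => by positivity),
    integral_const_mul, integral_gaussian]
  congr 1
  have h2 : Real.pi / (1 / 2 - s) = (2 * Real.pi) * (1 - 2 * s)⁻¹ := by
    have : (1 - 2 * s) ≠ 0 := by linarith
    have : (1 / 2 - s) ≠ 0 := by linarith
    field_simp
  rw [h2, Real.sqrt_mul (x := 2 * Real.pi) (by positivity), Real.sqrt_inv, ← mul_assoc, inv_mul_cancel₀ (by positivity),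
    one_mul]

lemma lintegral_exp_sq_le_pos {μ : ℝ} (h0 : 0 ≤ μ) (h1 : μ ≤ 1 / 4) :
    ∫⁻ y, ENNReal.ofReal (Real.exp (1 * (μ * y ^ 2))) ∂(gaussianReal 0 1)
      ≤ ENNReal.ofReal (Real.exp (2 * μ)) := by
  simp_rw [one_mul]
  rw [lintegral_exp_sq_gaussianReal (by linarith)]
  apply ENNReal.ofReal_le_ofReal
  have h3 : Real.exp (-(2 * μ)) ≤ √(1 - 2 * μ) := by
    apply Real.le_sqrt_of_sq_le
    rw [← Real.exp_nat_mul]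
    have h4 : (1 + 4 * μ) * (1 - 2 * μ) ≥ 1 := by nlinarith
    have h5 : 1 + 4 * μ ≤ Real.exp (4 * μ) := by linarith [Real.add_one_le_exp (4 * μ)]
    have h6 : 1 ≤ Real.exp (4 * μ) * (1 - 2 * μ) := h4.le.trans
      (mul_le_mul_of_nonneg_right h5 (by linarith))
    have h7 : ((2 : ℕ) : ℝ) * -(2 * μ) = -(4 * μ) := by push_cast; ring
    rw [h7, Real.exp_neg, inv_le_iff_one_le_mul₀' (Real.exp_pos _)]
    exact h6
  calc (√(1 - 2 * μ))⁻¹ ≤ (Real.exp (-(2 * μ)))⁻¹ := inv_anti₀ (Real.exp_pos _) h3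
    _ = _ := by rw [Real.exp_neg, inv_inv]

lemma lintegral_exp_sq_le_neg {μ : ℝ} (h0 : 0 ≤ μ) (h1 : μ ≤ 1 / 4) :
    ∫⁻ y, ENNReal.ofReal (Real.exp (-1 * (μ * y ^ 2))) ∂(gaussianReal 0 1)
      ≤ ENNReal.ofReal (Real.exp (-(1 / 2) * μ)) := by
  have : ∀ y : ℝ, -1 * (μ * y ^ 2) = (-μ) * y ^ 2 := fun y => by ring
  simp_rw [this]
  rw [lintegral_exp_sq_gaussianReal (by linarith)]
  apply ENNReal.ofReal_le_ofReal
  have h3 : Real.exp (μ / 2) ≤ √(1 - 2 * -μ) := by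
    apply Real.le_sqrt_of_sq_le
    rw [← Real.exp_nat_mul]
    have h5 : 1 - μ ≤ Real.exp (-μ) := by linarith [Real.add_one_le_exp (-μ)]
    have h7 : ((2 : ℕ) : ℝ) * (μ / 2) = μ := by push_cast; ring
    rw [h7]
    have h8 : Real.exp μ * Real.exp (-μ) = 1 := by rw [← Real.exp_add]; simp
    have h9 : Real.exp μ * (1 - μ) ≤ 1 :=
      (mul_le_mul_of_nonneg_left h5 (Real.exp_pos _).le).trans h8.le
    nlinarith
  calc (√(1 - 2 * -μ))⁻¹ ≤ (Real.exp (μ / 2))⁻¹ := inv_anti₀ (Real.exp_pos _) h3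
    _ = _ := by rw [← Real.exp_neg]; congr 1; ring

/-- Exponential moments of `ε ‖A x‖²` for a Gaussian vector `x` and `‖A‖² ≤ 1/4`: diagonalizing
`Aᵀ A` reduces to a one-dimensional bound, and the exponents add up to the trace of `Aᵀ A`. -/
lemma lintegral_exp_quad_le {ι κ : Type*} [Fintype ι] [Fintype κ] (ε δ : ℝ)
    (h1 : ∀ μ : ℝ, 0 ≤ μ → μ ≤ 1 / 4 →
      ∫⁻ y, ENNReal.ofReal (Real.exp (ε * (μ * y ^ 2))) ∂(gaussianReal 0 1)
        ≤ ENNReal.ofReal (Real.exp (δ * μ)))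
    (A : Matrix κ ι ℝ)
    (hA : ∀ x : ι → ℝ, ∑ k, (A *ᵥ x) k ^ 2 ≤ 1 / 4 * ∑ i, x i ^ 2) :
    ∫⁻ x, ENNReal.ofReal (Real.exp (ε * ∑ k, (A *ᵥ x) k ^ 2)) ∂(_root_.stdGaussian ι)
      ≤ ENNReal.ofReal (Real.exp (δ * ∑ k, ∑ i, A k i ^ 2)) := by
  classical
  have hT : (Aᵀ * A).IsHermitian := by
    have := Matrix.isHermitian_conjTranspose_mul_self A
    rwa [Matrix.conjTranspose_eq_transpose_of_trivial] at this
  set O : Matrix ι ι ℝ := (hT.eigenvectorUnitary : Matrix ι ι ℝ) with hO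
  have hO1 : Oᵀ * O = 1 := by
    have := Matrix.mem_unitaryGroup_iff'.1 hT.eigenvectorUnitary.2
    rwa [Matrix.star_eq_conjTranspose, Matrix.conjTranspose_eq_transpose_of_trivial] at this
  have hO2 : O * Oᵀ = 1 := by
    have := Matrix.mem_unitaryGroup_iff.1 hT.eigenvectorUnitary.2
    rwa [Matrix.star_eq_conjTranspose, Matrix.conjTranspose_eq_transpose_of_trivial] at this
  set μ := hT.eigenvalues with hμ
  have hspec : Aᵀ * A = O * Matrix.diagonal μ * Oᵀ := by
    have := hT.spectral_theorem
    rw [Unitary.conjStarAlgAut_apply] at this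
    conv_lhs => rw [this]
    rw [Matrix.star_eq_conjTranspose, Matrix.conjTranspose_eq_transpose_of_trivial]
    rfl
  have hdiag : (A * O)ᵀ * (A * O) = Matrix.diagonal μ := by
    rw [Matrix.transpose_mul]
    calc Oᵀ * Aᵀ * (A * O) = Oᵀ * (Aᵀ * A) * O := by simp only [Matrix.mul_assoc]
      _ = (Oᵀ * O) * Matrix.diagonal μ * (Oᵀ * O) := by rw [hspec]; simp only [Matrix.mul_assoc]
      _ = _ := by rw [hO1]; simp
  have hsq : ∀ {τ : Type _} [Fintype τ] (B : Matrix κ τ ℝ) (y : τ → ℝ),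
      ∑ k, (B *ᵥ y) k ^ 2 = y ⬝ᵥ ((Bᵀ * B) *ᵥ y) := by
    intro τ _ B y
    rw [← Matrix.mulVec_mulVec, Matrix.mulVec_transpose, dotProduct_comm,
      ← Matrix.dotProduct_mulVec]
    simp [dotProduct, sq]
  have hform : ∀ y, ∑ k, (A *ᵥ (O *ᵥ y)) k ^ 2 = ∑ i, μ i * y i ^ 2 := by
    intro y
    rw [Matrix.mulVec_mulVec, hsq, hdiag]
    simp only [dotProduct, Matrix.mulVec_diagonal]
    exact Finset.sum_congr rfl fun i _ => by ring
  have hOn : ∀ y : ι → ℝ, ∑ i, (O *ᵥ y) i ^ 2 = ∑ i, y i ^ 2 := by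
    intro y
    have : ∑ i, (O *ᵥ y) i ^ 2 = (O *ᵥ y) ⬝ᵥ (O *ᵥ y) := by simp [dotProduct, sq]
    rw [this, Matrix.dotProduct_mulVec, ← Matrix.mulVec_transpose, Matrix.mulVec_mulVec, hO1,
      Matrix.one_mulVec]
    simp [dotProduct, sq]
  have hμi : ∀ i, μ i = ∑ k, (A *ᵥ (O *ᵥ Pi.single i 1)) k ^ 2 := by
    intro i
    rw [hform]
    rw [Finset.sum_eq_single i]
    · simp
    · intro j _ hj; simp [hj]
    · simp
  have hμ0 : ∀ i, 0 ≤ μ i := fun i => by rw [hμi i]; positivity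
  have hμ1 : ∀ i, μ i ≤ 1 / 4 := by
    intro i
    rw [hμi i]
    refine (hA _).trans ?_
    rw [hOn, Finset.sum_eq_single i]
    · simp
    · intro j _ hj; simp [hj]
    · simp
  have htr : ∑ k, ∑ i, A k i ^ 2 = ∑ i, μ i := by
    have h := hT.trace_eq_sum_eigenvalues
    simp only [Matrix.trace, Matrix.diag, Matrix.mul_apply, Matrix.transpose_apply] at h
    rw [Finset.sum_comm]
    simpa [sq] using h
  have hm : Measurable fun x : ι → ℝ =>
      ENNReal.ofReal (Real.exp (ε * ∑ k, (A *ᵥ x) k ^ 2)) := by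
    simp only [Matrix.mulVec, dotProduct]
    fun_prop
  have hOm : Measurable (O.mulVec : (ι → ℝ) → ι → ℝ) := by
    refine measurable_pi_lambda _ fun i => ?_
    simp only [Matrix.mulVec, dotProduct]
    fun_prop
  conv_lhs => rw [← map_mulVec_stdGaussian O hO2]
  rw [lintegral_map hm hOm]
  rw [htr]
  simp_rw [hform, Finset.mul_sum, Real.exp_sum]
  simp_rw [ENNReal.ofReal_prod_of_nonneg (fun i _ => (Real.exp_pos _).le)]
  rw [lintegral_stdGaussian_prod (fun i y => ENNReal.ofReal (Real.exp (ε * (μ i * y ^ 2))))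
    (fun i => by fun_prop)]
  exact Finset.prod_le_prod' fun i _ => h1 _ (hμ0 i) (hμ1 i)

/-! ### The law of the transcript -/

namespace QueryMaps

variable {N k t : ℕ}

/-- The part of a transcript that precedes round `j`. -/
def before (h : Fin t → Fin k → ℝ) (j : Fin t) : Fin (j : ℕ) → Fin k → ℝ :=
  fun i => h ⟨i.1, i.isLt.trans j.isLt⟩

/-- The squared norm of the projection of `a` onto all the queries asked along the
transcript `h`. -/
def energy (Q : QueryMaps N k t) (a : Fin N → ℝ) (h : Fin t → Fin k → ℝ) : ℝ :=
  ∑ j, (Q j (before h j) *ᵥ a) ⬝ᵥ (Q j (before h j) *ᵥ a)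

/-- The log-likelihood ratio, at the transcript `h`, between the inputs `g + a` and `g`, for a
Gaussian `g`. -/
def logDens (Q : QueryMaps N k t) (a : Fin N → ℝ) (h : Fin t → Fin k → ℝ) : ℝ :=
  ∑ j, ((Q j (before h j) *ᵥ a) ⬝ᵥ h j
    - ((Q j (before h j) *ᵥ a) ⬝ᵥ (Q j (before h j) *ᵥ a)) / 2)

lemma energy_nonneg (Q : QueryMaps N k t) (a : Fin N → ℝ) (h : Fin t → Fin k → ℝ) :
    0 ≤ Q.energy a h :=
  Finset.sum_nonneg fun _ _ => Finset.sum_nonneg fun _ _ => mul_self_nonneg _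

lemma logDens_two_smul (Q : QueryMaps N k t) (a : Fin N → ℝ) (h : Fin t → Fin k → ℝ) :
    Q.logDens ((2 : ℝ) • a) h = 2 * Q.logDens a h - Q.energy a h := by
  simp only [logDens, energy, Finset.mul_sum, ← Finset.sum_sub_distrib, mulVec_smul,
    smul_dotProduct, dotProduct_smul, smul_eq_mul]
  exact Finset.sum_congr rfl fun j _ => by ring

lemma resp_eq (Q : QueryMaps N k t) (a : Fin N → ℝ) (j : Fin t) :
    Q.resp a j = Q j (before (Q.resp a) j) *ᵥ a := by
  rw [resp]; rfl

lemma resp_congr (Q : QueryMaps N k t) (a b : Fin N → ℝ)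
    (hab : ∀ j h, Q j h *ᵥ a = Q j h *ᵥ b) : Q.resp a = Q.resp b := by
  have : ∀ m : ℕ, ∀ j : Fin t, (j : ℕ) = m → Q.resp a j = Q.resp b j := by
    intro m
    induction m using Nat.strong_induction_on with
    | _ m ih =>
      intro j hj
      rw [resp_eq, resp_eq, hab]
      congr 2
      funext i
      exact ih i (hj ▸ i.isLt) _ rfl
  funext j
  exact this _ j rfl

lemma measurable_before (j : Fin t) :
    Measurable fun h : Fin t → Fin k → ℝ => before h j :=
  measurable_pi_lambda _ fun _ => measurable_pi_apply _

/-- Responses depend measurably on the query maps and on the input, jointly. -/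
lemma measurable_resp {X : Type*} [MeasurableSpace X] (Qf : X → QueryMaps N k t)
    (hQ : ∀ (j : Fin t) (i : Fin k) (l : Fin N),
      Measurable fun p : X × (Fin (j : ℕ) → Fin k → ℝ) => Qf p.1 j p.2 i l)
    (b : X → Fin N → ℝ) (hb : Measurable b) :
    Measurable fun x => (Qf x).resp (b x) := by
  have : ∀ m : ℕ, ∀ j : Fin t, (j : ℕ) = m → Measurable fun x => (Qf x).resp (b x) j := by
    intro m
    induction m using Nat.strong_induction_on with
    | _ m ih =>
      intro j hj
      have h1 : Measurable fun x => before ((Qf x).resp (b x)) j :=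
        measurable_pi_lambda _ fun i => ih i (hj ▸ i.isLt) ⟨i.1, i.isLt.trans j.isLt⟩ rfl
      simp_rw [resp_eq]
      refine measurable_pi_lambda _ fun i => ?_
      simp only [mulVec, dotProduct]
      refine Finset.measurable_sum _ fun l _ => ?_
      exact ((hQ j i l).comp (measurable_id.prodMk h1)).mul ((measurable_pi_apply l).comp hb)
  exact measurable_pi_lambda _ fun j => this _ j rfl

lemma measurable_query_mulVec {X : Type*} [MeasurableSpace X] (Q : QueryMaps N k t)
    (hQ : Q.Valid) (j : Fin t) (h : X → (Fin (j : ℕ) → Fin k → ℝ)) (hh : Measurable h)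
    (b : X → Fin N → ℝ) (hb : Measurable b) :
    Measurable fun x => Q j (h x) *ᵥ b x := by
  refine measurable_pi_lambda _ fun i => ?_
  simp only [mulVec, dotProduct]
  refine Finset.measurable_sum _ fun l _ => ?_
  exact ((hQ.1 j i l).comp hh).mul ((measurable_pi_apply l).comp hb)

lemma measurable_dotProduct {X ι : Type*} [Fintype ι] [MeasurableSpace X] (u v : X → ι → ℝ)
    (hu : Measurable u) (hv : Measurable v) : Measurable fun x => u x ⬝ᵥ v x :=
  Finset.measurable_sum _ fun i _ =>
    ((measurable_pi_apply i).comp hu).mul ((measurable_pi_apply i).comp hv)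

lemma measurable_energy {X : Type*} [MeasurableSpace X] (Q : QueryMaps N k t) (hQ : Q.Valid)
    (b : X → Fin N → ℝ) (hb : Measurable b) (h : X → Fin t → Fin k → ℝ) (hh : Measurable h) :
    Measurable fun x => Q.energy (b x) (h x) := by
  refine Finset.measurable_sum _ fun j _ => ?_
  have := measurable_query_mulVec Q hQ j _ ((measurable_before j).comp hh) b hb
  exact measurable_dotProduct _ _ this this

lemma measurable_logDens {X : Type*} [MeasurableSpace X] (Q : QueryMaps N k t) (hQ : Q.Valid)
    (b : X → Fin N → ℝ) (hb : Measurable b) (h : X → Fin t → Fin k → ℝ) (hh : Measurable h) :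
    Measurable fun x => Q.logDens (b x) (h x) := by
  refine Finset.measurable_sum _ fun j _ => ?_
  have := measurable_query_mulVec Q hQ j _ ((measurable_before j).comp hh) b hb
  exact (measurable_dotProduct _ _ this ((measurable_pi_apply j).comp hh)).sub
    ((measurable_dotProduct _ _ this this).div_const 2)

/-- The algorithm that remains after the first round has been answered by `r`. -/
def tail (Q : QueryMaps N k (t + 1)) (r : Fin k → ℝ) : QueryMaps N k t :=
  fun j h => Q j.succ (Fin.cons (α := fun _ => Fin k → ℝ) r h)

lemma before_cons (r : Fin k → ℝ) (h : Fin t → Fin k → ℝ) (j : Fin t) :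
    before (Fin.cons (α := fun _ => Fin k → ℝ) r h) j.succ
      = Fin.cons (α := fun _ => Fin k → ℝ) r (before h j) := by
  funext i
  refine Fin.cases ?_ (fun i => ?_) i
  · rfl
  · rfl

/-- The first query does not depend on any history. -/
def first (Q : QueryMaps N k (t + 1)) : Matrix (Fin k) (Fin N) ℝ := Q 0 Fin.elim0

lemma query_zero (Q : QueryMaps N k (t + 1)) (h : Fin ((0 : Fin (t + 1)) : ℕ) → Fin k → ℝ) :
    Q 0 h = Q.first := by
  unfold first
  congr 1
  funext i
  exact i.elim0

lemma tail_valid (Q : QueryMaps N k (t + 1)) (hQ : Q.Valid) (r : Fin k → ℝ) :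
    (Q.tail r).Valid := by
  refine ⟨fun j i l => ?_, fun j h => hQ.2.1 _ _, fun j i hij h => ?_⟩
  · refine (hQ.1 j.succ i l).comp ?_
    refine measurable_pi_lambda _ fun m => ?_
    refine Fin.cases ?_ (fun m => ?_) m
    · exact measurable_const
    · exact measurable_pi_apply m
  · have := hQ.2.2 j.succ i.succ (Nat.succ_lt_succ hij)
      (Fin.cons (α := fun _ => Fin k → ℝ) r h)
    have e : Q.tail r i (prefixHist h hij) = Q i.succ (prefixHist (j := j.succ) (i := i.succ)
        (Fin.cons (α := fun _ => Fin k → ℝ) r h) (Nat.succ_lt_succ hij)) := by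
      unfold tail
      congr 1
      funext m
      refine Fin.cases ?_ (fun m => ?_) m
      · rfl
      · rfl
    rw [e]
    exact this

lemma tail_mul_first (Q : QueryMaps N k (t + 1)) (hQ : Q.Valid) (r : Fin k → ℝ) (j : Fin t)
    (h : Fin (j : ℕ) → Fin k → ℝ) : Q.tail r j h * Q.firstᵀ = 0 := by
  have := hQ.2.2 j.succ 0 (Nat.succ_pos _) (Fin.cons (α := fun _ => Fin k → ℝ) r h)
  rwa [Q.query_zero] at this

lemma resp_eq_cons (Q : QueryMaps N k (t + 1)) (a : Fin N → ℝ) :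
    Q.resp a = Fin.cons (α := fun _ => Fin k → ℝ) (Q.first *ᵥ a)
      ((Q.tail (Q.first *ᵥ a)).resp a) := by
  have h0 : Q.resp a 0 = Q.first *ᵥ a := by rw [resp_eq, Q.query_zero]
  have : ∀ m : ℕ, ∀ j : Fin t, (j : ℕ) = m →
      Q.resp a j.succ = (Q.tail (Q.first *ᵥ a)).resp a j := by
    intro m
    induction m using Nat.strong_induction_on with
    | _ m ih =>
      intro j hj
      rw [resp_eq, resp_eq]
      unfold tail
      congr 2
      funext i
      refine Fin.cases ?_ (fun i => ?_) i
      · exact h0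
      · exact ih i (hj ▸ i.isLt) ⟨i.1, i.isLt.trans j.isLt⟩ rfl
  funext j
  refine Fin.cases ?_ (fun j => ?_) j
  · exact h0
  · exact this _ j rfl

lemma logDens_cons (Q : QueryMaps N k (t + 1)) (a : Fin N → ℝ) (r : Fin k → ℝ)
    (h : Fin t → Fin k → ℝ) :
    Q.logDens a (Fin.cons (α := fun _ => Fin k → ℝ) r h)
      = ((Q.first *ᵥ a) ⬝ᵥ r - ((Q.first *ᵥ a) ⬝ᵥ (Q.first *ᵥ a)) / 2)
        + (Q.tail r).logDens a h := by
  unfold logDens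
  rw [Fin.sum_univ_succ, Q.query_zero]
  congr 1
  refine Finset.sum_congr rfl fun j _ => ?_
  rw [before_cons, Fin.cons_succ]
  rfl

end QueryMaps

/-- A Gaussian vector is resampled by drawing its coordinates along orthonormal rows `A`
and, independently, its component orthogonal to them. -/
lemma lintegral_stdGaussian_split {ι κ : Type*} [Fintype ι] [Fintype κ] [DecidableEq ι]
    [DecidableEq κ]
    (A : Matrix κ ι ℝ) (h : A * Aᵀ = 1) (F : (ι → ℝ) → ℝ≥0∞) (hF : Measurable F) :
    ∫⁻ g, F g ∂(_root_.stdGaussian ι)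
      = ∫⁻ r, ∫⁻ g, F (Aᵀ *ᵥ r + (1 - Aᵀ * A) *ᵥ g) ∂(_root_.stdGaussian ι)
          ∂(_root_.stdGaussian κ) := by
  set M : Matrix ι (κ ⊕ ι) ℝ := Matrix.fromCols Aᵀ (1 - Aᵀ * A) with hM
  have hMM : M * Mᵀ = 1 := by
    rw [hM, Matrix.transpose_fromCols, Matrix.fromCols_mul_fromRows]
    simp only [Matrix.transpose_transpose, Matrix.transpose_sub, Matrix.transpose_one,
      Matrix.transpose_mul]
    have : (1 - Aᵀ * A) * (1 - Aᵀ * A) = 1 - Aᵀ * A := by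
      have h2 : Aᵀ * A * (Aᵀ * A) = Aᵀ * A := by
        calc Aᵀ * A * (Aᵀ * A) = Aᵀ * (A * Aᵀ) * A := by simp only [Matrix.mul_assoc]
          _ = _ := by rw [h, Matrix.mul_one]
      rw [Matrix.sub_mul, Matrix.mul_sub, Matrix.mul_sub, h2]
      simp
    rw [this]
    simp
  have hMm : Measurable (M.mulVec : (κ ⊕ ι → ℝ) → ι → ℝ) := by
    refine measurable_pi_lambda _ fun i => ?_
    simp only [Matrix.mulVec, dotProduct]
    fun_prop
  conv_lhs => rw [← map_mulVec_stdGaussian M hMM]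
  rw [lintegral_map hF hMm]
  have hmp := (measurePreserving_sumPiEquivProdPi_symm
    (fun _ : κ ⊕ ι => gaussianReal 0 1))
  have hFM : Measurable fun x => F (M *ᵥ x) := hF.comp hMm
  unfold _root_.stdGaussian
  rw [← hmp.lintegral_comp hFM, lintegral_prod]
  · refine lintegral_congr fun r => lintegral_congr fun g => ?_
    congr 1
    have : ((MeasurableEquiv.sumPiEquivProdPi fun _ : κ ⊕ ι => ℝ).symm (r, g))
        = Sum.elim r g := by
      funext x; cases x <;> rfl
    rw [this, hM, Matrix.fromCols_mulVec_sumElim]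
  · exact (hFM.comp (MeasurableEquiv.measurable _)).aemeasurable

open QueryMaps in
/-- The responses to `g + a`, with `g` Gaussian, have density `exp (logDens Q a)` with respect to
the standard Gaussian law on transcripts. The first round reveals the component of `g` along the
first queries only; the later queries are orthogonal to it. -/
lemma lintegral_resp {N k : ℕ} (a : Fin N → ℝ) (t : ℕ) (Q : QueryMaps N k t) (hQ : Q.Valid)
    (f : (Fin t → Fin k → ℝ) → ℝ≥0∞) (hf : Measurable f) :
    ∫⁻ g, f (Q.resp (g + a)) ∂(_root_.stdGaussian (Fin N))
      = ∫⁻ h, f h * ENNReal.ofReal (Real.exp (Q.logDens a h))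
          ∂(Measure.pi fun _ : Fin t => _root_.stdGaussian (Fin k)) := by
  induction t with
  | zero =>
    have h1 : ∀ g, Q.resp (g + a) = fun i => i.elim0 := fun g => funext fun i => i.elim0
    have h2 : ∀ h, Q.logDens a h = 0 := fun h => by simp [logDens]
    simp_rw [h1, h2]
    have h3 : ∀ h : Fin 0 → Fin k → ℝ, f h = f fun i => i.elim0 :=
      fun h => by congr 1; funext i; exact i.elim0
    simp_rw [h3]
    simp
  | succ t ih =>
    have hm : Measurable fun g : Fin N → ℝ => f (Q.resp (g + a)) := by
      refine hf.comp (measurable_resp (fun _ => Q) (fun j i l => ?_) _ (by fun_prop))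
      exact (hQ.1 j i l).comp measurable_snd
    have hQ0 : Q.first * Q.firstᵀ = 1 := hQ.2.1 0 _
    rw [lintegral_stdGaussian_split Q.first hQ0 _ hm]
    set q : Fin k → ℝ := Q.first *ᵥ a with hq
    have hcons : Measurable fun p : (Fin k → ℝ) × (Fin t → Fin k → ℝ) =>
        Fin.cons (α := fun _ => Fin k → ℝ) p.1 p.2 := by
      refine measurable_pi_lambda _ fun m => ?_
      refine Fin.cases ?_ (fun m => ?_) m
      · exact measurable_fst
      · exact (measurable_pi_apply m).comp measurable_snd
    have key : ∀ r g, Q.resp (Q.firstᵀ *ᵥ r + (1 - Q.firstᵀ * Q.first) *ᵥ g + a)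
        = Fin.cons (α := fun _ => Fin k → ℝ) (r + q) ((Q.tail (r + q)).resp (g + a)) := by
      intro r g
      have e1 : Q.first *ᵥ (Q.firstᵀ *ᵥ r + (1 - Q.firstᵀ * Q.first) *ᵥ g + a) = r + q := by
        rw [mulVec_add, mulVec_add, mulVec_mulVec, mulVec_mulVec, hQ0, one_mulVec, Matrix.mul_sub,
          ← Matrix.mul_assoc, hQ0]
        simp [hq]
      rw [resp_eq_cons, e1]
      congr 1
      apply resp_congr
      intro j h
      have e2 := Q.tail_mul_first hQ (r + q) j h
      rw [mulVec_add, mulVec_add, mulVec_mulVec, mulVec_mulVec, e2, zero_mulVec, Matrix.mul_sub,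
        ← Matrix.mul_assoc, e2]
      simp [mulVec_add]
    simp_rw [key]
    have hG : ∀ r, ∫⁻ g, f (Fin.cons (α := fun _ => Fin k → ℝ) (r + q)
          ((Q.tail (r + q)).resp (g + a))) ∂(_root_.stdGaussian (Fin N))
        = (fun r' => ∫⁻ h, f (Fin.cons (α := fun _ => Fin k → ℝ) r' h) *
            ENNReal.ofReal (Real.exp ((Q.tail r').logDens a h))
            ∂(Measure.pi fun _ : Fin t => _root_.stdGaussian (Fin k))) (r + q) := by
      intro r
      exact ih (Q.tail (r + q)) (Q.tail_valid hQ _)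
        (fun h => f (Fin.cons (α := fun _ => Fin k → ℝ) (r + q) h))
        (hf.comp (hcons.comp (measurable_const.prodMk measurable_id)))
    have htl : ∀ r h, (Q.tail r).logDens a h
        = Q.logDens a (Fin.cons (α := fun _ => Fin k → ℝ) r h)
          - (q ⬝ᵥ r - (q ⬝ᵥ q) / 2) := by
      intro r h; rw [logDens_cons]; ring
    have hlm : Measurable fun p : (Fin k → ℝ) × (Fin t → Fin k → ℝ) =>
        Q.logDens a (Fin.cons (α := fun _ => Fin k → ℝ) p.1 p.2) :=
      measurable_logDens Q hQ _ measurable_const _ hcons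
    have hqm : Measurable fun p : (Fin k → ℝ) × (Fin t → Fin k → ℝ) => q ⬝ᵥ p.1 :=
      measurable_dotProduct _ _ measurable_const measurable_fst
    have hjm : Measurable fun p : (Fin k → ℝ) × (Fin t → Fin k → ℝ) =>
        f (Fin.cons (α := fun _ => Fin k → ℝ) p.1 p.2) *
          ENNReal.ofReal (Real.exp ((Q.tail p.1).logDens a p.2)) := by
      simp_rw [htl]
      exact (hf.comp hcons).mul (by fun_prop)
    simp_rw [hG]
    rw [lintegral_stdGaussian_add q _ hjm.lintegral_prod_right']
    have hmp := (measurePreserving_piFinSuccAbove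
      (fun _ : Fin (t + 1) => _root_.stdGaussian (Fin k)) 0).symm
    rw [← hmp.lintegral_comp_emb (MeasurableEquiv.measurableEmbedding _), lintegral_prod]
    · refine lintegral_congr fun r => ?_
      have hjr : Measurable fun h => f (Fin.cons (α := fun _ => Fin k → ℝ) r h) *
          ENNReal.ofReal (Real.exp ((Q.tail r).logDens a h)) :=
        hjm.comp (measurable_const.prodMk measurable_id)
      rw [← lintegral_mul_const _ hjr]
      refine lintegral_congr fun h => ?_
      have e3 : ((MeasurableEquiv.piFinSuccAbove (fun _ : Fin (t + 1) => Fin k → ℝ) 0).symm (r, h))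
          = Fin.cons (α := fun _ => Fin k → ℝ) r h := by
        funext m
        refine Fin.cases ?_ (fun m => ?_) m
        · rfl
        · rfl
      rw [e3, mul_assoc, ← ENNReal.ofReal_mul (Real.exp_pos _).le, ← Real.exp_add, htl]
      congr 3
      ring
    · have h4 := measurable_logDens Q hQ (fun _ => a) measurable_const id measurable_id
      have h5 := hf.mul (Real.measurable_exp.comp h4).ennreal_ofReal
      exact (h5.comp (MeasurableEquiv.measurable _)).aemeasurable

/-! ### Information gained by the algorithm -/

open QueryMaps in
lemma lintegral_exp_logDens {N k t : ℕ} (a : Fin N → ℝ) (Q : QueryMaps N k t) (hQ : Q.Valid) :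
    ∫⁻ h, ENNReal.ofReal (Real.exp (Q.logDens a h))
      ∂(Measure.pi fun _ : Fin t => _root_.stdGaussian (Fin k)) = 1 := by
  have := lintegral_resp a t Q hQ (fun _ => 1) measurable_const
  simpa using this.symm

open QueryMaps in
/-- A Donsker–Varadhan type inequality: the mean of a statistic `F` of the transcript and of the
hidden parameter `θ` exceeds its log-exponential moment `B` under independence by at most the
energy of the signal `a θ` seen by the algorithm. It follows from integrating `x + 1 ≤ exp x` at
`x = F - B - ℓ` and `x = ℓ - E`, where `ℓ` is the log-likelihood ratio and `E` the energy, using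
that `2 ℓ - E` is the log-likelihood ratio for the signal `2 a`. -/
lemma information_bound {N k t : ℕ} {Θ : Type*} [MeasurableSpace Θ] (π : Measure Θ)
    [IsFiniteMeasure π] (a : Θ → Fin N → ℝ) (ha : Measurable a) (Q : QueryMaps N k t)
    (hQ : Q.Valid) (F : (Fin t → Fin k → ℝ) → Θ → ℝ) (hF0 : ∀ h θ, 0 ≤ F h θ)
    (hF : Measurable fun p : (Fin t → Fin k → ℝ) × Θ => F p.1 p.2) (B : ℝ) (hB : 0 ≤ B)
    (hexp : ∀ h, ∫⁻ θ, ENNReal.ofReal (Real.exp (F h θ)) ∂π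
      ≤ ENNReal.ofReal (Real.exp B) * π Set.univ) :
    ∫⁻ θ, ∫⁻ g, ENNReal.ofReal (F (Q.resp (g + a θ)) θ) ∂(_root_.stdGaussian (Fin N)) ∂π
      ≤ ∫⁻ θ, ∫⁻ g, ENNReal.ofReal (Q.energy (a θ) (Q.resp (g + a θ)))
          ∂(_root_.stdGaussian (Fin N)) ∂π + ENNReal.ofReal B * π Set.univ := by
  set ν : Measure (Fin t → Fin k → ℝ) := Measure.pi fun _ : Fin t => _root_.stdGaussian (Fin k)
    with hν
  have hFθ : ∀ θ, Measurable fun h => ENNReal.ofReal (F h θ) := fun θ =>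
    (hF.comp (measurable_id.prodMk measurable_const)).ennreal_ofReal
  have hEθ : ∀ θ, Measurable fun h => ENNReal.ofReal (Q.energy (a θ) h) := fun θ =>
    (measurable_energy Q hQ _ measurable_const _ measurable_id).ennreal_ofReal
  have hL : Measurable fun p : Θ × (Fin t → Fin k → ℝ) => Q.logDens (a p.1) p.2 :=
    measurable_logDens Q hQ _ (ha.comp measurable_fst) _ measurable_snd
  have hE : Measurable fun p : Θ × (Fin t → Fin k → ℝ) => Q.energy (a p.1) p.2 :=
    measurable_energy Q hQ _ (ha.comp measurable_fst) _ measurable_snd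
  have hF' : Measurable fun p : Θ × (Fin t → Fin k → ℝ) => F p.2 p.1 :=
    hF.comp measurable_swap
  have hLθ : ∀ b : Fin N → ℝ, Measurable fun h => ENNReal.ofReal (Real.exp (Q.logDens b h)) :=
    fun b => (Real.measurable_exp.comp
      (measurable_logDens Q hQ _ measurable_const _ measurable_id)).ennreal_ofReal
  have e1 : ∀ θ, ∫⁻ g, ENNReal.ofReal (F (Q.resp (g + a θ)) θ) ∂(_root_.stdGaussian (Fin N))
      = ∫⁻ h, ENNReal.ofReal (F h θ) * ENNReal.ofReal (Real.exp (Q.logDens (a θ) h)) ∂ν :=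
    fun θ => lintegral_resp (a θ) t Q hQ _ (hFθ θ)
  have e2 : ∀ θ, ∫⁻ g, ENNReal.ofReal (Q.energy (a θ) (Q.resp (g + a θ)))
        ∂(_root_.stdGaussian (Fin N))
      = ∫⁻ h, ENNReal.ofReal (Q.energy (a θ) h)
        * ENNReal.ofReal (Real.exp (Q.logDens (a θ) h)) ∂ν :=
    fun θ => lintegral_resp (a θ) t Q hQ _ (hEθ θ)
  simp_rw [e1, e2]
  have pt : ∀ θ h, ENNReal.ofReal (F h θ) * ENNReal.ofReal (Real.exp (Q.logDens (a θ) h))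
        + 2 * ENNReal.ofReal (Real.exp (Q.logDens (a θ) h))
      ≤ ((ENNReal.ofReal (Q.energy (a θ) h) * ENNReal.ofReal (Real.exp (Q.logDens (a θ) h))
        + ENNReal.ofReal B * ENNReal.ofReal (Real.exp (Q.logDens (a θ) h)))
        + ENNReal.ofReal (Real.exp (Q.logDens ((2 : ℝ) • a θ) h)))
        + ENNReal.ofReal (Real.exp (-B)) * ENNReal.ofReal (Real.exp (F h θ)) := by
    intro θ h
    have h0 := Q.energy_nonneg (a θ) h
    have hf0 := hF0 h θ
    rw [logDens_two_smul]
    set ℓ := Q.logDens (a θ) h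
    set E := Q.energy (a θ) h
    set f := F h θ
    have two : (2 : ℝ≥0∞) = ENNReal.ofReal 2 := by simp
    have p := (Real.exp_pos ℓ).le
    rw [two]
    simp only [← ENNReal.ofReal_mul h0, ← ENNReal.ofReal_mul hf0, ← ENNReal.ofReal_mul hB,
      ← ENNReal.ofReal_mul (zero_le_two (α := ℝ)), ← ENNReal.ofReal_mul (Real.exp_pos (-B)).le]
    rw [← ENNReal.ofReal_add (by positivity) (by positivity),
      ← ENNReal.ofReal_add (by positivity) (by positivity),
      ← ENNReal.ofReal_add (by positivity) (by positivity),
      ← ENNReal.ofReal_add (by positivity) (by positivity)]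
    apply ENNReal.ofReal_le_ofReal
    have a1 := mul_le_mul_of_nonneg_left (Real.add_one_le_exp (f - B - ℓ)) p
    have a2 := mul_le_mul_of_nonneg_left (Real.add_one_le_exp (ℓ - E)) p
    rw [← Real.exp_add] at a1 a2 ⊢
    have b1 : ℓ + (f - B - ℓ) = -B + f := by ring
    have b2 : ℓ + (ℓ - E) = 2 * ℓ - E := by ring
    rw [b1] at a1
    rw [b2] at a2
    linarith
  have inner : ∀ θ, ∫⁻ h, ENNReal.ofReal (F h θ)
          * ENNReal.ofReal (Real.exp (Q.logDens (a θ) h)) ∂ν + 2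
      ≤ ∫⁻ h, ENNReal.ofReal (Q.energy (a θ) h)
          * ENNReal.ofReal (Real.exp (Q.logDens (a θ) h)) ∂ν + ENNReal.ofReal B + 1
        + ENNReal.ofReal (Real.exp (-B)) * ∫⁻ h, ENNReal.ofReal (Real.exp (F h θ)) ∂ν := by
    intro θ
    have := lintegral_mono (μ := ν) (pt θ)
    have mF : Measurable fun h => ENNReal.ofReal (Real.exp (F h θ)) :=
      (Real.measurable_exp.comp (hF.comp (measurable_id.prodMk measurable_const))).ennreal_ofReal
    rw [lintegral_add_right _ ((hLθ _).const_mul _), lintegral_add_right _ (mF.const_mul _),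
      lintegral_add_right _ (hLθ _), lintegral_add_right _ ((hLθ _).const_mul _),
      lintegral_const_mul _ (hLθ _), lintegral_const_mul _ (hLθ _), lintegral_const_mul _ mF,
      lintegral_exp_logDens _ Q hQ, lintegral_exp_logDens _ Q hQ, mul_one, mul_one] at this
    exact this
  have mF2 : Measurable fun p : Θ × (Fin t → Fin k → ℝ) =>
      ENNReal.ofReal (Real.exp (F p.2 p.1)) := (Real.measurable_exp.comp hF').ennreal_ofReal
  have hsw : ∫⁻ θ, ∫⁻ h, ENNReal.ofReal (Real.exp (F h θ)) ∂ν ∂π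
      = ∫⁻ h, ∫⁻ θ, ENNReal.ofReal (Real.exp (F h θ)) ∂π ∂ν :=
    lintegral_lintegral_swap mF2.aemeasurable
  have outer := lintegral_mono (μ := π) inner
  rw [lintegral_add_right _ measurable_const,
    lintegral_add_right _ ((mF2.lintegral_prod_right').const_mul _),
    lintegral_add_right _ measurable_const, lintegral_add_right _ measurable_const,
    lintegral_const_mul _ mF2.lintegral_prod_right', lintegral_const, lintegral_const,
    lintegral_const, hsw] at outer
  have hswap : ENNReal.ofReal (Real.exp (-B)) *
      ∫⁻ h, ∫⁻ θ, ENNReal.ofReal (Real.exp (F h θ)) ∂π ∂ν ≤ π Set.univ := by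
    calc _ ≤ ENNReal.ofReal (Real.exp (-B)) *
          ∫⁻ h, ENNReal.ofReal (Real.exp B) * π Set.univ ∂ν := by
          gcongr with h
          exact hexp h
      _ = π Set.univ := by
          rw [lintegral_const, measure_univ (μ := ν), mul_one, ← mul_assoc,
            ← ENNReal.ofReal_mul (Real.exp_pos _).le, ← Real.exp_add]
          simp
  have hfin : 2 * π Set.univ ≠ ⊤ := ENNReal.mul_ne_top (by simp) (measure_ne_top _ _)
  refine (ENNReal.add_le_add_iff_right hfin).1 (outer.trans ?_)
  refine (add_le_add_right hswap _).trans (le_of_eq ?_)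
  ring

namespace QueryMaps

variable {N k t : ℕ}

/-- The algorithm stopped before its last round. -/
def dropLast (Q : QueryMaps N k (t + 1)) : QueryMaps N k t :=
  fun j h => Q j.castSucc h

lemma dropLast_valid (Q : QueryMaps N k (t + 1)) (hQ : Q.Valid) : Q.dropLast.Valid :=
  ⟨fun j i l => hQ.1 j.castSucc i l, fun j h => hQ.2.1 j.castSucc h,
    fun j i hij h => hQ.2.2 j.castSucc i.castSucc hij h⟩

lemma resp_dropLast (Q : QueryMaps N k (t + 1)) (a : Fin N → ℝ) (j : Fin t) :
    Q.dropLast.resp a j = Q.resp a j.castSucc := by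
  have : ∀ m : ℕ, ∀ j : Fin t, (j : ℕ) = m → Q.dropLast.resp a j = Q.resp a j.castSucc := by
    intro m
    induction m using Nat.strong_induction_on with
    | _ m ih =>
      intro j hj
      rw [resp_eq, resp_eq]
      unfold dropLast
      congr 2
      funext i
      exact ih i (hj ▸ i.isLt) ⟨i.1, i.isLt.trans j.isLt⟩ rfl
  exact this _ j rfl

lemma energy_resp_succ (Q : QueryMaps N k (t + 1)) (a b : Fin N → ℝ) :
    Q.energy a (Q.resp b) = Q.dropLast.energy a (Q.dropLast.resp b)
      + (Q (Fin.last t) (Q.dropLast.resp b) *ᵥ a) ⬝ᵥ (Q (Fin.last t) (Q.dropLast.resp b) *ᵥ a) := by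
  have hl : before (Q.resp b) (Fin.last t) = Q.dropLast.resp b := by
    funext i
    exact (resp_dropLast Q b i).symm
  have hb : ∀ j : Fin t, before (Q.resp b) j.castSucc = before (Q.dropLast.resp b) j := by
    intro j
    funext i
    exact (resp_dropLast Q b ⟨i.1, i.isLt.trans j.isLt⟩).symm
  unfold energy
  rw [Fin.sum_univ_castSucc, hl]
  congr 1
  refine Finset.sum_congr rfl fun j _ => ?_
  rw [hb]
  rfl

end QueryMaps

open QueryMaps in
/-- The energy grows at most geometrically with the number of rounds: by `information_bound`, what
the next queries can capture of the signal is controlled by the energy captured so far. -/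
lemma energy_growth {N k : ℕ} {Θ : Type*} [MeasurableSpace Θ] (π : Measure Θ)
    [IsFiniteMeasure π] (P : Θ → Fin N → ℝ) (hP : Measurable P) (β lam B : ℝ) (hlam : 0 < lam)
    (hB : 0 ≤ B)
    (hexp : ∀ q : Matrix (Fin k) (Fin N) ℝ, q * qᵀ = 1 →
      ∫⁻ θ, ENNReal.ofReal (Real.exp (lam * ((q *ᵥ P θ) ⬝ᵥ (q *ᵥ P θ)))) ∂π
        ≤ ENNReal.ofReal (Real.exp B) * π Set.univ)
    (t : ℕ) (Q : QueryMaps N k t) (hQ : Q.Valid) :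
    ∫⁻ θ, ∫⁻ g, ENNReal.ofReal (Q.energy (β • P θ) (Q.resp (g + β • P θ)))
        ∂(_root_.stdGaussian (Fin N)) ∂π
      ≤ ENNReal.ofReal (((1 + β ^ 2 / lam) ^ t - 1) * B) * π Set.univ := by
  have ha : Measurable fun θ => β • P θ := hP.const_smul β
  induction t with
  | zero => simp [energy]
  | succ t ih =>
    set κ := β ^ 2 / lam with hκ
    have hκ0 : 0 ≤ κ := by positivity
    have ih' := ih Q.dropLast (Q.dropLast_valid hQ)
    have nn : ∀ v : Fin k → ℝ, 0 ≤ v ⬝ᵥ v := fun v =>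
      Finset.sum_nonneg fun _ _ => mul_self_nonneg _
    have hqm : Measurable fun p : (Fin t → Fin k → ℝ) × Θ => Q (Fin.last t) p.1 *ᵥ P p.2 :=
      measurable_query_mulVec Q hQ (Fin.last t) _ measurable_fst _ (hP.comp measurable_snd)
    have step := information_bound π (fun θ => β • P θ) ha Q.dropLast (Q.dropLast_valid hQ)
      (fun h θ => lam * ((Q (Fin.last t) h *ᵥ P θ) ⬝ᵥ (Q (Fin.last t) h *ᵥ P θ)))
      (fun h θ => mul_nonneg hlam.le (nn _))
      ((measurable_dotProduct _ _ hqm hqm).const_mul _) B hB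
      (fun h => hexp _ (hQ.2.1 (Fin.last t) h))
    set s := ∫⁻ θ, ∫⁻ g, ENNReal.ofReal (Q.dropLast.energy (β • P θ) (Q.dropLast.resp (g + β • P θ)))
        ∂(_root_.stdGaussian (Fin N)) ∂π with hs
    obtain ⟨φ, hφ⟩ : ∃ φ : Θ × (Fin N → ℝ) → ℝ≥0∞, ∀ p, φ p = ENNReal.ofReal
        (lam * ((Q (Fin.last t) (Q.dropLast.resp (p.2 + β • P p.1)) *ᵥ P p.1)
              ⬝ᵥ (Q (Fin.last t) (Q.dropLast.resp (p.2 + β • P p.1)) *ᵥ P p.1))) := ⟨_, fun _ => rfl⟩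
    have step' : ∫⁻ θ, ∫⁻ g, φ (θ, g) ∂(_root_.stdGaussian (Fin N)) ∂π
        ≤ s + ENNReal.ofReal B * π Set.univ := by
      simp_rw [hφ]
      exact step
    have hrm : Measurable fun p : Θ × (Fin N → ℝ) => Q.dropLast.resp (p.2 + β • P p.1) :=
      measurable_resp (fun _ => Q.dropLast)
        (fun j i l => ((Q.dropLast_valid hQ).1 j i l).comp measurable_snd) _
        (measurable_snd.add (ha.comp measurable_fst))
    have hjm : Measurable φ := by
      have h1 := measurable_query_mulVec Q hQ (Fin.last t) _ hrm _ (hP.comp measurable_fst)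
      have h2 := ((measurable_dotProduct _ _ h1 h1).const_mul lam).ennreal_ofReal
      rw [funext hφ]
      exact h2
    have hpt : ∀ θ g, ENNReal.ofReal (Q.energy (β • P θ) (Q.resp (g + β • P θ)))
        = ENNReal.ofReal (Q.dropLast.energy (β • P θ) (Q.dropLast.resp (g + β • P θ)))
          + ENNReal.ofReal κ * φ (θ, g) := by
      intro θ g
      rw [energy_resp_succ, ENNReal.ofReal_add (energy_nonneg _ _ _) (nn _), hφ,
        ← ENNReal.ofReal_mul hκ0]
      congr 2
      simp only [mulVec_smul, smul_dotProduct, dotProduct_smul, smul_eq_mul, hκ]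
      field_simp
    clear step hφ
    have hin : ∀ θ, Measurable fun g : Fin N → ℝ => φ (θ, g) :=
      fun θ => hjm.comp measurable_prodMk_left
    have e1 : ∀ θ, ∫⁻ g, ENNReal.ofReal (Q.energy (β • P θ) (Q.resp (g + β • P θ)))
          ∂(_root_.stdGaussian (Fin N))
        = ∫⁻ g, ENNReal.ofReal (Q.dropLast.energy (β • P θ) (Q.dropLast.resp (g + β • P θ)))
            ∂(_root_.stdGaussian (Fin N))
          + ENNReal.ofReal κ * ∫⁻ g, φ (θ, g) ∂(_root_.stdGaussian (Fin N)) := by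
      intro θ
      rw [lintegral_congr (hpt θ), lintegral_add_right _ ((hin θ).const_mul _),
        lintegral_const_mul _ (hin θ)]
    rw [lintegral_congr e1, lintegral_add_right _ (hjm.lintegral_prod_right'.const_mul _),
      lintegral_const_mul _ hjm.lintegral_prod_right', ← hs]
    have hpow : 0 ≤ (1 + κ) ^ t - 1 := by
      have := one_le_pow₀ (n := t) (by linarith : (1 : ℝ) ≤ 1 + κ)
      linarith
    refine (add_le_add_right (mul_le_mul_right step' _) _).trans ?_
    calc s + ENNReal.ofReal κ * (s + ENNReal.ofReal B * π Set.univ)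
        ≤ ENNReal.ofReal (((1 + κ) ^ t - 1) * B) * π Set.univ
          + ENNReal.ofReal κ * (ENNReal.ofReal (((1 + κ) ^ t - 1) * B) * π Set.univ
            + ENNReal.ofReal B * π Set.univ) := by
          gcongr
      _ = _ := by
          rw [← add_mul, ← ENNReal.ofReal_add (by positivity) hB, ← mul_assoc,
            ← ENNReal.ofReal_mul hκ0, ← add_mul, ← ENNReal.ofReal_add (by positivity)
              (by positivity)]
          congr 2
          ring

/-! ### Exponential moments of the plant -/

/-- The law of the factors `u₁, …, u_r` (or `v₁, …, v_r`). -/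
def factorLaw (n r : ℕ) : Measure (Fin r → Fin n → ℝ) :=
  Measure.pi fun _ : Fin r => _root_.stdGaussian (Fin n)

instance instIsProbFactorLaw (n r : ℕ) : IsProbabilityMeasure (factorLaw n r) := by
  unfold factorLaw; infer_instance

/-- The factors whose matrix has squared operator norm at most `32 n`. -/
def goodFactor (n r : ℕ) : Set (Fin r → Fin n → ℝ) :=
  {V | ∀ x : Fin r → ℝ, ∑ b, (∑ l, x l * V l b) ^ 2 ≤ 32 * n * ∑ l, x l ^ 2}

lemma measurableSet_goodFactor (n r : ℕ) : MeasurableSet (goodFactor n r) := by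
  have : goodFactor n r = ⋂ x : Fin r → ℝ, {V : Fin r → Fin n → ℝ |
      ∑ b, (∑ l, x l * V l b) ^ 2 ≤ 32 * n * ∑ l, x l ^ 2} := by
    ext V; simp [goodFactor]
  rw [this]
  refine (isClosed_iInter fun x => isClosed_le ?_ continuous_const).measurableSet
  fun_prop

lemma lintegral_factorLaw (n r : ℕ) (F : (Fin r × Fin n → ℝ) → ℝ≥0∞) (hF : Measurable F) :
    ∫⁻ V, F (fun p => V p.1 p.2) ∂(factorLaw n r)
      = ∫⁻ x, F x ∂(_root_.stdGaussian (Fin r × Fin n)) := by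
  rw [← map_uncurry_stdGaussian, lintegral_map hF (by fun_prop)]
  rfl

lemma sum_vec {n : ℕ} (f : Fin (n * n) → ℝ) :
    ∑ i, f i = ∑ a, ∑ b, f (finProdFinEquiv (a, b)) := by
  rw [← Equiv.sum_comp finProdFinEquiv, Fintype.sum_prod_type]

lemma vec_apply {n : ℕ} (M : Matrix (Fin n) (Fin n) ℝ) (a b : Fin n) :
    _root_.vec n M (finProdFinEquiv (a, b)) = M a b := by
  simp [_root_.vec]

/-- The plant is linear in each of its two factors, so two applications of
`lintegral_exp_quad_le` bound the exponential moments of `‖q (vec P)‖²`, first given `V` and then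
over `V`. The case `ε = 1` bounds what a query can see and `ε = -1` gives a lower tail. -/
lemma lintegral_plant_le (n r : ℕ) (hn : 0 < n) (ε d : ℝ) (hd0 : 0 ≤ d) (hd2 : d ≤ 2)
    (h1 : ∀ μ : ℝ, 0 ≤ μ → μ ≤ 1 / 4 →
      ∫⁻ y, ENNReal.ofReal (Real.exp (ε * (μ * y ^ 2))) ∂(gaussianReal 0 1)
        ≤ ENNReal.ofReal (Real.exp (ε * d * μ)))
    {κ : Type*} [Fintype κ] (q : Matrix κ (Fin (n * n)) ℝ)
    (hq : ∀ x, ∑ k, (q *ᵥ x) k ^ 2 ≤ ∑ i, x i ^ 2) :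
    ∫⁻ V in goodFactor n r, ∫⁻ U, ENNReal.ofReal (Real.exp
        (ε * (1 / (128 * n) * ∑ k, (q *ᵥ _root_.vec n (plant U V)) k ^ 2)))
        ∂(factorLaw n r) ∂(factorLaw n r)
      ≤ ENNReal.ofReal (Real.exp (ε * d ^ 2 * (1 / (128 * n) * (r * ∑ k, ∑ i, q k i ^ 2)))) := by
  classical
  have hn' : (0 : ℝ) < n := by exact_mod_cast hn
  set lam : ℝ := 1 / (128 * n) with hlam
  have hl0 : 0 < lam := by positivity
  have hln : lam * n = 1 / 128 := by rw [hlam]; field_simp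
  -- given `V`, the entries of `q (vec P)` are linear forms in `U` with coefficients `A V`
  let A : (Fin r → Fin n → ℝ) → Matrix κ (Fin r × Fin n) ℝ := fun V =>
    Matrix.of fun k p => ∑ b, q k (finProdFinEquiv (p.2, b)) * V p.1 b
  have hA : ∀ V x k, (A V *ᵥ x) k
      = (q *ᵥ _root_.vec n (plant (fun l a => x (l, a)) V)) k := by
    intro V x k
    simp only [A, mulVec, dotProduct, Matrix.of_apply, sum_vec, vec_apply, plant,
      Fintype.sum_prod_type, Finset.mul_sum, Finset.sum_mul]
    rw [Finset.sum_comm]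
    refine Finset.sum_congr rfl fun a _ => ?_
    rw [Finset.sum_comm]
    exact Finset.sum_congr rfl fun b _ => Finset.sum_congr rfl fun l _ => by ring
  have hU : ∀ V ∈ goodFactor n r, ∫⁻ U, ENNReal.ofReal (Real.exp
        (ε * (lam * ∑ k, (q *ᵥ _root_.vec n (plant U V)) k ^ 2))) ∂(factorLaw n r)
      ≤ ENNReal.ofReal (Real.exp (ε * d * (lam * ∑ k, ∑ p, A V k p ^ 2))) := by
    intro V hV
    have e : ∀ x, ∑ k, ((√lam • A V) *ᵥ x) k ^ 2 = lam * ∑ k, (A V *ᵥ x) k ^ 2 := by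
      intro x
      rw [Finset.mul_sum]
      refine Finset.sum_congr rfl fun k _ => ?_
      rw [smul_mulVec, Pi.smul_apply, smul_eq_mul, mul_pow, Real.sq_sqrt hl0.le]
    have e2 : ∑ k, ∑ p, (√lam • A V) k p ^ 2 = lam * ∑ k, ∑ p, A V k p ^ 2 := by
      simp_rw [Finset.mul_sum]
      refine Finset.sum_congr rfl fun k _ => Finset.sum_congr rfl fun p _ => ?_
      rw [Matrix.smul_apply, smul_eq_mul, mul_pow, Real.sq_sqrt hl0.le]
    have hb := lintegral_exp_quad_le ε (ε * d) h1 (√lam • A V) (by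
      intro x
      rw [e]
      simp_rw [hA]
      have h2 := hq (_root_.vec n (plant (fun l a => x (l, a)) V))
      have h3 : ∑ i, _root_.vec n (plant (fun l a => x (l, a)) V) i ^ 2
          ≤ 32 * n * ∑ p, x p ^ 2 := by
        rw [sum_vec, Fintype.sum_prod_type, Finset.sum_comm (γ := Fin r), Finset.mul_sum]
        simp_rw [vec_apply]
        exact Finset.sum_le_sum fun a _ => hV fun l => x (l, a)
      calc _ ≤ lam * (32 * n * ∑ p, x p ^ 2) :=
            mul_le_mul_of_nonneg_left (h2.trans h3) hl0.le
        _ = 32 * (lam * n) * ∑ p, x p ^ 2 := by ring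
        _ = _ := by rw [hln]; ring)
    simp_rw [e, e2, hA] at hb
    refine le_of_eq_of_le ?_ hb
    refine lintegral_factorLaw n r (fun x => ENNReal.ofReal (Real.exp
        (ε * (lam * ∑ k, (q *ᵥ _root_.vec n (plant (fun l a => x (l, a)) V)) k ^ 2)))) ?_
    simp_rw [← hA, mulVec, dotProduct]
    fun_prop
  refine (setLIntegral_mono' (measurableSet_goodFactor n r) hU).trans ?_
  refine (setLIntegral_le_lintegral _ _).trans ?_
  -- the coefficients `A V` are themselves linear in `V`
  let T : Matrix (κ × Fin r × Fin n) (Fin r × Fin n) ℝ := Matrix.of fun i p =>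
    if i.2.1 = p.1 then q i.1 (finProdFinEquiv (i.2.2, p.2)) else 0
  have hT : ∀ (x : Fin r × Fin n → ℝ) k l a, (T *ᵥ x) (k, l, a)
      = ∑ b, q k (finProdFinEquiv (a, b)) * x (l, b) := by
    intro x k l a
    simp only [T, mulVec, dotProduct, Matrix.of_apply, Fintype.sum_prod_type]
    rw [Finset.sum_eq_single l]
    · simp
    · intro l' _ hl'
      simp [hl'.symm]
    · simp
  have hTA : ∀ x : Fin r × Fin n → ℝ, ∑ k, ∑ p, A (fun l b => x (l, b)) k p ^ 2
      = ∑ i, (T *ᵥ x) i ^ 2 := by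
    intro x
    simp only [Fintype.sum_prod_type, hT, A, Matrix.of_apply]
  have hTsum : ∑ i, ∑ p, T i p ^ 2 = r * ∑ k, ∑ i, q k i ^ 2 := by
    simp only [Fintype.sum_prod_type, T, Matrix.of_apply, sum_vec, Finset.mul_sum]
    refine Finset.sum_congr rfl fun k _ => ?_
    have : ∀ l : Fin r, ∑ a, ∑ l' : Fin r, ∑ b, (if l = l' then q k (finProdFinEquiv (a, b))
        else 0) ^ 2 = ∑ a, ∑ b, q k (finProdFinEquiv (a, b)) ^ 2 := by
      intro l
      refine Finset.sum_congr rfl fun a _ => ?_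
      rw [Finset.sum_eq_single l]
      · simp
      · intro l' _ hl'
        simp [hl'.symm]
      · simp
    simp_rw [this]
    rw [Finset.sum_const, Finset.card_univ, Fintype.card_fin, nsmul_eq_mul]
    simp_rw [Finset.mul_sum]
  have hTc : ∀ x : Fin r × Fin n → ℝ, ∑ i, (T *ᵥ x) i ^ 2 ≤ n * ∑ p, x p ^ 2 := by
    intro x
    have h2 : ∀ l a, ∑ k, (∑ b, q k (finProdFinEquiv (a, b)) * x (l, b)) ^ 2
        ≤ ∑ b, x (l, b) ^ 2 := by
      intro l a
      have h3 := hq (_root_.vec n (Matrix.of fun a' b => if a' = a then x (l, b) else 0))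
      have h4 : ∀ k, (q *ᵥ _root_.vec n (Matrix.of fun a' b => if a' = a then x (l, b) else 0)) k
          = ∑ b, q k (finProdFinEquiv (a, b)) * x (l, b) := by
        intro k
        simp only [mulVec, dotProduct, sum_vec, vec_apply, Matrix.of_apply]
        rw [Finset.sum_eq_single a]
        · simp
        · intro a' _ ha'
          simp [ha']
        · simp
      have h5 : ∑ i, _root_.vec n (Matrix.of fun a' b => if a' = a then x (l, b) else 0) i ^ 2
          = ∑ b, x (l, b) ^ 2 := by
        rw [sum_vec]
        simp only [vec_apply, Matrix.of_apply]
        rw [Finset.sum_eq_single a]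
        · simp
        · intro a' _ ha'
          simp [ha']
        · simp
      simp_rw [h4] at h3
      rwa [h5] at h3
    calc ∑ i, (T *ᵥ x) i ^ 2
        = ∑ l, ∑ a, ∑ k, (∑ b, q k (finProdFinEquiv (a, b)) * x (l, b)) ^ 2 := by
          simp only [Fintype.sum_prod_type, hT]
          rw [Finset.sum_comm]
          exact Finset.sum_congr rfl fun l _ => Finset.sum_comm
      _ ≤ ∑ l, ∑ _a : Fin n, ∑ b, x (l, b) ^ 2 :=
          Finset.sum_le_sum fun l _ => Finset.sum_le_sum fun a _ => h2 l a
      _ = _ := by simp [Fintype.sum_prod_type, Finset.mul_sum]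
  have hdl : 0 ≤ d * lam := by positivity
  have e : ∀ x, ∑ i, ((√(d * lam) • T) *ᵥ x) i ^ 2 = d * lam * ∑ i, (T *ᵥ x) i ^ 2 := by
    intro x
    rw [Finset.mul_sum]
    refine Finset.sum_congr rfl fun k _ => ?_
    rw [smul_mulVec, Pi.smul_apply, smul_eq_mul, mul_pow, Real.sq_sqrt hdl]
  have e2 : ∑ k, ∑ p, (√(d * lam) • T) k p ^ 2 = d * lam * ∑ k, ∑ p, T k p ^ 2 := by
    simp_rw [Finset.mul_sum]
    refine Finset.sum_congr rfl fun k _ => Finset.sum_congr rfl fun p _ => ?_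
    rw [Matrix.smul_apply, smul_eq_mul, mul_pow, Real.sq_sqrt hdl]
  have hb := lintegral_exp_quad_le ε (ε * d) h1 (√(d * lam) • T) (by
    intro x
    rw [e]
    have hx : 0 ≤ ∑ p, x p ^ 2 := by positivity
    calc _ ≤ d * lam * (n * ∑ p, x p ^ 2) := mul_le_mul_of_nonneg_left (hTc x) hdl
      _ = d * (lam * n) * ∑ p, x p ^ 2 := by ring
      _ ≤ _ := by rw [hln]; nlinarith)
  simp_rw [e, e2, hTsum] at hb
  have hfin : ∫⁻ V, ENNReal.ofReal (Real.exp (ε * d * (lam * ∑ k, ∑ p, A V k p ^ 2)))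
      ∂(factorLaw n r)
      = ∫⁻ x, ENNReal.ofReal (Real.exp (ε * (d * lam * ∑ i, (T *ᵥ x) i ^ 2)))
        ∂(_root_.stdGaussian (Fin r × Fin n)) := by
    rw [← lintegral_factorLaw n r]
    · refine lintegral_congr fun V => ?_
      rw [← hTA]
      congr 2
      ring
    · simp_rw [mulVec, dotProduct]
      fun_prop
  rw [hfin]
  refine hb.trans (le_of_eq ?_)
  congr 2
  ring

/-! ### The operator norm of the factors -/

/-- A maximal `1`-separated subset of the ball of radius `2` in `ℝ^r` has at most `5 ^ r` points
and is a `1`-net of that ball. -/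
lemma exists_net (r : ℕ) : ∃ s : Finset (EuclideanSpace ℝ (Fin r)), s.card ≤ 5 ^ r ∧
    (∀ y ∈ s, ‖y‖ ≤ 2) ∧ ∀ x : EuclideanSpace ℝ (Fin r), ‖x‖ ≤ 2 → ∃ y ∈ s, ‖x - y‖ ≤ 1 := by
  classical
  let Sep : Finset (EuclideanSpace ℝ (Fin r)) → Prop := fun s =>
    (∀ c ∈ s, ‖c‖ ≤ 2) ∧ ∀ c ∈ s, ∀ d ∈ s, c ≠ d → 1 ≤ ‖c - d‖
  have hcard : ∀ s, Sep s → s.card ≤ 5 ^ r := by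
    intro s hs
    have := Besicovitch.card_le_of_separated s hs.1 hs.2
    simpa using this
  have hbdd : BddAbove {m | ∃ s, Sep s ∧ s.card = m} := by
    refine ⟨5 ^ r, ?_⟩
    rintro m ⟨s, hs, rfl⟩
    exact hcard s hs
  have hne : {m | ∃ s, Sep s ∧ s.card = m}.Nonempty :=
    ⟨0, ∅, ⟨by simp, by simp⟩, rfl⟩
  obtain ⟨s, hs, hsm⟩ := Nat.sSup_mem hne hbdd
  refine ⟨s, hcard s hs, hs.1, fun x hx => ?_⟩
  by_contra! hcon
  have hxs : x ∉ s := fun hxs => by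
    have := hcon x hxs
    simp at this
    linarith
  have hsep : Sep (insert x s) := by
    refine ⟨?_, ?_⟩
    · intro c hc
      rcases Finset.mem_insert.1 hc with rfl | hc
      · exact hx
      · exact hs.1 c hc
    · intro c hc d hd hcd
      rcases Finset.mem_insert.1 hc with h1 | h1 <;> rcases Finset.mem_insert.1 hd with h2 | h2
      · exact absurd (h1.trans h2.symm) hcd
      · rw [h1]; exact (hcon d h2).le
      · rw [h2, norm_sub_rev]; exact (hcon c h1).le
      · exact hs.2 c h1 d h2 hcd
  have := le_csSup hbdd ⟨insert x s, hsep, rfl⟩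
  rw [Finset.card_insert_of_notMem hxs, hsm] at this
  omega

/-- Every unit vector is half of a vector within distance `1` of the net, so `‖T‖ ≤ (C + ‖T‖) / 2`. -/
lemma opNorm_le_of_net {E F : Type*} [NormedAddCommGroup E] [NormedSpace ℝ E]
    [NormedAddCommGroup F] [NormedSpace ℝ F] (T : E →L[ℝ] F) (s : Finset E)
    (hs : ∀ x : E, ‖x‖ ≤ 2 → ∃ y ∈ s, ‖x - y‖ ≤ 1) (C : ℝ) (hC0 : 0 ≤ C)
    (hC : ∀ y ∈ s, ‖T y‖ ≤ C) : ‖T‖ ≤ C := by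
  have : ‖T‖ ≤ (C + ‖T‖) / 2 := by
    refine T.opNorm_le_bound (by positivity) fun x => ?_
    rcases eq_or_ne x 0 with rfl | hx
    · simp
    have hx0 : 0 < ‖x‖ := norm_pos_iff.2 hx
    obtain ⟨y, hy, hxy⟩ := hs ((2 / ‖x‖) • x) (by
      rw [norm_smul, Real.norm_eq_abs, abs_of_pos (by positivity)]
      field_simp
      exact le_rfl)
    have h1 : ‖T ((2 / ‖x‖) • x)‖ ≤ C + ‖T‖ := by
      calc ‖T ((2 / ‖x‖) • x)‖ = ‖T y + T ((2 / ‖x‖) • x - y)‖ := by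
            rw [← map_add]; congr 2; abel
        _ ≤ ‖T y‖ + ‖T ((2 / ‖x‖) • x - y)‖ := norm_add_le _ _
        _ ≤ C + ‖T‖ * 1 := add_le_add (hC y hy)
            ((T.le_opNorm _).trans (mul_le_mul_of_nonneg_left hxy (norm_nonneg _)))
        _ = _ := by ring
    rw [map_smul, norm_smul, Real.norm_eq_abs, abs_of_pos (by positivity)] at h1
    have h2 : 2 / ‖x‖ * ‖T x‖ = 2 * ‖T x‖ / ‖x‖ := by ring
    rw [h2, div_le_iff₀ hx0] at h1
    linarith
  linarith

/-- A Chernoff bound: each of the `n` coordinates of `Vᵀ y` is a centred Gaussian of variance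
`‖y‖² ≤ 4`. -/
lemma factorLaw_tail (n r : ℕ) (y : Fin r → ℝ) (hy : ∑ l, y l ^ 2 ≤ 4) :
    factorLaw n r {V | 32 * (n : ℝ) < ∑ b, (∑ l, y l * V l b) ^ 2}
      ≤ ENNReal.ofReal (Real.exp (-(3 * n / 2))) := by
  classical
  let A : Matrix (Fin n) (Fin r × Fin n) ℝ := Matrix.of fun b p =>
    if b = p.2 then y p.1 / 4 else 0
  have hA : ∀ (x : Fin r × Fin n → ℝ) b, (A *ᵥ x) b = (∑ l, y l * x (l, b)) / 4 := by
    intro x b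
    simp only [A, mulVec, dotProduct, Matrix.of_apply, Fintype.sum_prod_type, Finset.sum_div]
    refine Finset.sum_congr rfl fun l _ => ?_
    rw [Finset.sum_eq_single b]
    · simp; ring
    · intro b' _ hb'
      simp [hb'.symm]
    · simp
  have hAs : ∑ b, ∑ p, A b p ^ 2 ≤ n / 4 := by
    have : ∀ b, ∑ p, A b p ^ 2 = (∑ l, y l ^ 2) / 16 := by
      intro b
      simp only [A, Matrix.of_apply, Fintype.sum_prod_type, Finset.sum_div]
      refine Finset.sum_congr rfl fun l _ => ?_
      rw [Finset.sum_eq_single b]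
      · simp; ring
      · intro b' _ hb'
        simp [hb'.symm]
      · simp
    simp_rw [this]
    rw [Finset.sum_const, Finset.card_univ, Fintype.card_fin, nsmul_eq_mul]
    have hn : (0 : ℝ) ≤ n := n.cast_nonneg
    nlinarith
  have hq : ∀ x : Fin r × Fin n → ℝ, ∑ b, (A *ᵥ x) b ^ 2
      = (∑ b, (∑ l, y l * x (l, b)) ^ 2) / 16 := by
    intro x
    simp_rw [hA, div_pow, Finset.sum_div]
    norm_num
  have hb := lintegral_exp_quad_le 1 2 (fun μ => lintegral_exp_sq_le_pos) A (by
    intro x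
    rw [hq]
    have h1 : ∀ b, (∑ l, y l * x (l, b)) ^ 2 ≤ 4 * ∑ l, x (l, b) ^ 2 := by
      intro b
      refine (Finset.sum_mul_sq_le_sq_mul_sq _ _ _).trans ?_
      gcongr
    have h2 : ∑ b, (∑ l, y l * x (l, b)) ^ 2 ≤ 4 * ∑ p, x p ^ 2 := by
      rw [Fintype.sum_prod_type, Finset.sum_comm (γ := Fin r), Finset.mul_sum]
      exact Finset.sum_le_sum fun b _ => h1 b
    linarith)
  have hm : Measurable fun x : Fin r × Fin n → ℝ =>
      ENNReal.ofReal (Real.exp (1 * ∑ b, (A *ᵥ x) b ^ 2)) := by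
    simp_rw [mulVec, dotProduct]
    fun_prop
  rw [← lintegral_factorLaw n r _ hm] at hb
  have hm2 : Measurable fun V : Fin r → Fin n → ℝ =>
      ENNReal.ofReal (Real.exp (1 * ∑ b, (A *ᵥ fun p => V p.1 p.2) b ^ 2)) :=
    hm.comp (by fun_prop)
  have hmk := mul_meas_ge_le_lintegral (μ := factorLaw n r) hm2
    (ENNReal.ofReal (Real.exp (2 * n)))
  have hsub : {V : Fin r → Fin n → ℝ | 32 * (n : ℝ) < ∑ b, (∑ l, y l * V l b) ^ 2}
      ⊆ {V | ENNReal.ofReal (Real.exp (2 * n)) ≤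
        ENNReal.ofReal (Real.exp (1 * ∑ b, (A *ᵥ fun p => V p.1 p.2) b ^ 2))} := by
    intro V hV
    simp only [Set.mem_ofPred_eq] at hV ⊢
    apply ENNReal.ofReal_le_ofReal
    apply Real.exp_le_exp.2
    rw [hq]
    linarith
  have h3 : ENNReal.ofReal (Real.exp (2 * n)) *
      factorLaw n r {V | 32 * (n : ℝ) < ∑ b, (∑ l, y l * V l b) ^ 2}
      ≤ ENNReal.ofReal (Real.exp (n / 2)) := by
    refine (mul_le_mul_right (measure_mono hsub) _).trans (hmk.trans (hb.trans ?_))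
    apply ENNReal.ofReal_le_ofReal
    apply Real.exp_le_exp.2
    linarith
  calc factorLaw n r {V | 32 * (n : ℝ) < ∑ b, (∑ l, y l * V l b) ^ 2}
      = ENNReal.ofReal (Real.exp (-(2 * n))) * (ENNReal.ofReal (Real.exp (2 * n)) *
        factorLaw n r {V | 32 * (n : ℝ) < ∑ b, (∑ l, y l * V l b) ^ 2}) := by
        rw [← mul_assoc, ← ENNReal.ofReal_mul (Real.exp_pos _).le, ← Real.exp_add]
        simp
    _ ≤ ENNReal.ofReal (Real.exp (-(2 * n))) * ENNReal.ofReal (Real.exp (n / 2)) := by gcongr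
    _ = _ := by
        rw [← ENNReal.ofReal_mul (Real.exp_pos _).le, ← Real.exp_add]
        congr 2
        ring

/-- A union bound over a net of at most `5 ^ r` points, beaten by the tail `exp (-3n/2)` because
`r ≤ n / 2`. -/
lemma factorLaw_compl_goodFactor (n r : ℕ) (hr : 2 * r ≤ n) :
    factorLaw n r (goodFactor n r)ᶜ ≤ ENNReal.ofReal (Real.exp (-(n / 2))) := by
  classical
  obtain ⟨s, hcard, hs2, hnet⟩ := exists_net r
  have hsub : (goodFactor n r)ᶜ ⊆ ⋃ y ∈ s,
      {V : Fin r → Fin n → ℝ | 32 * (n : ℝ) < ∑ b, (∑ l, y l * V l b) ^ 2} := by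
    intro V hV
    by_contra hcon
    apply hV
    simp only [Set.mem_iUnion, Set.mem_ofPred_eq, not_exists, not_lt] at hcon
    let T : EuclideanSpace ℝ (Fin r) →L[ℝ] EuclideanSpace ℝ (Fin n) :=
      LinearMap.toContinuousLinearMap (Matrix.toEuclideanLin (Matrix.of V)ᵀ)
    have hT : ∀ y, ‖T y‖ ^ 2 = ∑ b, (∑ l, y l * V l b) ^ 2 := by
      intro y
      rw [EuclideanSpace.real_norm_sq_eq]
      refine Finset.sum_congr rfl fun b _ => ?_
      congr 1
      simp [T, Matrix.toLpLin_apply, mulVec, dotProduct, mul_comm]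
    have hle := opNorm_le_of_net T s hnet (√(32 * n)) (by positivity) (fun y hy =>
      Real.le_sqrt_of_sq_le ((hT y).le.trans (hcon y hy)))
    intro x
    have h1 := hT (WithLp.toLp 2 x)
    have h2 := T.le_of_opNorm_le hle (WithLp.toLp 2 x)
    have h3 : ‖T (WithLp.toLp 2 x)‖ ^ 2 ≤ (√(32 * n) * ‖WithLp.toLp 2 x‖) ^ 2 := by gcongr
    rw [h1, mul_pow, Real.sq_sqrt (by positivity), EuclideanSpace.real_norm_sq_eq] at h3
    exact h3
  refine (measure_mono hsub).trans ((measure_biUnion_finset_le _ _).trans ?_)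
  have h5 : ∀ y ∈ s, factorLaw n r {V | 32 * (n : ℝ) < ∑ b, (∑ l, y l * V l b) ^ 2}
      ≤ ENNReal.ofReal (Real.exp (-(3 * n / 2))) := by
    intro y hy
    refine factorLaw_tail n r (fun l => y l) ?_
    rw [← EuclideanSpace.real_norm_sq_eq]
    have := hs2 y hy
    nlinarith [norm_nonneg y]
  refine (Finset.sum_le_sum h5).trans ?_
  rw [Finset.sum_const, nsmul_eq_mul]
  have h6 : (s.card : ℝ) ≤ Real.exp n := by
    have e5 : (5 : ℝ) ≤ Real.exp 2 := by
      have := Real.exp_one_gt_d9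
      have h7 : Real.exp 2 = Real.exp 1 * Real.exp 1 := by rw [← Real.exp_add]; norm_num
      rw [h7]
      nlinarith
    calc (s.card : ℝ) ≤ 5 ^ r := by exact_mod_cast hcard
      _ ≤ Real.exp 2 ^ r := by gcongr
      _ = Real.exp (r * 2) := by rw [← Real.exp_nat_mul]
      _ ≤ Real.exp n := by
        apply Real.exp_le_exp.2
        have : (2 : ℝ) * r ≤ n := by exact_mod_cast hr
        linarith
  rw [← ENNReal.ofReal_natCast, ← ENNReal.ofReal_mul (Nat.cast_nonneg _)]
  apply ENNReal.ofReal_le_ofReal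
  calc (s.card : ℝ) * Real.exp (-(3 * n / 2)) ≤ Real.exp n * Real.exp (-(3 * n / 2)) := by gcongr
    _ = _ := by rw [← Real.exp_add]; congr 1; ring

/-! ### The prior on the plant -/

/-- The law of the factors `(U, V)`, restricted to the event that `V` has bounded operator norm.
It is a sub-probability measure. -/
def prior (n r : ℕ) : Measure ((Fin r → Fin n → ℝ) × (Fin r → Fin n → ℝ)) :=
  (factorLaw n r).prod ((factorLaw n r).restrict (goodFactor n r))

instance instIsFinitePrior (n r : ℕ) : IsFiniteMeasure (prior n r) := by
  unfold prior; infer_instance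

lemma prior_univ (n r : ℕ) : prior n r Set.univ = factorLaw n r (goodFactor n r) := by
  rw [prior, ← Set.univ_prod_univ, Measure.prod_prod]
  simp

lemma prior_univ_le (n r : ℕ) : prior n r Set.univ ≤ 1 := by
  rw [prior_univ]; exact prob_le_one

/-- The vectorized plant, as a function of its factors. -/
def vecPlant {n r : ℕ} (θ : (Fin r → Fin n → ℝ) × (Fin r → Fin n → ℝ)) : Fin (n * n) → ℝ :=
  _root_.vec n (plant θ.1 θ.2)

lemma measurable_vecPlant {n r : ℕ} : Measurable (vecPlant (n := n) (r := r)) := by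
  refine measurable_pi_lambda _ fun i => ?_
  simp only [vecPlant, _root_.vec, plant, Matrix.of_apply]
  fun_prop

lemma lintegral_prior (n r : ℕ)
    (f : (Fin r → Fin n → ℝ) × (Fin r → Fin n → ℝ) → ℝ≥0∞) (hf : Measurable f) :
    ∫⁻ θ, f θ ∂(prior n r)
      = ∫⁻ V in goodFactor n r, ∫⁻ U, f (U, V) ∂(factorLaw n r) ∂(factorLaw n r) := by
  rw [prior, lintegral_prod_symm _ hf.aemeasurable]

lemma dotProduct_self_eq {ι : Type*} [Fintype ι] (v : ι → ℝ) : v ⬝ᵥ v = ∑ i, v i ^ 2 := by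
  simp [dotProduct, sq]

/-- A contraction `q` sees little of a random plant, in the sense of exponential moments. The
term `log 2` compensates for the restricted prior having mass below one. -/
lemma lintegral_prior_exp_le (n r : ℕ) (hn : 0 < n) (hm : 1 / 2 ≤ prior n r Set.univ)
    {κ : Type*} [Fintype κ] (q : Matrix κ (Fin (n * n)) ℝ) (K : ℝ)
    (hq : ∀ x, ∑ k, (q *ᵥ x) k ^ 2 ≤ ∑ i, x i ^ 2) (hK : ∑ k, ∑ i, q k i ^ 2 ≤ K) :
    ∫⁻ θ, ENNReal.ofReal (Real.exp
        (1 / (128 * n) * ((q *ᵥ vecPlant θ) ⬝ᵥ (q *ᵥ vecPlant θ)))) ∂(prior n r)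
      ≤ ENNReal.ofReal (Real.exp (r * K / (32 * n) + Real.log 2)) * prior n r Set.univ := by
  have hn' : (0 : ℝ) < n := by exact_mod_cast hn
  have hmeas : Measurable fun θ : (Fin r → Fin n → ℝ) × (Fin r → Fin n → ℝ) =>
      ENNReal.ofReal (Real.exp
        (1 / (128 * n) * ((q *ᵥ vecPlant θ) ⬝ᵥ (q *ᵥ vecPlant θ)))) := by
    have h1 : ∀ i, Measurable fun θ : (Fin r → Fin n → ℝ) × (Fin r → Fin n → ℝ) => vecPlant θ i :=
      fun i => (measurable_pi_apply i).comp measurable_vecPlant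
    simp only [mulVec, dotProduct]
    fun_prop
  rw [lintegral_prior n r _ hmeas]
  have h := lintegral_plant_le n r hn 1 2 (by norm_num) le_rfl
    (fun μ h0 h1 => by rw [one_mul 2]; exact lintegral_exp_sq_le_pos h0 h1) q hq
  simp_rw [dotProduct_self_eq]
  simp_rw [one_mul (_ * _)] at h
  refine h.trans ?_
  have h2 : ENNReal.ofReal (Real.exp (r * K / (32 * n) + Real.log 2)) * (1 / 2)
      ≤ ENNReal.ofReal (Real.exp (r * K / (32 * n) + Real.log 2)) * prior n r Set.univ := by
    gcongr
  refine le_trans ?_ h2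
  have half : (1 / 2 : ℝ≥0∞) = ENNReal.ofReal (1 / 2) := by
    rw [ENNReal.ofReal_div_of_pos (by norm_num)]; simp
  rw [half, ← ENNReal.ofReal_mul (Real.exp_pos _).le]
  apply ENNReal.ofReal_le_ofReal
  have e1 : Real.exp (r * K / (32 * n) + Real.log 2) * (1 / 2) = Real.exp (r * K / (32 * n)) := by
    rw [Real.exp_add, Real.exp_log (by norm_num)]; ring
  rw [e1]
  apply Real.exp_le_exp.2
  calc (1 * 2 ^ 2 * (1 / (128 * (n : ℝ)) * (r * ∑ k, ∑ i, q k i ^ 2)) : ℝ)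
      = r * (∑ k, ∑ i, q k i ^ 2) / (32 * n) := by field_simp; ring
    _ ≤ r * K / (32 * n) := by gcongr

/-- The plant has squared Frobenius norm at least `n² r / 8`, up to exponentially small
probability. -/
lemma prior_small_plant (n r : ℕ) (hn : 0 < n) :
    prior n r {θ | vecPlant θ ⬝ᵥ vecPlant θ ≤ (n : ℝ) ^ 2 * r / 8}
      ≤ ENNReal.ofReal (Real.exp (-(n * r / 1024))) := by
  have hn' : (0 : ℝ) < n := by exact_mod_cast hn
  have hpm : Measurable fun θ : (Fin r → Fin n → ℝ) × (Fin r → Fin n → ℝ) =>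
      vecPlant θ ⬝ᵥ vecPlant θ :=
    QueryMaps.measurable_dotProduct _ _ measurable_vecPlant measurable_vecPlant
  have hmeas : Measurable fun θ : (Fin r → Fin n → ℝ) × (Fin r → Fin n → ℝ) =>
      ENNReal.ofReal (Real.exp (-1 * (1 / (128 * n) * (vecPlant θ ⬝ᵥ vecPlant θ)))) := by
    fun_prop
  have h := lintegral_plant_le n r hn (-1) (1 / 2) (by norm_num) (by norm_num)
    (fun μ h0 h1 => by
      have e : (-1 * (1 / 2) * μ : ℝ) = -(1 / 2) * μ := by ring
      rw [e]; exact lintegral_exp_sq_le_neg h0 h1)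
    (1 : Matrix (Fin (n * n)) (Fin (n * n)) ℝ) (by simp)
  have hone : ∑ k, ∑ i, (1 : Matrix (Fin (n * n)) (Fin (n * n)) ℝ) k i ^ 2 = (n : ℝ) ^ 2 := by
    simp [Matrix.one_apply, sq]
  rw [hone] at h
  simp_rw [one_mulVec, ← dotProduct_self_eq] at h
  have h' : ∫⁻ θ, ENNReal.ofReal (Real.exp (-1 * (1 / (128 * n) *
      (vecPlant θ ⬝ᵥ vecPlant θ)))) ∂(prior n r)
      ≤ ENNReal.ofReal (Real.exp (-1 * (1 / 2) ^ 2 * (1 / (128 * n) * (r * (n : ℝ) ^ 2)))) := by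
    rw [lintegral_prior n r _ hmeas]
    exact h
  have hmk := mul_meas_ge_le_lintegral (μ := prior n r) hmeas
    (ENNReal.ofReal (Real.exp (-(n * r / 1024))))
  have hsub : {θ : (Fin r → Fin n → ℝ) × (Fin r → Fin n → ℝ) |
      vecPlant θ ⬝ᵥ vecPlant θ ≤ (n : ℝ) ^ 2 * r / 8} ⊆
      {θ | ENNReal.ofReal (Real.exp (-(n * r / 1024))) ≤
        ENNReal.ofReal (Real.exp (-1 * (1 / (128 * n) * (vecPlant θ ⬝ᵥ vecPlant θ))))} := by
    intro θ hθ
    simp only [Set.mem_ofPred_eq] at hθ ⊢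
    apply ENNReal.ofReal_le_ofReal
    apply Real.exp_le_exp.2
    have h1 : 1 / (128 * (n : ℝ)) * (vecPlant θ ⬝ᵥ vecPlant θ)
        ≤ 1 / (128 * n) * ((n : ℝ) ^ 2 * r / 8) := by gcongr
    have h2 : 1 / (128 * (n : ℝ)) * ((n : ℝ) ^ 2 * r / 8) = n * r / 1024 := by
      field_simp; ring
    linarith
  have h3 : ENNReal.ofReal (Real.exp (-(n * r / 1024))) *
      prior n r {θ | vecPlant θ ⬝ᵥ vecPlant θ ≤ (n : ℝ) ^ 2 * r / 8}
      ≤ ENNReal.ofReal (Real.exp (-(n * r / 512))) := by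
    refine (mul_le_mul_right (measure_mono hsub) _).trans (hmk.trans (h'.trans (le_of_eq ?_)))
    congr 2
    field_simp
    norm_num
    ring
  calc prior n r {θ | vecPlant θ ⬝ᵥ vecPlant θ ≤ (n : ℝ) ^ 2 * r / 8}
      = ENNReal.ofReal (Real.exp (n * r / 1024)) *
        (ENNReal.ofReal (Real.exp (-(n * r / 1024))) *
          prior n r {θ | vecPlant θ ⬝ᵥ vecPlant θ ≤ (n : ℝ) ^ 2 * r / 8}) := by
        rw [← mul_assoc, ← ENNReal.ofReal_mul (Real.exp_pos _).le, ← Real.exp_add]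
        simp
    _ ≤ ENNReal.ofReal (Real.exp (n * r / 1024)) * ENNReal.ofReal (Real.exp (-(n * r / 512))) := by
        gcongr
    _ = _ := by
        rw [← ENNReal.ofReal_mul (Real.exp_pos _).le, ← Real.exp_add]
        congr 2
        ring

lemma sum_mulVec_sq_le_of_orthonormal {ι κ : Type*} [Fintype ι] [Fintype κ] [DecidableEq κ]
    (q : Matrix κ ι ℝ) (hq : q * qᵀ = 1) (x : ι → ℝ) :
    ∑ k, (q *ᵥ x) k ^ 2 ≤ ∑ i, x i ^ 2 := by
  have h0 : 0 ≤ (x - qᵀ *ᵥ (q *ᵥ x)) ⬝ᵥ (x - qᵀ *ᵥ (q *ᵥ x)) :=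
    Finset.sum_nonneg fun _ _ => mul_self_nonneg _
  have h1 : x ⬝ᵥ (qᵀ *ᵥ (q *ᵥ x)) = (q *ᵥ x) ⬝ᵥ (q *ᵥ x) := by
    rw [dotProduct_mulVec, vecMul_transpose]
  have h2 : (qᵀ *ᵥ (q *ᵥ x)) ⬝ᵥ (qᵀ *ᵥ (q *ᵥ x)) = (q *ᵥ x) ⬝ᵥ (q *ᵥ x) := by
    rw [dotProduct_mulVec, vecMul_transpose, mulVec_mulVec, hq, one_mulVec]
  have h3 : (qᵀ *ᵥ (q *ᵥ x)) ⬝ᵥ x = (q *ᵥ x) ⬝ᵥ (q *ᵥ x) := by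
    rw [dotProduct_comm (qᵀ *ᵥ (q *ᵥ x)) x, h1]
  rw [sub_dotProduct, dotProduct_sub, dotProduct_sub, h2, h3, h1] at h0
  rw [← dotProduct_self_eq, ← dotProduct_self_eq]
  linarith

lemma sum_sq_of_orthonormal {N k : ℕ} (q : Matrix (Fin k) (Fin N) ℝ) (hq : q * qᵀ = 1) :
    ∑ i, ∑ l, q i l ^ 2 = k := by
  have h := congrArg Matrix.trace hq
  simp only [Matrix.trace, Matrix.diag, Matrix.mul_apply, Matrix.transpose_apply] at h
  simpa [sq] using h

/-! ### Estimation forces the energy to be large -/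

/-- The unit row vector pointing in the direction of `o`, or zero if `o` vanishes. -/
def unitRow {N : ℕ} (o : Fin N → ℝ) : Matrix (Fin 1) (Fin N) ℝ :=
  Matrix.of fun _ i => o i / √(∑ j, o j ^ 2)

lemma unitRow_mulVec {N : ℕ} (o x : Fin N → ℝ) (a : Fin 1) :
    (unitRow o *ᵥ x) a = (∑ i, o i * x i) / √(∑ j, o j ^ 2) := by
  simp only [unitRow, mulVec, dotProduct, Matrix.of_apply, Finset.sum_div]
  exact Finset.sum_congr rfl fun i _ => by ring

lemma unitRow_dotProduct {N : ℕ} (o x : Fin N → ℝ) :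
    (unitRow o *ᵥ x) ⬝ᵥ (unitRow o *ᵥ x) = (∑ i, o i * x i) ^ 2 / ∑ j, o j ^ 2 := by
  rw [dotProduct_self_eq]
  simp only [unitRow_mulVec, Finset.sum_const, Finset.card_univ, Fintype.card_fin, one_smul]
  rw [div_pow, Real.sq_sqrt (Finset.sum_nonneg fun _ _ => sq_nonneg _)]

lemma unitRow_contraction {N : ℕ} (o x : Fin N → ℝ) :
    ∑ k, (unitRow o *ᵥ x) k ^ 2 ≤ ∑ i, x i ^ 2 := by
  rw [← dotProduct_self_eq, unitRow_dotProduct]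
  refine div_le_of_le_mul₀ (Finset.sum_nonneg fun _ _ => sq_nonneg _)
    (Finset.sum_nonneg fun _ _ => sq_nonneg _) ?_
  rw [mul_comm]
  exact Finset.sum_mul_sq_le_sq_mul_sq _ _ _

lemma unitRow_sum_sq_le {N : ℕ} (o : Fin N → ℝ) : ∑ k, ∑ i, unitRow o k i ^ 2 ≤ 1 := by
  simp only [unitRow, Matrix.of_apply, div_pow, Finset.sum_const, Finset.card_univ,
    Fintype.card_fin, one_smul, ← Finset.sum_div]
  rw [Real.sq_sqrt (Finset.sum_nonneg fun _ _ => sq_nonneg _)]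
  exact div_self_le_one _

/-- A good estimate `o` of a long vector `x` is well correlated with it. -/
lemma le_unitRow_dotProduct {N : ℕ} (o x : Fin N → ℝ) (D : ℝ) (hD : 0 ≤ D)
    (hx : 2 * D < x ⬝ᵥ x) (ho : ∑ i, (o i - x i) ^ 2 ≤ D) :
    D ≤ (unitRow o *ᵥ x) ⬝ᵥ (unitRow o *ᵥ x) := by
  rw [unitRow_dotProduct]
  rw [dotProduct_self_eq] at hx
  set S := ∑ j, o j ^ 2 with hS
  set I := ∑ i, o i * x i with hI
  have e : ∑ i, (o i - x i) ^ 2 = S - 2 * I + ∑ i, x i ^ 2 := by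
    rw [hS, hI, Finset.mul_sum, ← Finset.sum_sub_distrib, ← Finset.sum_add_distrib]
    exact Finset.sum_congr rfl fun i _ => by ring
  have hS0 : 0 ≤ S := Finset.sum_nonneg fun _ _ => sq_nonneg _
  have hCS : I ^ 2 ≤ S * ∑ i, x i ^ 2 := Finset.sum_mul_sq_le_sq_mul_sq _ _ _
  have hSpos : 0 < S := by
    rcases hS0.lt_or_eq with h | h
    · exact h
    · have : I = 0 := by
        have : I ^ 2 ≤ 0 := by rw [← h, zero_mul] at hCS; exact hCS
        exact pow_eq_zero_iff two_ne_zero |>.1 (le_antisymm this (sq_nonneg _))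
      rw [e, this, ← h] at ho
      linarith
  rw [le_div_iff₀ hSpos]
  have h1 : D ≤ 2 * I - S := by linarith
  nlinarith [sq_nonneg (S - I)]

/-- Restricting the prior to factors of bounded operator norm and to long plants costs little
probability. -/
lemma half_le_prior_event (n r : ℕ) (hn : 8192 ≤ n) (hr1 : 1 ≤ r) (hr : 2 * r ≤ n)
    {X : Type*} [MeasurableSpace X] (γ : Measure X) [IsProbabilityMeasure γ]
    (E : Set (X × ((Fin r → Fin n → ℝ) × (Fin r → Fin n → ℝ))))
    (hE : (9 / 10 : ℝ≥0∞) ≤ (γ.prod ((factorLaw n r).prod (factorLaw n r))) E) :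
    (1 / 2 : ℝ≥0∞) ≤ (γ.prod (prior n r))
      (E ∩ {p | (n : ℝ) ^ 2 * r / 8 < vecPlant p.2 ⬝ᵥ vecPlant p.2}) := by
  set ν := γ.prod ((factorLaw n r).prod (factorLaw n r)) with hν
  set W : Set (X × ((Fin r → Fin n → ℝ) × (Fin r → Fin n → ℝ))) :=
    Set.univ ×ˢ (Set.univ ×ˢ goodFactor n r) with hW
  have hWm : MeasurableSet W :=
    MeasurableSet.univ.prod (MeasurableSet.univ.prod (measurableSet_goodFactor n r))
  have hres : γ.prod (prior n r) = ν.restrict W := by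
    have h1 : prior n r = ((factorLaw n r).prod (factorLaw n r)).restrict
        (Set.univ ×ˢ goodFactor n r) := by
      rw [← Measure.prod_restrict, Measure.restrict_univ]; rfl
    rw [hν, hW, ← Measure.prod_restrict, Measure.restrict_univ, ← h1]
  set T : Set (X × ((Fin r → Fin n → ℝ) × (Fin r → Fin n → ℝ))) :=
    {p | (n : ℝ) ^ 2 * r / 8 < vecPlant p.2 ⬝ᵥ vecPlant p.2} with hT
  have hcompl : ν Wᶜ ≤ ENNReal.ofReal (Real.exp (-(n / 2))) := by
    have : Wᶜ = Set.univ ×ˢ (Set.univ ×ˢ (goodFactor n r)ᶜ) := by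
      ext p; simp [hW]
    rw [this, hν, Measure.prod_prod, Measure.prod_prod]
    simpa using factorLaw_compl_goodFactor n r hr
  have hsmall : ν (Tᶜ ∩ W) ≤ ENNReal.ofReal (Real.exp (-(n * r / 1024))) := by
    rw [← Measure.restrict_apply' hWm, ← hres]
    have : Tᶜ = Set.univ ×ˢ {θ | vecPlant θ ⬝ᵥ vecPlant θ ≤ (n : ℝ) ^ 2 * r / 8} := by
      ext p; simp [hT]
    rw [this, Measure.prod_prod]
    simpa using prior_small_plant n r (by omega)
  have hcover : ν E ≤ ν (E ∩ T ∩ W) + ν Wᶜ + ν (Tᶜ ∩ W) := by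
    refine (measure_mono (t := (E ∩ T ∩ W) ∪ Wᶜ ∪ (Tᶜ ∩ W)) fun p hp => ?_).trans
      ((measure_union_le _ _).trans (add_le_add_left (measure_union_le _ _) _))
    by_cases h1 : p ∈ W <;> by_cases h2 : p ∈ T <;> simp [h1, h2, hp]
  rw [hres, Measure.restrict_apply' hWm]
  have hexp : ∀ x : ℝ, 8 ≤ x → Real.exp (-x) ≤ 1 / 9 := by
    intro x hx
    rw [Real.exp_neg, ← one_div]
    apply one_div_le_one_div_of_le (by norm_num)
    linarith [Real.add_one_le_exp x]
  have hn' : (8192 : ℝ) ≤ n := by exact_mod_cast hn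
  have hr' : (1 : ℝ) ≤ r := by exact_mod_cast hr1
  have b1 := hexp (n / 2) (by linarith)
  have b2 := hexp (n * r / 1024) (by
    have : (n : ℝ) * 1 ≤ n * r := by gcongr
    linarith)
  have hfin : ν (E ∩ T ∩ W) ≠ ⊤ := measure_ne_top _ _
  have total := hE.trans (hcover.trans (add_le_add (add_le_add le_rfl hcompl) hsmall))
  rw [← ENNReal.ofReal_toReal hfin, ← ENNReal.ofReal_add ENNReal.toReal_nonneg (by positivity),
    ← ENNReal.ofReal_add (by positivity) (by positivity)] at total
  rw [← ENNReal.ofReal_toReal hfin]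
  have e9 : (9 / 10 : ℝ≥0∞) = ENNReal.ofReal (9 / 10) := by
    rw [ENNReal.ofReal_div_of_pos (by norm_num)]; simp
  have e2 : (1 / 2 : ℝ≥0∞) = ENNReal.ofReal (1 / 2) := by
    rw [ENNReal.ofReal_div_of_pos (by norm_num)]; simp
  rw [e9, ENNReal.ofReal_le_ofReal_iff (by positivity)] at total
  rw [e2]
  apply ENNReal.ofReal_le_ofReal
  linarith

/-- The bound for deterministic algorithms: an accurate estimate has captured a constant fraction
of the plant, which requires energy of order `n r`, whereas `t` rounds provide energy at most
`((1 + 128 α²)^t - 1) r k / n`. -/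
lemma deterministic_bound (n r k t : ℕ) (α : ℝ) (hn : 8192 ≤ n) (hr1 : 1 ≤ r) (hr : 2 * r ≤ n)
    (hk : n * r ≤ k) (Q : QueryMaps (n * n) k t) (hQ : Q.Valid)
    (o : (Fin t → Fin k → ℝ) → Fin (n * n) → ℝ) (ho : Measurable o)
    (hE : (9 / 10 : ℝ≥0∞) ≤
      ((_root_.stdGaussian (Fin (n * n))).prod ((factorLaw n r).prod (factorLaw n r)))
        {p | ∑ i, (o (Q.resp (p.1 + (α / √n) • vecPlant p.2)) i - vecPlant p.2 i) ^ 2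
          ≤ 1 / 16 * (n : ℝ) ^ 2 * r}) :
    (n : ℝ) ^ 2 ≤ 8192 * ((1 + 128 * α ^ 2) ^ t - 1) * k := by
  have hn' : (8192 : ℝ) ≤ n := by exact_mod_cast hn
  have hn0 : (0 : ℝ) < n := by linarith
  have hr' : (1 : ℝ) ≤ r := by exact_mod_cast hr1
  have hrn : 2 * (r : ℝ) ≤ n := by exact_mod_cast hr
  have hk' : (n : ℝ) * r ≤ k := by exact_mod_cast hk
  set β : ℝ := α / √n with hβ
  set lam : ℝ := 1 / (128 * n) with hlam
  have hlam0 : 0 < lam := by positivity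
  have hκ : β ^ 2 / lam = 128 * α ^ 2 := by
    rw [hβ, hlam, div_pow, Real.sq_sqrt hn0.le]; field_simp
  set m := prior n r Set.univ with hm
  have hm1 : m ≤ 1 := prior_univ_le n r
  set γ := _root_.stdGaussian (Fin (n * n)) with hγ
  have hhalf := half_le_prior_event n r hn hr1 hr γ _ hE
  have hmhalf : 1 / 2 ≤ m := by
    refine hhalf.trans ((measure_mono (Set.subset_univ _)).trans ?_)
    rw [← Set.univ_prod_univ, Measure.prod_prod]
    simp [hm]
  have hrespm : Measurable fun p : (Fin (n * n) → ℝ) ×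
      ((Fin r → Fin n → ℝ) × (Fin r → Fin n → ℝ)) => Q.resp (p.1 + β • vecPlant p.2) :=
    QueryMaps.measurable_resp (fun _ => Q) (fun j i l => (hQ.1 j i l).comp measurable_snd) _
      (measurable_fst.add ((measurable_vecPlant.comp measurable_snd).const_smul β))
  have hlog2 : Real.log 2 ≤ 7 / 10 := by linarith [Real.log_two_lt_d9]
  have hlog0 : 0 ≤ Real.log 2 := Real.log_nonneg (by norm_num)
  -- What the query in the direction of the output would capture of the plant.
  set F : (Fin t → Fin k → ℝ) → ((Fin r → Fin n → ℝ) × (Fin r → Fin n → ℝ)) → ℝ := fun h θ =>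
    lam * ((unitRow (o h) *ᵥ vecPlant θ) ⬝ᵥ (unitRow (o h) *ᵥ vecPlant θ)) with hF
  have hF0 : ∀ h θ, 0 ≤ F h θ := fun h θ =>
    mul_nonneg hlam0.le (Finset.sum_nonneg fun _ _ => mul_self_nonneg _)
  have hFm : Measurable fun p : (Fin t → Fin k → ℝ) ×
      ((Fin r → Fin n → ℝ) × (Fin r → Fin n → ℝ)) => F p.1 p.2 := by
    have h1 : ∀ i, Measurable fun p : (Fin t → Fin k → ℝ) ×
      ((Fin r → Fin n → ℝ) × (Fin r → Fin n → ℝ)) => o p.1 i :=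
      fun i => (measurable_pi_apply i).comp (ho.comp measurable_fst)
    have h2 : ∀ i, Measurable fun p : (Fin t → Fin k → ℝ) ×
      ((Fin r → Fin n → ℝ) × (Fin r → Fin n → ℝ)) => vecPlant p.2 i :=
      fun i => (measurable_pi_apply i).comp (measurable_vecPlant.comp measurable_snd)
    simp only [hF, unitRow_dotProduct]
    fun_prop
  have info := information_bound (prior n r) (fun θ => β • vecPlant θ)
    (measurable_vecPlant.const_smul β) Q hQ F hF0 hFm (r * 1 / (32 * n) + Real.log 2)
    (by positivity) (fun h => lintegral_prior_exp_le n r (by omega) hmhalf (unitRow (o h)) 1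
      (unitRow_contraction _) (unitRow_sum_sq_le _))
  have grow := energy_growth (k := k) (prior n r) vecPlant measurable_vecPlant β lam
    (r * k / (32 * n) + Real.log 2) hlam0 (by positivity)
    (fun q hq => lintegral_prior_exp_le n r (by omega) hmhalf q k
      (sum_mulVec_sq_le_of_orthonormal q hq) (sum_sq_of_orthonormal q hq).le) t Q hQ
  rw [hκ] at grow
  set Y : ℝ := (1 + 128 * α ^ 2) ^ t - 1 with hY
  have hY0 : 0 ≤ Y := sub_nonneg.2 (one_le_pow₀ (by nlinarith [sq_nonneg α]))
  have hB1 : (r : ℝ) * 1 / (32 * n) + Real.log 2 ≤ 1 := by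
    have : (r : ℝ) * 1 / (32 * n) ≤ 1 / 32 := by
      rw [div_le_iff₀ (by positivity)]; linarith
    linarith
  have hBk : (r : ℝ) * k / (32 * n) + Real.log 2 ≤ r * k / n := by
    have h1 : 1 ≤ (r : ℝ) * k / n := by
      rw [le_div_iff₀ hn0]; nlinarith
    have h2 : (r : ℝ) * k / (32 * n) = (r * k / n) / 32 := by field_simp
    rw [h2]; linarith
  have upper : ∫⁻ θ, ∫⁻ g, ENNReal.ofReal (F (Q.resp (g + β • vecPlant θ)) θ) ∂γ ∂(prior n r)
      ≤ ENNReal.ofReal (Y * (r * k / n) + 1) := by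
    rw [ENNReal.ofReal_add (by positivity) zero_le_one]
    refine info.trans (add_le_add (grow.trans ?_) ?_)
    · refine (mul_le_of_le_one_right' hm1).trans (ENNReal.ofReal_le_ofReal ?_)
      gcongr
    · exact (mul_le_of_le_one_right' hm1).trans (ENNReal.ofReal_le_ofReal hB1)
  have lower : ENNReal.ofReal (n * r / 4096) ≤
      ∫⁻ θ, ∫⁻ g, ENNReal.ofReal (F (Q.resp (g + β • vecPlant θ)) θ) ∂γ ∂(prior n r) := by
    have hm2 : Measurable fun p : (Fin (n * n) → ℝ) ×
        ((Fin r → Fin n → ℝ) × (Fin r → Fin n → ℝ)) =>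
        ENNReal.ofReal (F (Q.resp (p.1 + β • vecPlant p.2)) p.2) :=
      (hFm.comp (hrespm.prodMk measurable_snd)).ennreal_ofReal
    rw [← lintegral_prod_symm (μ := γ) (ν := prior n r)
      (fun p => ENNReal.ofReal (F (Q.resp (p.1 + β • vecPlant p.2)) p.2)) hm2.aemeasurable]
    refine le_trans ?_ (mul_meas_ge_le_lintegral hm2 (ENNReal.ofReal (n * r / 2048)))
    have e2 : (1 / 2 : ℝ≥0∞) = ENNReal.ofReal (1 / 2) := by
      rw [ENNReal.ofReal_div_of_pos (by norm_num)]; simp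
    have e3 : ENNReal.ofReal ((n : ℝ) * r / 4096) = ENNReal.ofReal (n * r / 2048) * (1 / 2) := by
      rw [e2, ← ENNReal.ofReal_mul (by positivity)]; congr 1; ring
    rw [e3]
    gcongr
    refine hhalf.trans (measure_mono fun p hp => ?_)
    obtain ⟨hp1, hp2⟩ := hp
    simp only [Set.mem_ofPred_eq] at hp1 hp2 ⊢
    apply ENNReal.ofReal_le_ofReal
    have h := le_unitRow_dotProduct (o (Q.resp (p.1 + β • vecPlant p.2))) (vecPlant p.2)
      (1 / 16 * (n : ℝ) ^ 2 * r) (by positivity) (by linarith) hp1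
    calc (n : ℝ) * r / 2048 = lam * (1 / 16 * (n : ℝ) ^ 2 * r) := by
          rw [hlam]; field_simp; norm_num
      _ ≤ _ := by
          simp only [hF]
          gcongr
  have main := lower.trans upper
  rw [ENNReal.ofReal_le_ofReal_iff (by positivity)] at main
  have h1 : (n : ℝ) * r / 8192 ≤ Y * (r * k / n) := by
    have : (8192 : ℝ) * 1 ≤ n * r := by gcongr
    linarith
  have h2 : Y * (r * k / n) = (Y * k) * r / n := by ring
  rw [h2, le_div_iff₀ hn0] at h1
  have h3 : (n : ℝ) ^ 2 * r ≤ (8192 * Y * k) * r := by nlinarith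
  exact le_of_mul_le_mul_right h3 (by linarith)

/-- A randomized algorithm succeeding with probability `9 / 10` does so for some fixed seed. -/
lemma exists_seed {X Ω : Type*} [MeasurableSpace X] [MeasurableSpace Ω] (ν : Measure X)
    [IsProbabilityMeasure ν] (μ : Measure Ω) [IsProbabilityMeasure μ] (S : Set (X × Ω))
    (hS : MeasurableSet S) (h : (9 / 10 : ℝ≥0∞) ≤ (ν.prod μ) S) :
    ∃ ω, (9 / 10 : ℝ≥0∞) ≤ ν {x | (x, ω) ∈ S} := by
  rw [Measure.prod_apply_symm hS] at h
  obtain ⟨ω, hω⟩ := exists_lintegral_le (μ := μ) (f := fun ω => ν ((fun x => (x, ω)) ⁻¹' S))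
    (ne_top_of_le_ne_top (b := 1) (by simp) (by
      refine (lintegral_mono fun ω => prob_le_one (μ := ν)).trans (by simp)))
  exact ⟨ω, h.trans hω⟩

/-- Taking logarithms in `deterministic_bound`. -/
lemma rounds_of_growth (n k t : ℕ) (α : ℝ) (hn : 8192 ≤ n) (hk : 0 < k) (hα : 2 ≤ α)
    (h : (n : ℝ) ^ 2 ≤ 8192 * ((1 + 128 * α ^ 2) ^ t - 1) * k) :
    1 / 23 * (Real.log ((n : ℝ) ^ 2 / k) / (Real.log α + Real.log (Real.log n))) ≤ t := by
  have hn' : (8192 : ℝ) ≤ n := by exact_mod_cast hn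
  have hk' : (0 : ℝ) < k := by exact_mod_cast hk
  have hα0 : 0 < α := by linarith
  have hlogα : 0 < Real.log α := Real.log_pos (by linarith)
  have hloglog : 0 ≤ Real.log (Real.log n) := by
    apply Real.log_nonneg
    rw [Real.le_log_iff_exp_le (by linarith)]
    linarith [Real.exp_one_lt_d9]
  have ht : t ≠ 0 := by
    rintro rfl
    simp at h
    nlinarith
  have hpow : (n : ℝ) ^ 2 / k ≤ α ^ (23 * t) := by
    rw [div_le_iff₀ hk']
    refine h.trans ?_
    gcongr
    have h1 : (8192 : ℝ) ≤ α ^ (13 * t) := by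
      calc (8192 : ℝ) = 2 ^ 13 := by norm_num
        _ ≤ α ^ 13 := by gcongr
        _ ≤ α ^ (13 * t) := pow_le_pow_right₀ (by linarith) (by omega)
    have h2 : 1 + 128 * α ^ 2 ≤ α ^ 10 := by
      have h8 : (2 : ℝ) ^ 8 ≤ α ^ 8 := by gcongr
      have h22 : (2 : ℝ) ^ 2 ≤ α ^ 2 := by gcongr
      have e : α ^ 10 = α ^ 8 * α ^ 2 := by ring
      rw [e]; nlinarith
    calc 8192 * ((1 + 128 * α ^ 2) ^ t - 1)
        ≤ 8192 * (1 + 128 * α ^ 2) ^ t := by linarith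
      _ ≤ α ^ (13 * t) * (α ^ 10) ^ t := by gcongr
      _ = α ^ (23 * t) := by rw [← pow_mul, ← pow_add]; congr 1; ring
  have hlog : Real.log ((n : ℝ) ^ 2 / k) ≤ 23 * t * Real.log α := by
    refine (Real.log_le_log (by positivity) hpow).trans (le_of_eq ?_)
    rw [Real.log_pow]; push_cast; ring
  rw [← mul_div_assoc, div_le_iff₀ (by linarith)]
  have : 0 ≤ (t : ℝ) * Real.log (Real.log n) := by positivity
  linarith

/-- Lower bound for estimating the rank-`r` plant with exact adaptive linear
measurements (Theorem 3.3 of the paper). -/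
theorem rank_r_plant_estimation_lower_bound :
    ∃ (α₀ c c' : ℝ) (n₀ : ℕ), 1 ≤ α₀ ∧ 0 < c ∧ 0 < c' ∧
      ∀ (n r k t : ℕ) (α : ℝ), n₀ ≤ n → 1 ≤ r → 2 * r ≤ n → α₀ ≤ α → n * r ≤ k →
      ∀ (Ω : Type) [MeasurableSpace Ω] (μ : Measure Ω) [IsProbabilityMeasure μ]
        (Qf : Ω → QueryMaps (n * n) k t)
        (out : Ω → (Fin t → Fin k → ℝ) → Matrix (Fin n) (Fin n) ℝ),
        (∀ ω, (Qf ω).Valid) →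
        (∀ (j : Fin t) (i : Fin k) (l : Fin (n * n)),
            Measurable fun p : Ω × (Fin (j : ℕ) → Fin k → ℝ) => Qf p.1 j p.2 i l) →
        (∀ i j : Fin n,
            Measurable fun p : Ω × (Fin t → Fin k → ℝ) => out p.1 p.2 i j) →
        (9 / 10 : ℝ≥0∞) ≤
          (((stdGaussianMat n).prod
                ((Measure.pi fun _ : Fin r => stdGaussian (Fin n)).prod
                  (Measure.pi fun _ : Fin r => stdGaussian (Fin n)))).prod μ)
            {p | frobSq
                  (out p.2 (QueryMaps.resp (Qf p.2)
                      (vec n (Matrix.of p.1.1 +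
                        (α / Real.sqrt n) • plant p.1.2.1 p.1.2.2))) -
                    plant p.1.2.1 p.1.2.2)
                ≤ c * (n : ℝ) ^ 2 * r} →
        c' * (Real.log ((n : ℝ) ^ 2 / k) /
            (Real.log α + Real.log (Real.log n))) ≤ (t : ℝ) := by
  refine ⟨2, 1 / 16, 1 / 23, 8192, by norm_num, by norm_num, by norm_num, ?_⟩
  intro n r k t α hn hr1 hr hα hk Ω _ μ _ Qf out hQ hQm hout hsucc
  have hk0 : 0 < k := lt_of_lt_of_le (Nat.mul_pos (by omega) hr1) hk
  refine rounds_of_growth n k t α hn hk0 hα ?_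
  have hvec : ∀ (G : Fin n → Fin n → ℝ) (θ : (Fin r → Fin n → ℝ) × (Fin r → Fin n → ℝ)),
      _root_.vec n (Matrix.of G + (α / √n) • plant θ.1 θ.2)
        = _root_.vec n (Matrix.of G) + (α / √n) • vecPlant θ := fun G θ => rfl
  have hfrob : ∀ (A : Matrix (Fin n) (Fin n) ℝ)
      (θ : (Fin r → Fin n → ℝ) × (Fin r → Fin n → ℝ)),
      frobSq (A - plant θ.1 θ.2) = ∑ i, (_root_.vec n A i - vecPlant θ i) ^ 2 := by
    intro A θ
    rw [sum_vec]
    simp [frobSq, vecPlant, _root_.vec]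
  simp only [hvec, hfrob] at hsucc
  have hvm : Measurable fun G : Fin n → Fin n → ℝ => _root_.vec n (Matrix.of G) := by
    refine measurable_pi_lambda _ fun i => ?_
    simp only [_root_.vec, Matrix.of_apply]
    fun_prop
  have hom : Measurable fun p : Ω × (Fin t → Fin k → ℝ) => _root_.vec n (out p.1 p.2) :=
    measurable_pi_lambda _ fun i => hout _ _
  -- The success event, with the noise matrix vectorized.
  set S : Set (((Fin (n * n) → ℝ) × ((Fin r → Fin n → ℝ) × (Fin r → Fin n → ℝ))) × Ω) :=
    {p | ∑ i, (_root_.vec n (out p.2 ((Qf p.2).resp (p.1.1 + (α / √n) • vecPlant p.1.2))) i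
      - vecPlant p.1.2 i) ^ 2 ≤ 1 / 16 * (n : ℝ) ^ 2 * r} with hS
  have hSm : MeasurableSet S := by
    have h1 : Measurable fun p : ((Fin (n * n) → ℝ) ×
        ((Fin r → Fin n → ℝ) × (Fin r → Fin n → ℝ))) × Ω =>
        (Qf p.2).resp (p.1.1 + (α / √n) • vecPlant p.1.2) :=
      QueryMaps.measurable_resp (fun p : ((Fin (n * n) → ℝ) ×
        ((Fin r → Fin n → ℝ) × (Fin r → Fin n → ℝ))) × Ω => Qf p.2)
        (fun j i l => (hQm j i l).comp
          ((measurable_snd.comp measurable_fst).prodMk measurable_snd)) _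
        ((measurable_fst.comp measurable_fst).add
          ((measurable_vecPlant.comp (measurable_snd.comp measurable_fst)).const_smul (α / √n)))
    have h2 := hom.comp (measurable_snd.prodMk h1)
    have h3 : Measurable fun p : ((Fin (n * n) → ℝ) ×
        ((Fin r → Fin n → ℝ) × (Fin r → Fin n → ℝ))) × Ω => vecPlant p.1.2 :=
      measurable_vecPlant.comp (measurable_snd.comp measurable_fst)
    refine measurableSet_le (Finset.measurable_sum _ fun i _ => ?_) measurable_const
    exact (((measurable_pi_apply i).comp h2).sub ((measurable_pi_apply i).comp h3)).pow_const 2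
  have hmap : ((_root_.stdGaussian (Fin (n * n))).prod
        ((factorLaw n r).prod (factorLaw n r))).prod μ
      = (((stdGaussianMat n).prod ((factorLaw n r).prod (factorLaw n r))).prod μ).map
        (Prod.map (Prod.map (fun G => _root_.vec n (Matrix.of G)) id) id) := by
    have : IsProbabilityMeasure (stdGaussianMat n) := by
      unfold stdGaussianMat; infer_instance
    rw [← Measure.map_prod_map _ _ (hvm.prodMap measurable_id) measurable_id,
      ← Measure.map_prod_map _ _ hvm measurable_id, Measure.map_id, Measure.map_id,
      map_vec_stdGaussianMat]
  have hS9 : (9 / 10 : ℝ≥0∞) ≤ (((_root_.stdGaussian (Fin (n * n))).prod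
        ((factorLaw n r).prod (factorLaw n r))).prod μ) S := by
    rw [hmap, Measure.map_apply ((hvm.prodMap measurable_id).prodMap measurable_id) hSm]
    exact hsucc
  obtain ⟨ω, hω⟩ := exists_seed _ μ S hSm hS9
  exact deterministic_bound n r k t α hn hr1 hr hk (Qf ω) (hQ ω)
    (fun h => _root_.vec n (out ω h)) (hom.comp (measurable_const.prodMk measurable_id)) hω

end
end

section
/- There exists a universal constant β > 0 such that for all integers n ≥ 1, k ≥ n and all reals C satisfying C ≥ 4 and C·k ≤ 16·n², the following holds: for every matrix Q ∈ ℝ^{k×n²} with orthonormal rows, if u, v ∈ ℝⁿ are independent standard Gaussian random vectors, then Pr[‖Q(u⊗v)‖² ≥ C·k] ≤ exp(−β·C·k/n). -/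
/-!
For fixed `u` the map `v ↦ Q (u ⊗ v)` is linear, with squared operator norm at most `‖u‖²`
(`sqNorm_slice_le`) and with squared Frobenius norm `‖B u‖²`, where `B = unfolding Q` has squared
Frobenius norm `k` (`frobSq_unfolding`) and squared operator norm at most `n`
(`sqNorm_unfolding_le`).

Diagonalizing `AᵀA` and using the rotation invariance of the Gaussian measure (`exists_diag`)
gives `E exp (t ‖A x‖²) ≤ exp (3/2 t ‖A‖_F²)` whenever `t ‖A‖² ≤ 1/6`
(`lintegral_exp_sqNorm_le`). Applied with `t = 1/(12n)` over `v` on the event `‖u‖² < 2n`, and then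
over `u`, it yields the Chernoff bound `exp (-(C - 9/4) k / (12n))` (`measure_truncated_le`);
applied to the identity matrix it yields `Pr[‖u‖² ≥ 2n] ≤ exp (-n/12)` (`measure_sqNorm_ge`).
As `C ≥ 4` and `C k / n ≤ 16 n`, both are at most `exp (-x/192)` with `x = C k / n`.

The factor `2` of the union bound is absorbed by halving the exponent once `exp (-x/384) ≤ 1/2`.
Otherwise `exp (-x/384)` exceeds `1/4`, which bounds the probability by Markov's inequality
(`markov_proj`), the mean of `‖Q (u ⊗ v)‖²` being `k`.
-/

open MeasureTheory ProbabilityTheory Matrix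
open scoped ENNReal Classical

noncomputable section

/-! ### Quadratic forms of a Gaussian vector -/

instance isProbabilityMeasure_stdGaussian_pi (ι : Type*) [Fintype ι] :
    IsProbabilityMeasure (_root_.stdGaussian ι) := by
  unfold _root_.stdGaussian; infer_instance

lemma sqNorm_nonneg {ι : Type*} [Fintype ι] (x : ι → ℝ) : 0 ≤ sqNorm x :=
  Finset.sum_nonneg fun _ _ => sq_nonneg _

lemma sqNorm_eq_dotProduct {ι : Type*} [Fintype ι] (x : ι → ℝ) : sqNorm x = x ⬝ᵥ x := by
  simp [sqNorm, dotProduct, sq]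

lemma sqNorm_mulVec {m ι : Type*} [Fintype m] [Fintype ι] (A : Matrix m ι ℝ) (x : ι → ℝ) :
    sqNorm (A *ᵥ x) = x ⬝ᵥ ((Aᵀ * A) *ᵥ x) := by
  rw [sqNorm_eq_dotProduct, ← Matrix.mulVec_mulVec, Matrix.dotProduct_mulVec x,
    Matrix.vecMul_transpose]

lemma measurable_sqNorm_mulVec {m ι : Type*} [Fintype m] [Fintype ι] (A : Matrix m ι ℝ) :
    Measurable fun x : ι → ℝ => sqNorm (A *ᵥ x) := by
  unfold sqNorm Matrix.mulVec dotProduct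
  fun_prop

/-- By rotation invariance, `‖A x‖²` for a standard Gaussian `x` has the same law as
`∑ dᵢ yᵢ²`, where the `dᵢ` are the eigenvalues of `AᵀA`. -/
lemma exists_diag {m ι : Type*} [Fintype m] [Fintype ι] [DecidableEq ι] (A : Matrix m ι ℝ) :
    ∃ d : ι → ℝ, (∀ i, 0 ≤ d i) ∧
      (∀ L : ℝ, (∀ x, sqNorm (A *ᵥ x) ≤ L * sqNorm x) → ∀ i, d i ≤ L) ∧
      ∑ i, d i = frobSq A ∧
      ∀ f : ℝ → ℝ≥0∞, Measurable f →
        ∫⁻ x, f (sqNorm (A *ᵥ x)) ∂(_root_.stdGaussian ι) =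
          ∫⁻ y, f (∑ i, d i * y i ^ 2) ∂(_root_.stdGaussian ι) := by
  have hS : (Aᵀ * A).IsHermitian := by
    simpa [Matrix.conjTranspose_eq_transpose_of_trivial] using
      Matrix.isHermitian_conjTranspose_mul_self A
  set b := hS.eigenvectorBasis with hb
  set U : Matrix ι ι ℝ := (hS.eigenvectorUnitary : Matrix ι ι ℝ) with hU
  have hUU : Uᵀ * U = 1 := by
    have := Unitary.coe_star_mul_self hS.eigenvectorUnitary
    simpa [Matrix.star_eq_conjTranspose, Matrix.conjTranspose_eq_transpose_of_trivial] using this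
  have hdiag : Uᵀ * (Aᵀ * A) * U = diagonal hS.eigenvalues := by
    have := hS.conjStarAlgAut_star_eigenvectorUnitary
    rw [Unitary.conjStarAlgAut_apply] at this
    simpa [Matrix.star_eq_conjTranspose, Matrix.conjTranspose_eq_transpose_of_trivial,
      Function.comp_def] using this
  have hquad : ∀ x, sqNorm (A *ᵥ (U *ᵥ x)) = ∑ i, hS.eigenvalues i * x i ^ 2 := by
    intro x
    rw [Matrix.mulVec_mulVec, sqNorm_mulVec, Matrix.transpose_mul, Matrix.mul_assoc,
      ← Matrix.mul_assoc Aᵀ, ← Matrix.mul_assoc, hdiag]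
    simp only [dotProduct, Matrix.mulVec_diagonal]
    exact Finset.sum_congr rfl fun i _ => by ring
  have hiso : ∀ x, sqNorm (U *ᵥ x) = sqNorm x := by
    intro x
    rw [sqNorm_mulVec, hUU, Matrix.one_mulVec, sqNorm_eq_dotProduct]
  have hsingle : ∀ i, hS.eigenvalues i = sqNorm (A *ᵥ (U *ᵥ Pi.single i 1)) := by
    intro i
    rw [hquad]
    simp [Pi.single_apply]
  refine ⟨hS.eigenvalues, fun i => ?_, fun L hL i => ?_, ?_, fun f hf => ?_⟩
  · rw [hsingle]; exact sqNorm_nonneg _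
  · rw [hsingle]
    refine (hL _).trans (le_of_eq ?_)
    rw [hiso]
    simp [sqNorm, Pi.single_apply]
  · have h := hS.trace_eq_sum_eigenvalues
    simp only [RCLike.ofReal_real_eq_id, id_eq] at h
    rw [← h, frobSq, Finset.sum_comm]
    simp [Matrix.trace, Matrix.mul_apply, sq]
  · have h1 := map_pi_eq_stdGaussian (ι := ι)
    rw [stdGaussian_eq_map_pi_orthonormalBasis b] at h1
    have hF : Measurable fun z : EuclideanSpace ℝ ι => f (sqNorm (A *ᵥ (WithLp.ofLp z))) :=
      hf.comp ((measurable_sqNorm_mulVec A).comp (by fun_prop))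
    have h2 := congrArg
      (fun μ => ∫⁻ z, f (sqNorm (A *ᵥ (WithLp.ofLp z))) ∂μ) h1
    simp only at h2
    rw [lintegral_map hF (by fun_prop), lintegral_map hF (by fun_prop)] at h2
    unfold _root_.stdGaussian
    rw [h2]
    refine lintegral_congr fun x => ?_
    rw [← hquad]
    congr 3
    ext i
    simp [Matrix.mulVec, dotProduct, hU, hb, mul_comm]

/-- The moment generating function of a squared standard Gaussian, bounded near `0`. -/
lemma lintegral_exp_sq_gaussianReal_le {s : ℝ} (h0 : 0 ≤ s) (h6 : s ≤ 1 / 6) :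
    ∫⁻ y, ENNReal.ofReal (Real.exp (s * y ^ 2)) ∂(gaussianReal 0 1)
      ≤ ENNReal.ofReal (Real.exp (3 / 2 * s)) := by
  have hpos : 0 < 1 - 2 * s := by linarith
  set w : NNReal := Real.toNNReal (1 - 2 * s)⁻¹ with hw
  have hwv : (w : ℝ) = (1 - 2 * s)⁻¹ := Real.coe_toNNReal _ (inv_pos.2 hpos).le
  have hw0 : w ≠ 0 := by
    intro h
    have : (w : ℝ) = 0 := by simp [h]
    rw [hwv] at this
    exact (inv_pos.2 hpos).ne' this
  rw [gaussianReal_of_var_ne_zero _ one_ne_zero,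
    lintegral_withDensity_eq_lintegral_mul _ (measurable_gaussianPDF 0 1) (by fun_prop)]
  -- tilting `N(0,1)` by `exp (s y²)` gives `(1-2s)^{-1/2}` times the density of `N(0, (1-2s)⁻¹)`
  have key : ∀ y, (gaussianPDF 0 1 * fun y => ENNReal.ofReal (Real.exp (s * y ^ 2))) y
      = ENNReal.ofReal (Real.sqrt w) * gaussianPDF 0 w y := by
    intro y
    simp only [Pi.mul_apply, gaussianPDF, gaussianPDFReal]
    rw [← ENNReal.ofReal_mul (by positivity), ← ENNReal.ofReal_mul (by positivity)]
    congr 1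
    have e1 : Real.sqrt (2 * Real.pi * w) = Real.sqrt (2 * Real.pi) * Real.sqrt w :=
      Real.sqrt_mul (by positivity) _
    have hsw : Real.sqrt w ≠ 0 := by
      rw [hwv]; exact (Real.sqrt_pos.2 (inv_pos.2 hpos)).ne'
    have e2 : -(y - 0) ^ 2 / (2 * (w : ℝ)) = -(y - 0) ^ 2 / (2 * ((1 : NNReal) : ℝ)) + s * y ^ 2 := by
      rw [hwv]; simp only [NNReal.coe_one]; field_simp; ring
    rw [e1, e2, Real.exp_add]
    simp only [NNReal.coe_one, mul_one]
    field_simp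
  rw [lintegral_congr key, lintegral_const_mul _ (measurable_gaussianPDF 0 w),
    lintegral_gaussianPDF_eq_one 0 hw0, mul_one]
  refine ENNReal.ofReal_le_ofReal ?_
  rw [Real.sqrt_le_left (Real.exp_pos _).le, hwv, ← Real.exp_nat_mul]
  -- `1/(1-2s) ≤ 1+3s ≤ exp (3s)` because `s ≤ 1/6`
  have h3 : (1 - 2 * s)⁻¹ ≤ 1 + 3 * s := by
    rw [inv_le_iff_one_le_mul₀ hpos]; nlinarith
  have h4 := Real.add_one_le_exp (3 * s)
  calc (1 - 2 * s)⁻¹ ≤ 3 * s + 1 := by linarith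
    _ ≤ _ := h4
    _ = _ := by congr 1; push_cast; ring

/-- Exponential moment of a Gaussian quadratic form `‖A x‖²` below the scale set by the operator
norm `√L` of `A`. -/
lemma lintegral_exp_sqNorm_le {m ι : Type*} [Fintype m] [Fintype ι] [DecidableEq ι]
    (A : Matrix m ι ℝ) {L t : ℝ} (hL : ∀ x, sqNorm (A *ᵥ x) ≤ L * sqNorm x) (ht : 0 ≤ t)
    (htL : t * L ≤ 1 / 6) :
    ∫⁻ x, ENNReal.ofReal (Real.exp (t * sqNorm (A *ᵥ x))) ∂(_root_.stdGaussian ι)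
      ≤ ENNReal.ofReal (Real.exp (3 / 2 * t * frobSq A)) := by
  obtain ⟨d, hd0, hdL, hsum, hlaw⟩ := exists_diag A
  rw [hlaw (fun r => ENNReal.ofReal (Real.exp (t * r))) (by fun_prop)]
  have hprod : ∀ y : ι → ℝ, ENNReal.ofReal (Real.exp (t * ∑ i, d i * y i ^ 2))
      = ∏ i, ENNReal.ofReal (Real.exp (t * d i * y i ^ 2)) := by
    intro y
    rw [← ENNReal.ofReal_prod_of_nonneg fun _ _ => (Real.exp_pos _).le, ← Real.exp_sum,
      Finset.mul_sum]
    simp [mul_assoc]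
  have hind : iIndepFun (fun i (y : ι → ℝ) => ENNReal.ofReal (Real.exp (t * d i * y i ^ 2)))
      (_root_.stdGaussian ι) :=
    iIndepFun_pi (μ := fun _ => gaussianReal 0 1)
      (X := fun i z => ENNReal.ofReal (Real.exp (t * d i * z ^ 2))) (fun i => by fun_prop)
  rw [lintegral_congr hprod,
    lintegral_prod_eq_prod_lintegral_of_indepFun Finset.univ _ hind (fun i => by fun_prop)]
  have hmarg : ∀ i, ∫⁻ y, ENNReal.ofReal (Real.exp (t * d i * y i ^ 2)) ∂(_root_.stdGaussian ι)
      ≤ ENNReal.ofReal (Real.exp (3 / 2 * (t * d i))) := by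
    intro i
    have hmp : MeasurePreserving (Function.eval i) (_root_.stdGaussian ι) (gaussianReal 0 1) :=
      measurePreserving_eval (fun _ : ι => gaussianReal 0 1) i
    have := hmp.lintegral_comp (f := fun z => ENNReal.ofReal (Real.exp (t * d i * z ^ 2)))
      (by fun_prop)
    simp only [Function.eval] at this
    rw [this]
    exact lintegral_exp_sq_gaussianReal_le (mul_nonneg ht (hd0 i))
      ((mul_le_mul_of_nonneg_left (hdL L hL i) ht).trans htL)
  refine (Finset.prod_le_prod' fun i _ => hmarg i).trans (le_of_eq ?_)
  rw [← ENNReal.ofReal_prod_of_nonneg fun _ _ => (Real.exp_pos _).le, ← Real.exp_sum, ← hsum,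
    ← Finset.mul_sum, ← Finset.mul_sum, mul_assoc]

lemma lintegral_sq_gaussianReal : ∫⁻ y, ENNReal.ofReal (y ^ 2) ∂(gaussianReal 0 1) = 1 := by
  have hint : Integrable (fun y : ℝ => y ^ 2) (gaussianReal 0 1) :=
    (memLp_id_gaussianReal 2).integrable_sq
  rw [← ofReal_integral_eq_lintegral_ofReal hint (ae_of_all _ fun _ => sq_nonneg _)]
  have h := variance_id_gaussianReal (μ := 0) (v := 1)
  rw [variance_eq_sub (memLp_id_gaussianReal 2)] at h
  simp at h
  simp [h]

lemma lintegral_sqNorm {m ι : Type*} [Fintype m] [Fintype ι] [DecidableEq ι] (A : Matrix m ι ℝ) :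
    ∫⁻ x, ENNReal.ofReal (sqNorm (A *ᵥ x)) ∂(_root_.stdGaussian ι)
      = ENNReal.ofReal (frobSq A) := by
  obtain ⟨d, hd0, -, hsum, hlaw⟩ := exists_diag A
  rw [hlaw (fun r => ENNReal.ofReal r) (by fun_prop)]
  have hs : ∀ y : ι → ℝ, ENNReal.ofReal (∑ i, d i * y i ^ 2)
      = ∑ i, ENNReal.ofReal (d i) * ENNReal.ofReal (y i ^ 2) := by
    intro y
    rw [ENNReal.ofReal_sum_of_nonneg fun i _ => mul_nonneg (hd0 i) (sq_nonneg _)]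
    exact Finset.sum_congr rfl fun i _ => ENNReal.ofReal_mul (hd0 i)
  rw [lintegral_congr hs, lintegral_finsetSum _ (fun i _ => by fun_prop), ← hsum,
    ENNReal.ofReal_sum_of_nonneg fun i _ => hd0 i]
  refine Finset.sum_congr rfl fun i _ => ?_
  have hmp : MeasurePreserving (Function.eval i) (_root_.stdGaussian ι) (gaussianReal 0 1) :=
    measurePreserving_eval (fun _ : ι => gaussianReal 0 1) i
  have := hmp.lintegral_comp (f := fun z => ENNReal.ofReal (z ^ 2)) (by fun_prop)
  simp only [Function.eval] at this
  rw [lintegral_const_mul _ (by fun_prop), this, lintegral_sq_gaussianReal, mul_one]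

/-! ### The bilinear map `(u, v) ↦ Q (u ⊗ v)` -/

/-- The matrix of the linear map `v ↦ Q (u ⊗ v)` for fixed `u`. -/
def slice {n k : ℕ} (Q : Matrix (Fin k) (Fin (n * n)) ℝ) (u : Fin n → ℝ) :
    Matrix (Fin k) (Fin n) ℝ :=
  Matrix.of fun i j => ∑ a, Q i (finProdFinEquiv (a, j)) * u a

/-- The rearrangement of `Q` that sends `u` to the flattening of the matrix `slice Q u`. -/
def unfolding {n k : ℕ} (Q : Matrix (Fin k) (Fin (n * n)) ℝ) :
    Matrix (Fin k × Fin n) (Fin n) ℝ :=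
  Matrix.of fun p a => Q p.1 (finProdFinEquiv (a, p.2))

section Bilinear

variable {n k : ℕ} (Q : Matrix (Fin k) (Fin (n * n)) ℝ)

lemma mulVec_tensor (u v : Fin n → ℝ) : Q *ᵥ tensor u v = slice Q u *ᵥ v := by
  ext i
  simp only [Matrix.mulVec, dotProduct, slice, Matrix.of_apply, Finset.sum_mul]
  rw [← finProdFinEquiv.sum_comp, Fintype.sum_prod_type, Finset.sum_comm]
  simp [tensor, _root_.vec, mul_assoc]

lemma frobSq_slice (u : Fin n → ℝ) : frobSq (slice Q u) = sqNorm (unfolding Q *ᵥ u) := by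
  simp [frobSq, sqNorm, slice, unfolding, Matrix.mulVec, dotProduct, Fintype.sum_prod_type]

lemma sqNorm_tensor (u v : Fin n → ℝ) : sqNorm (tensor u v) = sqNorm u * sqNorm v := by
  simp only [sqNorm]
  rw [← finProdFinEquiv.sum_comp, Fintype.sum_prod_type, Finset.sum_mul_sum]
  simp [tensor, _root_.vec, mul_pow]

lemma frobSq_unfolding (hQ : Q * Qᵀ = 1) : frobSq (unfolding Q) = k := by
  have h : Matrix.trace (Q * Qᵀ) = k := by rw [hQ]; simp
  rw [← h]
  simp only [frobSq, unfolding, Matrix.of_apply, Matrix.trace, Matrix.diag, Matrix.mul_apply,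
    Matrix.transpose_apply, Fintype.sum_prod_type]
  refine Finset.sum_congr rfl fun i _ => ?_
  rw [← finProdFinEquiv.sum_comp, Fintype.sum_prod_type, Finset.sum_comm]
  simp [sq]

/-- A matrix with orthonormal rows is a contraction, since `‖y - QᵀQ y‖² = ‖y‖² - ‖Q y‖²`. -/
lemma sqNorm_mulVec_le (hQ : Q * Qᵀ = 1) (y : Fin (n * n) → ℝ) : sqNorm (Q *ᵥ y) ≤ sqNorm y := by
  have h0 := sqNorm_nonneg (y - Qᵀ *ᵥ (Q *ᵥ y))
  have h1 : sqNorm (Qᵀ *ᵥ (Q *ᵥ y)) = sqNorm (Q *ᵥ y) := by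
    rw [sqNorm_mulVec Qᵀ, Matrix.transpose_transpose, hQ, Matrix.one_mulVec,
      sqNorm_eq_dotProduct]
  have h2 : y ⬝ᵥ (Qᵀ *ᵥ (Q *ᵥ y)) = sqNorm (Q *ᵥ y) := by
    rw [Matrix.mulVec_mulVec, sqNorm_mulVec]
  have h3 : sqNorm (y - Qᵀ *ᵥ (Q *ᵥ y)) = sqNorm y - 2 * (y ⬝ᵥ (Qᵀ *ᵥ (Q *ᵥ y)))
      + sqNorm (Qᵀ *ᵥ (Q *ᵥ y)) := by
    simp only [sqNorm_eq_dotProduct, sub_dotProduct, dotProduct_sub]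
    rw [dotProduct_comm (Qᵀ *ᵥ (Q *ᵥ y)) y]
    ring
  rw [h3, h2, h1] at h0
  linarith

lemma sqNorm_slice_le (hQ : Q * Qᵀ = 1) (u v : Fin n → ℝ) : sqNorm (slice Q u *ᵥ v) ≤ sqNorm u * sqNorm v := by
  rw [← mulVec_tensor, ← sqNorm_tensor]
  exact sqNorm_mulVec_le Q hQ _

/-- The squared operator norm of `unfolding Q` is at most `n`: `‖slice Q u‖_F²` is the sum of the
`n` squared column norms `‖Q (u ⊗ eⱼ)‖² ≤ ‖u‖²`. -/
lemma sqNorm_unfolding_le (hQ : Q * Qᵀ = 1) (u : Fin n → ℝ) : sqNorm (unfolding Q *ᵥ u) ≤ n * sqNorm u := by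
  rw [← frobSq_slice, frobSq, Finset.sum_comm]
  have h : ∀ j ∈ (Finset.univ : Finset (Fin n)), ∑ i, slice Q u i j ^ 2 ≤ sqNorm u := by
    intro j _
    have := sqNorm_slice_le Q hQ u (Pi.single j 1)
    simpa [sqNorm, Pi.single_apply] using this
  simpa using Finset.sum_le_sum h

end Bilinear

/-! ### Tail bounds -/

lemma measure_ge_le_exp {α : Type*} [MeasurableSpace α] (μ : Measure α) {g : α → ℝ}
    (hg : Measurable g) {t : ℝ} (ht : 0 ≤ t) (a : ℝ) :
    μ {x | a ≤ g x} ≤ ENNReal.ofReal (Real.exp (-(t * a))) *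
      ∫⁻ x, ENNReal.ofReal (Real.exp (t * g x)) ∂μ := by
  have h := mul_meas_ge_le_lintegral (μ := μ)
    (f := fun x => ENNReal.ofReal (Real.exp (t * g x))) (by fun_prop)
    (ENNReal.ofReal (Real.exp (t * a)))
  have hsub : μ {x | a ≤ g x} ≤
      μ {x | ENNReal.ofReal (Real.exp (t * a)) ≤ ENNReal.ofReal (Real.exp (t * g x))} := by
    refine measure_mono fun x hx => ?_
    exact ENNReal.ofReal_le_ofReal (Real.exp_le_exp.2 (mul_le_mul_of_nonneg_left hx ht))
  have hone : ENNReal.ofReal (Real.exp (-(t * a))) * ENNReal.ofReal (Real.exp (t * a)) = 1 := by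
    rw [← ENNReal.ofReal_mul (Real.exp_pos _).le, ← Real.exp_add]
    simp
  calc μ {x | a ≤ g x}
      = ENNReal.ofReal (Real.exp (-(t * a))) *
          (ENNReal.ofReal (Real.exp (t * a)) * μ {x | a ≤ g x}) := by
        rw [← mul_assoc, hone, one_mul]
    _ ≤ _ := by gcongr; exact (mul_le_mul_right hsub _).trans h

/-- The norm tail `Pr[‖u‖² ≥ 2n] ≤ exp (-n/12)`. -/
lemma measure_sqNorm_ge (n : ℕ) :
    _root_.stdGaussian (Fin n) {u | 2 * (n : ℝ) ≤ sqNorm u}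
      ≤ ENNReal.ofReal (Real.exp (-((n : ℝ) / 12))) := by
  have hm : Measurable fun u : Fin n → ℝ => sqNorm u := by unfold sqNorm; fun_prop
  have h1 := measure_ge_le_exp (_root_.stdGaussian (Fin n)) hm (t := 1 / 6) (by norm_num)
    (2 * (n : ℝ))
  have h2 := lintegral_exp_sqNorm_le (1 : Matrix (Fin n) (Fin n) ℝ) (L := 1) (t := 1 / 6)
    (by simp) (by norm_num) (by norm_num)
  have h3 : frobSq (1 : Matrix (Fin n) (Fin n) ℝ) = n := by
    simp [frobSq, Matrix.one_apply]
  simp only [Matrix.one_mulVec, h3] at h2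
  refine h1.trans ((mul_le_mul_right h2 _).trans (le_of_eq ?_))
  rw [← ENNReal.ofReal_mul (Real.exp_pos _).le, ← Real.exp_add]
  congr 2
  ring

section Tail

variable {n k : ℕ} (Q : Matrix (Fin k) (Fin (n * n)) ℝ)

lemma measurable_proj : Measurable fun p : (Fin n → ℝ) × (Fin n → ℝ) =>
    sqNorm (Q.mulVec (tensor p.1 p.2)) := by
  unfold sqNorm Matrix.mulVec dotProduct tensor _root_.vec
  simp only [Matrix.of_apply]
  fun_prop

/-- Chernoff's bound on the event `‖u‖² < 2n`, at parameter `1/(12n)`: the exponential moment is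
taken over `v` at fixed `u`, where it is controlled by `‖slice Q u‖_F² = ‖unfolding Q u‖²`, and
then over `u`. -/
lemma measure_truncated_le (hQ : Q * Qᵀ = 1) (hn : 1 ≤ n) (a : ℝ) :
    ((_root_.stdGaussian (Fin n)).prod (_root_.stdGaussian (Fin n)))
        {p | a ≤ sqNorm (Q.mulVec (tensor p.1 p.2)) ∧ sqNorm p.1 < 2 * n}
      ≤ ENNReal.ofReal (Real.exp (-(1 / (12 * n) * (a - 9 / 4 * k)))) := by
  have hn' : (0 : ℝ) < n := by exact_mod_cast hn
  set t : ℝ := 1 / (12 * n) with ht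
  have ht0 : 0 ≤ t := by positivity
  have htn : t * n = 1 / 12 := by rw [ht]; field_simp
  have hm : Measurable fun u : Fin n → ℝ => sqNorm u := by unfold sqNorm; fun_prop
  have hms : MeasurableSet {p : (Fin n → ℝ) × (Fin n → ℝ) |
      a ≤ sqNorm (Q.mulVec (tensor p.1 p.2)) ∧ sqNorm p.1 < 2 * n} :=
    (measurableSet_le measurable_const (measurable_proj Q)).inter
      (measurableSet_lt (hm.comp measurable_fst) measurable_const)
  rw [Measure.prod_apply hms]
  have hfib : ∀ u : Fin n → ℝ, _root_.stdGaussian (Fin n) (Prod.mk u ⁻¹'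
      {p | a ≤ sqNorm (Q.mulVec (tensor p.1 p.2)) ∧ sqNorm p.1 < 2 * n})
      ≤ ENNReal.ofReal (Real.exp (-(t * a))) *
        ENNReal.ofReal (Real.exp (3 / 2 * t * sqNorm (unfolding Q *ᵥ u))) := by
    intro u
    by_cases hu : sqNorm u < 2 * n
    · have h1 := measure_ge_le_exp (_root_.stdGaussian (Fin n))
        (measurable_sqNorm_mulVec (slice Q u)) ht0 a
      have h2 := lintegral_exp_sqNorm_le (slice Q u) (sqNorm_slice_le Q hQ u) ht0
        (by nlinarith)
      rw [frobSq_slice] at h2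
      simpa [mulVec_tensor, hu] using h1.trans (mul_le_mul_right h2 _)
    · simp [hu]
  refine (lintegral_mono hfib).trans ?_
  have hmeas := measurable_sqNorm_mulVec (unfolding Q)
  rw [lintegral_const_mul _ (by fun_prop)]
  have h3 := lintegral_exp_sqNorm_le (unfolding Q) (sqNorm_unfolding_le Q hQ)
    (t := 3 / 2 * t) (by positivity) (by nlinarith)
  rw [frobSq_unfolding Q hQ] at h3
  refine (mul_le_mul_right h3 _).trans (le_of_eq ?_)
  rw [← ENNReal.ofReal_mul (Real.exp_pos _).le, ← Real.exp_add]
  congr 2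
  ring

/-- Markov's inequality for `‖Q (u ⊗ v)‖²`, whose mean is `k`. -/
lemma markov_proj (hQ : Q * Qᵀ = 1) (C : ℝ) (hC : 4 ≤ C) (hk : 1 ≤ k) :
    ((_root_.stdGaussian (Fin n)).prod (_root_.stdGaussian (Fin n)))
        {p | C * k ≤ sqNorm (Q.mulVec (tensor p.1 p.2))}
      ≤ ENNReal.ofReal (1 / 4) := by
  have hk' : (0 : ℝ) < k := by exact_mod_cast hk
  set μ := (_root_.stdGaussian (Fin n)).prod (_root_.stdGaussian (Fin n))
  have hmp := measurable_proj Q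
  have hmean : ∫⁻ p, ENNReal.ofReal (sqNorm (Q.mulVec (tensor p.1 p.2))) ∂μ
      = ENNReal.ofReal k := by
    rw [lintegral_prod _ hmp.ennreal_ofReal.aemeasurable]
    simp only [mulVec_tensor, lintegral_sqNorm, frobSq_slice]
    rw [frobSq_unfolding Q hQ]
  have h := mul_meas_ge_le_lintegral (μ := μ)
    (f := fun p => ENNReal.ofReal (sqNorm (Q.mulVec (tensor p.1 p.2)))) (by fun_prop)
    (ENNReal.ofReal (4 * k))
  rw [hmean] at h
  have hsub : μ {p | C * k ≤ sqNorm (Q.mulVec (tensor p.1 p.2))} ≤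
      μ {p | ENNReal.ofReal (4 * k) ≤ ENNReal.ofReal (sqNorm (Q.mulVec (tensor p.1 p.2)))} := by
    refine measure_mono fun p hp => ENNReal.ofReal_le_ofReal ?_
    exact (mul_le_mul_of_nonneg_right hC hk'.le).trans hp
  refine hsub.trans ?_
  have hsplit : ENNReal.ofReal (1 / 4) = ENNReal.ofReal k / ENNReal.ofReal (4 * k) := by
    rw [← ENNReal.ofReal_div_of_pos (by positivity)]
    congr 1
    field_simp
  rw [hsplit, ENNReal.le_div_iff_mul_le (Or.inl (by simp; omega)) (Or.inl ENNReal.ofReal_ne_top),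
    mul_comm]
  exact h

end Tail

/-- Tail bound for the projection of a random rank-one tensor onto a fixed
orthonormal query space (Lemma 3.2 of the paper). -/
theorem tensor_projection_tail_bound :
    ∃ β : ℝ, 0 < β ∧
      ∀ (n k : ℕ) (C : ℝ), 1 ≤ n → n ≤ k → 4 ≤ C → C * k ≤ 16 * (n : ℝ) ^ 2 →
      ∀ Q : Matrix (Fin k) (Fin (n * n)) ℝ, Q * Qᵀ = 1 →
      ((stdGaussian (Fin n)).prod (stdGaussian (Fin n)))
          {p | C * k ≤ sqNorm (Q.mulVec (tensor p.1 p.2))}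
        ≤ ENNReal.ofReal (Real.exp (-(β * C * k / n))) := by
  refine ⟨1 / 384, by norm_num, fun n k C hn hnk hC hCk Q hQ => ?_⟩
  have hn' : (0 : ℝ) < n := by exact_mod_cast hn
  have hk' : (0 : ℝ) ≤ k := by positivity
  -- `e = exp (-x/384)` with `x = C k / n`: the two tail events contribute at most `e²` each
  set e : ℝ := Real.exp (-(1 / 384 * C * k / n)) with he
  have he0 : 0 < e := Real.exp_pos _
  have hee : e * e = Real.exp (-(1 / 192 * (C * k / n))) := by
    rw [he, ← Real.exp_add]; congr 1; ring
  by_cases hcase : e ≤ 1 / 2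
  · have hsub : {p : (Fin n → ℝ) × (Fin n → ℝ) | C * k ≤ sqNorm (Q.mulVec (tensor p.1 p.2))} ⊆
        {u | 2 * (n : ℝ) ≤ sqNorm u} ×ˢ Set.univ ∪
        {p | C * k ≤ sqNorm (Q.mulVec (tensor p.1 p.2)) ∧ sqNorm p.1 < 2 * n} := by
      intro p hp
      rcases le_or_gt (2 * (n : ℝ)) (sqNorm p.1) with h | h
      · exact Or.inl ⟨h, trivial⟩
      · exact Or.inr ⟨hp, h⟩
    refine (measure_mono hsub).trans ((measure_union_le _ _).trans ?_)
    rw [Measure.prod_prod, measure_univ, mul_one]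
    refine (add_le_add (measure_sqNorm_ge n)
      (measure_truncated_le Q hQ hn (C * k))).trans ?_
    rw [← ENNReal.ofReal_add (Real.exp_pos _).le (Real.exp_pos _).le]
    refine ENNReal.ofReal_le_ofReal ?_
    have b1 : Real.exp (-((n : ℝ) / 12)) ≤ e * e := by
      rw [hee, Real.exp_le_exp, neg_le_neg_iff]
      have : C * k / n ≤ 16 * n := by rw [div_le_iff₀ hn']; nlinarith
      linarith
    have b2 : Real.exp (-(1 / (12 * n) * (C * k - 9 / 4 * k))) ≤ e * e := by
      rw [hee, Real.exp_le_exp, neg_le_neg_iff]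
      have h1 : 1 / 192 * (C * k / n) = 1 / (12 * n) * (C * k / 16) := by field_simp; ring
      rw [h1]
      refine mul_le_mul_of_nonneg_left ?_ (by positivity)
      nlinarith
    nlinarith
  · refine (markov_proj Q hQ C hC (hn.trans hnk)).trans (ENNReal.ofReal_le_ofReal ?_)
    linarith

end
end

section
/- Let P and Q be probability measures on a measurable space with P absolutely continuous with respect to Q, and let E be a measurable set with P(E) > 0. Let P̃ denote P conditioned on E, i.e. P̃(E') = P(E ∩ E')/P(E) for all measurable E'. Then D_KL(P̃ ‖ Q) ≤ (D_KL(P ‖ Q) + 2)/P(E). -/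
/-!
Write `f` for the density of `P` with respect to `Q` and `p = P E`. On `E` the density of `P[|E]`
is `f / p`, so `D(P[|E] ‖ Q) = p⁻¹ ∫_E log f dP - log p`. The bound then reduces to
`-∫_{Eᶜ} log f dP ≤ 1`, which is Gibbs' inequality for the sub-probability measure `P.restrict Eᶜ`,
and to `-p log p ≤ 1`, which follows from `log p⁻¹ ≤ p⁻¹ - 1`. When `log f` is not `P`-integrable the
right-hand side is infinite.
-/

open MeasureTheory ProbabilityTheory Matrix
open scoped ENNReal Classical

noncomputable section

lemma llr_restrict_ae_eq {Ω : Type*} [MeasurableSpace Ω] (P Q : Measure Ω)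
    [IsFiniteMeasure P] [IsFiniteMeasure Q] (hPQ : P ≪ Q) {S : Set Ω} (hS : MeasurableSet S) :
    llr (P.restrict S) Q =ᵐ[P.restrict S] llr P Q := by
  have h : (P.restrict S).rnDeriv Q =ᵐ[Q] S.indicator (P.rnDeriv Q) :=
    Measure.rnDeriv_restrict P Q hS
  have h' := (Measure.restrict_le_self.absolutelyContinuous.trans hPQ :
    P.restrict S ≪ Q).ae_le h
  filter_upwards [h', ae_restrict_mem hS] with x hx hxS
  simp only [llr_def, hx, Set.indicator_of_mem hxS]

/-- KL divergence under conditioning on an event (Lemma 2.3 of the paper). -/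
theorem klDiv_cond_le {Ω : Type*} [MeasurableSpace Ω] (P Q : Measure Ω)
    [IsProbabilityMeasure P] [IsProbabilityMeasure Q]
    (hPQ : P ≪ Q) (E : Set Ω) (hE : MeasurableSet E) (hPE : 0 < P E) :
    klDiv (P[|E]) Q ≤ (klDiv P Q + 2) / P E := by
  by_cases hint : Integrable (llr P Q) P
  swap
  · have htop : klDiv P Q = ⊤ := if_neg fun h => hint h.2
    simp [htop, ENNReal.top_div_of_ne_top (measure_ne_top P E)]
  have hac : ∀ S, P.restrict S ≪ Q := fun S =>
    Measure.restrict_le_self.absolutelyContinuous.trans hPQ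
  have hintR : ∀ {S}, MeasurableSet S → Integrable (llr (P.restrict S) Q) (P.restrict S) :=
    fun hS => (integrable_congr (llr_restrict_ae_eq P Q hPQ hS)).2 hint.restrict
  have hp : 0 < P.real E := ENNReal.toReal_pos hPE.ne' (measure_ne_top P E)
  have hne : (P E)⁻¹ ≠ 0 := ENNReal.inv_ne_zero.2 (measure_ne_top P E)
  have hnt : (P E)⁻¹ ≠ ⊤ := ENNReal.inv_ne_top.2 hPE.ne'
  have hacc : P[|E] ≪ Q := cond_absolutelyContinuous.trans hPQ
  have hllr : llr (P[|E]) Q =ᵐ[P.restrict E] fun x => llr P Q x - Real.log (P.real E) := by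
    filter_upwards [llr_smul_left (hac E) _ hne hnt, llr_restrict_ae_eq P Q hPQ hE] with x h1 h2
    rw [ProbabilityTheory.cond, h1, h2, ENNReal.toReal_inv, Real.log_inv, sub_eq_add_neg]
    rfl
  have hcint : Integrable (llr (P[|E]) Q) (P[|E]) := by
    refine Integrable.smul_measure ?_ hnt
    exact (integrable_congr hllr).2 (hint.restrict.sub (integrable_const _))
  have hval : ∫ x, llr (P[|E]) Q x ∂(P[|E])
      = (∫ x in E, llr P Q x ∂P - P.real E * Real.log (P.real E)) / P.real E := by
    conv_lhs => rw [ProbabilityTheory.cond, integral_smul_measure]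
    rw [← ProbabilityTheory.cond, integral_congr_ae hllr,
      integral_sub hint.restrict (integrable_const _), ENNReal.toReal_inv]
    simp [measureReal_def, div_eq_inv_mul]
  -- Gibbs' inequality for the restriction of `P` to the complement of `E`.
  have hgibbs := InformationTheory.integral_llr_add_mul_log_nonneg (hac Eᶜ) (hintR hE.compl)
  rw [integral_congr_ae (llr_restrict_ae_eq P Q hPQ hE.compl)] at hgibbs
  simp only [probReal_univ, Real.log_one, mul_zero, add_zero] at hgibbs
  have hmass : 0 ≤ (P.restrict Eᶜ).real Set.univ := measureReal_nonneg
  have hsplit := integral_add_compl hE hint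
  have hplog : -1 ≤ P.real E * Real.log (P.real E) := by
    have h := mul_le_mul_of_nonneg_left (Real.one_sub_inv_le_log_of_pos hp) hp.le
    rw [mul_sub, mul_inv_cancel₀ hp.ne'] at h
    linarith
  have hKP : klDiv P Q = ENNReal.ofReal (∫ x, llr P Q x ∂P) := if_pos ⟨hPQ, hint⟩
  have hKC : klDiv (P[|E]) Q = ENNReal.ofReal (∫ x, llr (P[|E]) Q x ∂(P[|E])) :=
    if_pos ⟨hacc, hcint⟩
  rw [hKC, hKP, hval, ENNReal.ofReal_div_of_pos hp, ofReal_measureReal]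
  gcongr
  calc _ ≤ ENNReal.ofReal (∫ x, llr P Q x ∂P + 2) := by
        apply ENNReal.ofReal_le_ofReal
        linarith
    _ ≤ _ := by
        refine ENNReal.ofReal_add_le.trans ?_
        simp

end
end

section
/- Let N, k, t be positive integers with t·k ≤ N, and let Q⁽ʲ⁾ : (ℝᵏ)^{j−1} → ℝ^{k×N}, j = 1,…,t, be measurable maps (Q⁽¹⁾ constant) such that for every history h = (r⁽¹⁾,…,r⁽ʲ⁻¹⁾) the rows of Q⁽ʲ⁾(h) are orthonormal and orthogonal to the rows of Q⁽ⁱ⁾(r⁽¹⁾,…,r⁽ⁱ⁻¹⁾) for all i < j. Fix a ∈ ℝ^N. Define random vectors x⁽¹⁾,…,x⁽ᵗ⁾ recursively by x⁽ʲ⁾ = Q⁽ʲ⁾(x⁽¹⁾,…,x⁽ʲ⁻¹⁾)·a + g⁽ʲ⁾, where g⁽¹⁾,…,g⁽ᵗ⁾ are i.i.d. standard Gaussian vectors in ℝᵏ; and define y⁽¹⁾,…,y⁽ᵗ⁾ recursively by y⁽ʲ⁾ = Q⁽ʲ⁾(y⁽¹⁾,…,y⁽ʲ⁻¹⁾)·(a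 + g), where g is a standard Gaussian vector in ℝ^N. Then the tuples (x⁽¹⁾,…,x⁽ᵗ⁾) and (y⁽¹⁾,…,y⁽ᵗ⁾) have the same joint distribution on (ℝᵏ)ᵗ. -/
/-!
Write `P j z` for the query matrix of round `j` in the noisy run on `a` with noise `z`; it depends
only on `z i` for `i < j`. Take `u` standard Gaussian in `ℝ^N`, independent of `z`, and let `v` be
the vector whose coordinates along the rows of `P j z` are `z j` for every `j`, and which agrees
with `u` on the orthogonal complement of all these rows (`recon`). Two facts give the theorem.

* Since `P j z v = z j` for all `j` (`mulVec_recon_of_lt`), the exact run on `a + v` coincides with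
  the noisy run on `a` with noise `z` (`QueryMaps.resp_add_eq_nresp`).
* The vector `v` is standard Gaussian (`map_recon`). It arises from `u` by steps
  `u ↦ (P j z)ᵀ z j + (1 - (P j z)ᵀ P j z) u` for `j` decreasing. For fixed `P j z` such a step maps
  a pair of independent standard Gaussians to a standard Gaussian (`map_refresh_stdGaussian`),
  and `z j` is independent of `z i`, `i < j`, on which `P j z` and the remaining steps depend.
-/

open MeasureTheory ProbabilityTheory Matrix
open scoped ENNReal Classical

noncomputable section

/-! ### Gaussian measures and measure-preserving maps -/

instance instIsProbabilityMeasureStdGaussianPi (ι : Type*) [Fintype ι] :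
    IsProbabilityMeasure (_root_.stdGaussian ι) := by
  unfold _root_.stdGaussian; infer_instance

lemma integral_exp_stdGaussian {ι : Type*} [Fintype ι] (c : ι → ℝ) :
    ∫ v, Complex.exp (((c ⬝ᵥ v : ℝ) : ℂ) * Complex.I) ∂(_root_.stdGaussian ι) =
      Complex.exp (-((c ⬝ᵥ c : ℝ) : ℂ) / 2) := by
  have h (v : ι → ℝ) : Complex.exp (((c ⬝ᵥ v : ℝ) : ℂ) * Complex.I) =
      ∏ i, Complex.exp ((c i : ℂ) * (v i : ℂ) * Complex.I) := by
    rw [← Complex.exp_sum, ← Finset.sum_mul]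
    simp [dotProduct]
  simp_rw [h]
  unfold _root_.stdGaussian
  rw [integral_fintype_prod_eq_prod
    (f := fun i (x : ℝ) => Complex.exp ((c i : ℂ) * (x : ℂ) * Complex.I))]
  have h2 (i : ι) : ∫ x : ℝ, Complex.exp ((c i : ℂ) * (x : ℂ) * Complex.I) ∂(gaussianReal 0 1) =
      Complex.exp (-((c i : ℂ) * c i) / 2) := by
    rw [← charFun_apply_real, charFun_gaussianReal]
    congr 1
    push_cast
    ring
  simp_rw [h2]
  rw [← Complex.exp_sum]
  congr 1
  simp [dotProduct, neg_div, Finset.sum_div]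

/-- If `P` has orthonormal rows, then `Pᵀ w + (1 - Pᵀ P) u` is standard Gaussian for
independent standard Gaussian `w` and `u`: its covariance is `Pᵀ P + (1 - Pᵀ P) = 1`. -/
lemma map_refresh_stdGaussian {ι κ : Type*} [Fintype ι] [Fintype κ] [DecidableEq ι]
    (P : Matrix ι κ ℝ) (hP : P * Pᵀ = 1) :
    Measure.map (fun p : (ι → ℝ) × (κ → ℝ) => Pᵀ *ᵥ p.1 + (p.2 - Pᵀ *ᵥ (P *ᵥ p.2)))
      ((_root_.stdGaussian ι).prod (_root_.stdGaussian κ)) = _root_.stdGaussian κ := by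
  have hm : Measurable
      (fun p : (ι → ℝ) × (κ → ℝ) => Pᵀ *ᵥ p.1 + (p.2 - Pᵀ *ᵥ (P *ᵥ p.2))) := by
    apply Continuous.measurable
    fun_prop
  have := Measure.isProbabilityMeasure_map
    (μ := (_root_.stdGaussian ι).prod (_root_.stdGaussian κ)) hm.aemeasurable
  refine Measure.ext_of_charFunDual (funext fun L => ?_)
  obtain ⟨c, hc⟩ : ∃ c : κ → ℝ, ∀ v, L v = c ⬝ᵥ v := by
    refine ⟨fun i => L (Pi.single i 1), fun v => ?_⟩
    conv_lhs => rw [pi_eq_sum_univ' v]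
    simp [dotProduct, mul_comm]
  rw [charFunDual_apply, charFunDual_apply,
    integral_map hm.aemeasurable (Continuous.aestronglyMeasurable (by fun_prop))]
  simp_rw [hc]
  have hsplit (p : (ι → ℝ) × (κ → ℝ)) :
      Complex.exp (((c ⬝ᵥ (Pᵀ *ᵥ p.1 + (p.2 - Pᵀ *ᵥ (P *ᵥ p.2))) : ℝ) : ℂ) * Complex.I) =
      Complex.exp ((((P *ᵥ c) ⬝ᵥ p.1 : ℝ) : ℂ) * Complex.I) *
      Complex.exp ((((c - Pᵀ *ᵥ (P *ᵥ c)) ⬝ᵥ p.2 : ℝ) : ℂ) * Complex.I) := by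
    rw [← Complex.exp_add, ← add_mul, ← Complex.ofReal_add]
    congr 4
    have hadj (b : κ → ℝ) (w : ι → ℝ) : b ⬝ᵥ (Pᵀ *ᵥ w) = (P *ᵥ b) ⬝ᵥ w := by
      rw [dotProduct_mulVec, vecMul_transpose]
    rw [dotProduct_add, dotProduct_sub, sub_dotProduct, hadj, hadj,
      dotProduct_comm (Pᵀ *ᵥ (P *ᵥ c)), hadj, dotProduct_comm (P *ᵥ p.2)]
  simp_rw [hsplit]
  rw [integral_prod_mul (fun w : ι → ℝ => Complex.exp ((((P *ᵥ c) ⬝ᵥ w : ℝ) : ℂ) * Complex.I))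
    (fun u : κ → ℝ => Complex.exp ((((c - Pᵀ *ᵥ (P *ᵥ c)) ⬝ᵥ u : ℝ) : ℂ) * Complex.I)),
    integral_exp_stdGaussian, integral_exp_stdGaussian, integral_exp_stdGaussian,
    ← Complex.exp_add]
  have h1 : P *ᵥ (c - Pᵀ *ᵥ (P *ᵥ c)) = 0 := by
    rw [mulVec_sub, mulVec_mulVec, hP, one_mulVec, sub_self]
  have h2 : (c - Pᵀ *ᵥ (P *ᵥ c)) ⬝ᵥ (c - Pᵀ *ᵥ (P *ᵥ c)) = c ⬝ᵥ c - (P *ᵥ c) ⬝ᵥ (P *ᵥ c) := by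
    have h3 : (c - Pᵀ *ᵥ (P *ᵥ c)) ⬝ᵥ (Pᵀ *ᵥ (P *ᵥ c)) = 0 := by
      rw [dotProduct_mulVec, vecMul_transpose, h1, zero_dotProduct]
    rw [dotProduct_sub, h3, sub_zero, sub_dotProduct, dotProduct_comm (Pᵀ *ᵥ (P *ᵥ c)),
      dotProduct_mulVec, vecMul_transpose]
  rw [h2]
  congr 1
  push_cast
  ring

lemma measurable_update_pair {t : ℕ} {E : Type*} [MeasurableSpace E] (j : Fin t) :
    Measurable fun p : (Fin t → E) × E => Function.update p.1 j p.2 := by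
  refine measurable_pi_lambda _ fun i => ?_
  by_cases h : i = j
  · subst h
    simpa using measurable_snd
  · simp only [Function.update_of_ne h]
    fun_prop

/-- Resampling one coordinate independently does not change a product of probability measures. -/
lemma map_update_pi {t : ℕ} {E : Type*} [MeasurableSpace E] (μ : Measure E)
    [IsProbabilityMeasure μ] (j : Fin t) :
    Measure.map (fun p : (Fin t → E) × E => Function.update p.1 j p.2)
      ((Measure.pi fun _ : Fin t => μ).prod μ) = Measure.pi fun _ : Fin t => μ := by
  symm
  refine Measure.pi_eq fun s hs => ?_
  rw [Measure.map_apply (measurable_update_pair j) (MeasurableSet.univ_pi hs)]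
  have hpre : (fun p : (Fin t → E) × E => Function.update p.1 j p.2) ⁻¹' (Set.pi Set.univ s) =
      (Set.pi Set.univ (Function.update s j Set.univ)) ×ˢ (s j) := by
    ext p
    simp only [Set.mem_preimage, Set.mem_pi, Set.mem_univ, true_imp_iff, Set.mem_prod]
    constructor
    · intro h
      refine ⟨fun i => ?_, by simpa using h j⟩
      by_cases hi : i = j
      · subst hi; simp
      · simpa [Function.update_of_ne hi] using h i
    · rintro ⟨h, h'⟩ i
      by_cases hi : i = j
      · subst hi; simpa using h'
      · simpa [Function.update_of_ne hi] using h i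
  rw [hpre, Measure.prod_prod, Measure.pi_pi,
    ← Finset.prod_erase_mul Finset.univ _ (Finset.mem_univ j),
    ← Finset.prod_erase_mul Finset.univ (fun i => μ (s i)) (Finset.mem_univ j)]
  simp only [Function.update_self, measure_univ, mul_one]
  congr 1
  refine Finset.prod_congr rfl fun i hi => ?_
  rw [Function.update_of_ne (Finset.ne_of_mem_erase hi)]

/-! ### Reconstructing the input from the noise -/

section Recon

variable {N k t : ℕ} (P : Fin t → (Fin t → Fin k → ℝ) → Matrix (Fin k) (Fin N) ℝ)

/-- For `P j z` with orthonormal rows, replaces the component of `u` in their span by the one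
with coordinates `z j`. -/
def refresh (j : Fin t) (z : Fin t → Fin k → ℝ) (u : Fin N → ℝ) : Fin N → ℝ :=
  (P j z)ᵀ *ᵥ z j + (u - (P j z)ᵀ *ᵥ (P j z *ᵥ u))

/-- The vector obtained from `u` by refreshing rounds `j - 1, …, 1, 0` in this order. When the
rows of the `P i z` are jointly orthonormal, it has coordinates `z i` along the rows of `P i z`
for `i < j`, and agrees with `u` on the orthogonal complement. Rounds `≥ t` do nothing. -/
def recon : ℕ → (Fin t → Fin k → ℝ) → (Fin N → ℝ) → Fin N → ℝ
  | 0, _, u => u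
  | j + 1, z, u => if h : j < t then recon j z (refresh P ⟨j, h⟩ z u) else recon j z u

variable {P}

lemma mulVec_refresh_self (hP : ∀ j z, P j z * (P j z)ᵀ = 1) (j : Fin t) (z : Fin t → Fin k → ℝ)
    (u : Fin N → ℝ) : P j z *ᵥ refresh P j z u = z j := by
  simp [refresh, mulVec_add, mulVec_sub, mulVec_mulVec, ← Matrix.mul_assoc, hP]

lemma mulVec_refresh_of_lt (hO : ∀ j i z, i < j → P j z * (P i z)ᵀ = 0) {j i : Fin t} (hij : i < j)
    (z : Fin t → Fin k → ℝ) (u : Fin N → ℝ) : P j z *ᵥ refresh P i z u = P j z *ᵥ u := by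
  simp [refresh, mulVec_add, mulVec_sub, mulVec_mulVec, ← Matrix.mul_assoc, hO j i z hij]

lemma mulVec_recon_of_le (hO : ∀ j i z, i < j → P j z * (P i z)ᵀ = 0) (m : Fin t)
    (z : Fin t → Fin k → ℝ) (j : ℕ) (hj : j ≤ m) (u : Fin N → ℝ) :
    P m z *ᵥ recon P j z u = P m z *ᵥ u := by
  induction j generalizing u with
  | zero => rfl
  | succ j ih =>
    have hjt : j < t := by omega
    rw [recon, dif_pos hjt, ih (by omega), mulVec_refresh_of_lt hO]
    exact Fin.lt_def.2 (by simpa using hj)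

lemma mulVec_recon_of_lt (hP : ∀ j z, P j z * (P j z)ᵀ = 1)
    (hO : ∀ j i z, i < j → P j z * (P i z)ᵀ = 0) (m : Fin t)
    (z : Fin t → Fin k → ℝ) (j : ℕ) (hj : m < j) (u : Fin N → ℝ) :
    P m z *ᵥ recon P j z u = z m := by
  induction j generalizing u with
  | zero => omega
  | succ j ih =>
    rw [recon]
    split_ifs with hjt
    · by_cases h : (m : ℕ) < j
      · exact ih h _
      · obtain rfl : m = ⟨j, hjt⟩ := Fin.ext (by simp; omega)
        rw [mulVec_recon_of_le hO _ _ _ le_rfl, mulVec_refresh_self hP]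
    · exact ih (by omega) _

lemma recon_congr (hA : ∀ j z z', (∀ i < j, z i = z' i) → P j z = P j z') (j : ℕ)
    (z z' : Fin t → Fin k → ℝ) (h : ∀ i : Fin t, (i : ℕ) < j → z i = z' i) (u : Fin N → ℝ) :
    recon P j z u = recon P j z' u := by
  induction j generalizing u with
  | zero => rfl
  | succ j ih =>
    have ih' := ih fun i hi => h i (by omega)
    rw [recon, recon]
    split_ifs with hjt
    · have hz := h ⟨j, hjt⟩ (by simp)
      have hPz : P ⟨j, hjt⟩ z = P ⟨j, hjt⟩ z' :=
        hA _ _ _ fun i hi => h i (by have := Fin.lt_def.1 hi; simp at this; omega)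
      rw [ih', refresh, refresh, hz, hPz]
    · exact ih' u

lemma measurable_refresh (hM : ∀ j i l, Measurable fun z => P j z i l) (j : Fin t) :
    Measurable fun p : (Fin t → Fin k → ℝ) × (Fin N → ℝ) => refresh P j p.1 p.2 := by
  have hM' (i : Fin k) (l : Fin N) :
      Measurable fun p : (Fin t → Fin k → ℝ) × (Fin N → ℝ) => P j p.1 i l :=
    (hM j i l).comp measurable_fst
  refine measurable_pi_lambda _ fun l => ?_
  simp only [refresh, Pi.add_apply, Pi.sub_apply, mulVec, dotProduct, transpose_apply]
  fun_prop

lemma measurable_recon (hM : ∀ j i l, Measurable fun z => P j z i l) (j : ℕ) :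
    Measurable fun p : (Fin t → Fin k → ℝ) × (Fin N → ℝ) => recon P j p.1 p.2 := by
  induction j with
  | zero => exact measurable_snd
  | succ j ih =>
    by_cases hjt : j < t
    · simp only [recon, dif_pos hjt]
      exact ih.comp (measurable_fst.prodMk (measurable_refresh hM _))
    · simpa only [recon, dif_neg hjt] using ih

/-- The reconstructed vector is standard Gaussian. In the step from `j` to `j + 1` the noise
`z j` is resampled as `w`; since `P j` and `recon P j` only see `z i` for `i < j`, integrating
out `w` and `u` for fixed `z` replaces the refreshed vector by a standard Gaussian one. -/
lemma lintegral_recon (hM : ∀ j i l, Measurable fun z => P j z i l)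
    (hP : ∀ j z, P j z * (P j z)ᵀ = 1)
    (hA : ∀ j z z', (∀ i < j, z i = z' i) → P j z = P j z')
    (f : (Fin N → ℝ) → ℝ≥0∞) (hf : Measurable f) (j : ℕ) :
    ∫⁻ z, ∫⁻ u, f (recon P j z u) ∂(_root_.stdGaussian (Fin N))
        ∂(Measure.pi fun _ : Fin t => _root_.stdGaussian (Fin k)) =
      ∫⁻ u, f u ∂(_root_.stdGaussian (Fin N)) := by
  induction j with
  | zero => simp [recon]
  | succ j ih =>
    by_cases hjt : j < t
    swap
    · simpa only [recon, dif_neg hjt] using ih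
    rw [← ih]
    have hmeas := hf.comp (measurable_recon hM (j + 1))
    have hmeas_inner : Measurable fun z : Fin t → Fin k → ℝ =>
        ∫⁻ u, f (recon P (j + 1) z u) ∂(_root_.stdGaussian (Fin N)) :=
      hmeas.lintegral_prod_right'
    have hupd := measurable_update_pair (E := Fin k → ℝ) ⟨j, hjt⟩
    conv_lhs => rw [← map_update_pi (_root_.stdGaussian (Fin k)) (⟨j, hjt⟩ : Fin t)]
    rw [lintegral_map hmeas_inner hupd,
      lintegral_prod _ (by exact (hmeas_inner.comp hupd).aemeasurable)]
    refine lintegral_congr fun z => ?_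
    have hrec (w : Fin k → ℝ) (u : Fin N → ℝ) :
        recon P (j + 1) (Function.update z ⟨j, hjt⟩ w) u =
          recon P j z ((P ⟨j, hjt⟩ z)ᵀ *ᵥ w +
            (u - (P ⟨j, hjt⟩ z)ᵀ *ᵥ (P ⟨j, hjt⟩ z *ᵥ u))) := by
      have hPz : P ⟨j, hjt⟩ (Function.update z ⟨j, hjt⟩ w) = P ⟨j, hjt⟩ z :=
        hA _ _ _ fun i hi => Function.update_of_ne hi.ne _ _
      rw [recon, dif_pos hjt, refresh, hPz, Function.update_self]
      refine recon_congr hA _ _ _ (fun i hi => Function.update_of_ne ?_ _ _) _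
      rintro rfl
      simp at hi
    simp_rw [hrec]
    have hg : Measurable fun u => f (recon P j z u) :=
      hf.comp ((measurable_recon hM j).comp measurable_prodMk_left)
    have hm : Measurable (fun p : (Fin k → ℝ) × (Fin N → ℝ) =>
        (P ⟨j, hjt⟩ z)ᵀ *ᵥ p.1 + (p.2 - (P ⟨j, hjt⟩ z)ᵀ *ᵥ (P ⟨j, hjt⟩ z *ᵥ p.2))) := by
      apply Continuous.measurable
      fun_prop
    conv_rhs => rw [← map_refresh_stdGaussian (P ⟨j, hjt⟩ z) (hP _ _)]
    rw [lintegral_map hg hm, lintegral_prod _ (by exact (hg.comp hm).aemeasurable)]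

lemma map_recon (hM : ∀ j i l, Measurable fun z => P j z i l)
    (hP : ∀ j z, P j z * (P j z)ᵀ = 1)
    (hA : ∀ j z z', (∀ i < j, z i = z' i) → P j z = P j z') (j : ℕ) :
    Measure.map (fun p : (Fin t → Fin k → ℝ) × (Fin N → ℝ) => recon P j p.1 p.2)
      ((Measure.pi fun _ : Fin t => _root_.stdGaussian (Fin k)).prod
        (_root_.stdGaussian (Fin N))) = _root_.stdGaussian (Fin N) := by
  refine Measure.ext_of_lintegral _ fun f hf => ?_
  have hm := measurable_recon hM j
  rw [lintegral_map hf hm, lintegral_prod _ (by exact (hf.comp hm).aemeasurable)]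
  exact lintegral_recon hM hP hA f hf j

end Recon

/-! ### Responses -/

namespace QueryMaps

variable {N k t : ℕ}

/-- Query matrix of round `j` in the noisy run on `a`, as a function of the noise. -/
def noisyQuery (Q : QueryMaps N k t) (a : Fin N → ℝ) (j : Fin t) (g : Fin t → Fin k → ℝ) :
    Matrix (Fin k) (Fin N) ℝ :=
  Q j fun i => nresp Q a g ⟨i.1, i.isLt.trans j.isLt⟩

lemma nresp_eq (Q : QueryMaps N k t) (a : Fin N → ℝ) (g : Fin t → Fin k → ℝ) (j : Fin t) :
    nresp Q a g j = noisyQuery Q a j g *ᵥ a + g j := by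
  rw [nresp, noisyQuery]

lemma nresp_congr (Q : QueryMaps N k t) (a : Fin N → ℝ) (g g' : Fin t → Fin k → ℝ) (j : Fin t)
    (h : ∀ i ≤ j, g i = g' i) : nresp Q a g j = nresp Q a g' j := by
  induction j using WellFoundedLT.induction with
  | ind j ih =>
    have hq : noisyQuery Q a j g = noisyQuery Q a j g' := by
      unfold noisyQuery
      congr 1
      funext i
      have hi : (⟨i.1, i.isLt.trans j.isLt⟩ : Fin t) < j := Fin.lt_def.2 i.isLt
      exact ih _ hi fun l hl => h l (hl.trans hi.le)
    rw [nresp_eq, nresp_eq, hq, h j le_rfl]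

lemma noisyQuery_congr (Q : QueryMaps N k t) (a : Fin N → ℝ) (j : Fin t)
    (g g' : Fin t → Fin k → ℝ) (h : ∀ i < j, g i = g' i) :
    noisyQuery Q a j g = noisyQuery Q a j g' := by
  unfold noisyQuery
  congr 1
  funext i
  have hi : (⟨i.1, i.isLt.trans j.isLt⟩ : Fin t) < j := Fin.lt_def.2 i.isLt
  exact nresp_congr Q a g g' _ fun l hl => h l (hl.trans_lt hi)

lemma measurable_nresp_apply {Q : QueryMaps N k t} (hQ : Q.Valid) (a : Fin N → ℝ) (j : Fin t) :
    Measurable fun g => nresp Q a g j := by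
  induction j using WellFoundedLT.induction with
  | ind j ih =>
    have hh : Measurable fun (g : Fin t → Fin k → ℝ) (i : Fin (j : ℕ)) =>
        nresp Q a g ⟨i.1, i.isLt.trans j.isLt⟩ :=
      measurable_pi_lambda _ fun i => ih _ (Fin.lt_def.2 i.isLt)
    have hq (i : Fin k) (l : Fin N) : Measurable fun g => noisyQuery Q a j g i l :=
      (hQ.1 j i l).comp hh
    simp_rw [nresp_eq]
    refine measurable_pi_lambda _ fun l => ?_
    simp only [Pi.add_apply, mulVec, dotProduct]
    fun_prop

lemma measurable_noisyQuery {Q : QueryMaps N k t} (hQ : Q.Valid) (a : Fin N → ℝ) (j : Fin t)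
    (i : Fin k) (l : Fin N) : Measurable fun g => noisyQuery Q a j g i l :=
  (hQ.1 j i l).comp (measurable_pi_lambda _ fun _ => measurable_nresp_apply hQ a _)

lemma measurable_resp_s6 {Q : QueryMaps N k t} (hQ : Q.Valid) : Measurable fun b => resp Q b := by
  refine measurable_pi_lambda _ fun j => ?_
  induction j using WellFoundedLT.induction with
  | ind j ih =>
    have hh : Measurable fun (b : Fin N → ℝ) (i : Fin (j : ℕ)) =>
        resp Q b ⟨i.1, i.isLt.trans j.isLt⟩ :=
      measurable_pi_lambda _ fun i => ih _ (Fin.lt_def.2 i.isLt)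
    have hq (i : Fin k) (l : Fin N) : Measurable fun b : Fin N → ℝ =>
        Q j (fun i => resp Q b ⟨i.1, i.isLt.trans j.isLt⟩) i l :=
      (hQ.1 j i l).comp hh
    have hr (b : Fin N → ℝ) : resp Q b j =
        (Q j fun i => resp Q b ⟨i.1, i.isLt.trans j.isLt⟩) *ᵥ b := by rw [resp]
    simp_rw [hr]
    refine measurable_pi_lambda _ fun l => ?_
    simp only [mulVec, dotProduct]
    exact Finset.measurable_sum _ fun x _ => (hq l x).mul (measurable_pi_apply x)

/-- If `v` has coordinates `g j` along the rows queried by the noisy run with noise `g`, then the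
exact run on `a + v` reproduces the noisy run on `a`. -/
lemma resp_add_eq_nresp (Q : QueryMaps N k t) (a v : Fin N → ℝ) (g : Fin t → Fin k → ℝ)
    (hv : ∀ j, noisyQuery Q a j g *ᵥ v = g j) : resp Q (a + v) = nresp Q a g := by
  funext j
  induction j using WellFoundedLT.induction with
  | ind j ih =>
    have hh : (fun i : Fin (j : ℕ) => resp Q (a + v) ⟨i.1, i.isLt.trans j.isLt⟩) =
        fun i : Fin (j : ℕ) => nresp Q a g ⟨i.1, i.isLt.trans j.isLt⟩ :=
      funext fun i => ih _ (Fin.lt_def.2 i.isLt)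
    rw [resp, hh, nresp_eq, ← hv j, ← mulVec_add, noisyQuery]

end QueryMaps

/-- Adaptive orthonormal measurements with fresh Gaussian noise in each round are
distributionally equivalent to exact adaptive measurements of a once-perturbed input. -/
theorem noisy_measurements_eq_perturbed_input (N k t : ℕ)
    (hN : 0 < N) (hk : 0 < k) (ht : 0 < t) (htk : t * k ≤ N)
    (Q : QueryMaps N k t) (hQ : Q.Valid) (a : Fin N → ℝ) :
    Measure.map (fun g : Fin t → Fin k → ℝ => QueryMaps.nresp Q a g)
        (Measure.pi fun _ : Fin t => stdGaussian (Fin k)) =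
      Measure.map (fun g : Fin N → ℝ => QueryMaps.resp Q (a + g))
        (stdGaussian (Fin N)) := by
  have hM := QueryMaps.measurable_noisyQuery hQ a
  have hP (j : Fin t) (z : Fin t → Fin k → ℝ) :
      Q.noisyQuery a j z * (Q.noisyQuery a j z)ᵀ = 1 := hQ.2.1 j _
  have hO (j i : Fin t) (z : Fin t → Fin k → ℝ) (hij : i < j) :
      Q.noisyQuery a j z * (Q.noisyQuery a i z)ᵀ = 0 := hQ.2.2 j i hij _
  have hA := Q.noisyQuery_congr a
  have hresp : Measurable fun v : Fin N → ℝ => QueryMaps.resp Q (a + v) :=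
    (QueryMaps.measurable_resp_s6 hQ).comp (measurable_const_add a)
  have hnresp : Measurable fun g : Fin t → Fin k → ℝ => QueryMaps.nresp Q a g :=
    measurable_pi_lambda _ (QueryMaps.measurable_nresp_apply hQ a)
  rw [← map_recon hM hP hA t, Measure.map_map hresp (measurable_recon hM t)]
  have hcomp : (fun v : Fin N → ℝ => QueryMaps.resp Q (a + v)) ∘
      (fun p : (Fin t → Fin k → ℝ) × (Fin N → ℝ) => recon (Q.noisyQuery a) t p.1 p.2) =
      (fun g : Fin t → Fin k → ℝ => QueryMaps.nresp Q a g) ∘ Prod.fst :=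
    funext fun p => Q.resp_add_eq_nresp a _ _ fun j =>
      mulVec_recon_of_lt hP hO j p.1 t j.isLt p.2
  rw [hcomp, ← Measure.map_map hnresp measurable_fst, Measure.map_fst_prod]
  simp

end
end
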